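/- arXiv:2602.10488 — 2 statements merged into one kernel-verified Lean document; each statement's English description precedes it below -/
import Mathlib

section
/- Let N ≥ 2 and let g be a nonzero integer such that X^N − g has no root in ℚ(ζ_{2N}). Let P_g be the set of rational primes q such that q ∤ 2Ng, q ≡ 1 (mod 2N), and g is not an N-th power in ℤ/qℤ. Let L_g denote the splitting field over ℚ of (X^N − g)(X^{2N} − 1) and set δ_g = 1/φ(2N) − 1/[L_g : ℚ]. Then there exists a constant κ > 0 such that, as X → ∞, #{m ∈ ℕ : 1 ≤ m ≤ X and no q ∈ P_g divides m} is asymptotic to κ·X/(log X)^{δ_g}, i.e., the ratio of the count to X/(log X)^{δ_g} tends to κ. -/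
open Polynomial Filter
open scoped Classical

/-!
Comparing the counts of ideals of bounded norm in the splitting field `L` of
`(X ^ N - g)(X ^ m - 1)` and in `ℚ(ζ_m)` shows that the primes which split completely in either
field, and hence the set `P`, have a logarithmic density, which for `P` is
`δ = 1 / φ(m) - 1 / [L : ℚ]`. Taking Euler products, the Dirichlet series of the `P`-free integers
has a singularity of order `1 - δ` at `1`, and Karamata's Tauberian theorem gives
`∑ 1 / n ~ c (log x) ^ (1 - δ)` over the `P`-free `n ≤ x`.

To remove the weights `1 / n`, restrict Chebyshev's identity `log = Λ * 1` to `P`-free integers. If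
`R x` is the number of `P`-free `n ≤ x` divided by `x / (log x) ^ δ`, this gives `R x + E x → c`,
where `E x` is the contribution of the primes of `P`. By Karamata's theorem applied to `Λ` on `P`,
`E x` is asymptotically an average of the values `R (x / d)` with total mass `δ / (1 - δ)`. As
`φ(m) ≥ 2`, we have `δ < 1 / 2`, so the mass is less than `1`, and iterating the resulting
contraction forces `R x → c (1 - δ)`.
-/

open Topology

section PowerSeries

lemma summable_natCast_add_pow_mul_half_pow (n c : ℕ) :
    Summable fun e : ℕ => ((e : ℝ) + c) ^ n * (1 / 2 : ℝ) ^ e := by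
  have h : Summable fun e : ℕ => (e : ℝ) ^ n * (1 / 2 : ℝ) ^ e :=
    summable_pow_mul_geometric_of_norm_lt_one n (by norm_num)
  refine (((summable_nat_add_iff c).2 h).mul_left (2 ^ c)).congr fun e => ?_
  rw [Nat.cast_add, pow_add, one_div, inv_pow, inv_pow]
  field_simp

lemma abs_log_one_add_add_sub_le {u r : ℝ} (hu : 0 ≤ u) (hr : 0 ≤ r) :
    |Real.log (1 + u + r) - u| ≤ u ^ 2 + r := by
  have hpos : 0 < 1 + u + r := by linarith
  have hupper : Real.log (1 + u + r) ≤ u + r := by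
    linarith [Real.log_le_sub_one_of_pos hpos]
  have hlower : u - u ^ 2 ≤ Real.log (1 + u + r) := by
    have hinv : (1 + u + r)⁻¹ ≤ 1 - u + u ^ 2 := by
      rw [inv_le_iff_one_le_mul₀ hpos]
      nlinarith [pow_nonneg hu 3, mul_nonneg hr (sq_nonneg (u - 1)), mul_nonneg hr hu]
    linarith [Real.one_sub_inv_le_log_of_pos hpos]
  rw [abs_le]
  constructor <;> nlinarith

variable {b : ℕ → ℝ} {n : ℕ} {x : ℝ}

lemma mul_pow_le_of_le_half (hb : ∀ e, b e ≤ ((e : ℝ) + 1) ^ n) (hx : 0 ≤ x) (hx' : x ≤ 1 / 2)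
    (e : ℕ) : b e * x ^ e ≤ ((e : ℝ) + 1) ^ n * (1 / 2) ^ e :=
  mul_le_mul (hb e) (pow_le_pow_left₀ hx hx' e) (pow_nonneg hx e) (by positivity)

lemma summable_mul_pow_of_le_half (hb0 : ∀ e, 0 ≤ b e) (hb : ∀ e, b e ≤ ((e : ℝ) + 1) ^ n)
    (hx : 0 ≤ x) (hx' : x ≤ 1 / 2) : Summable fun e => b e * x ^ e :=
  (by simpa using summable_natCast_add_pow_mul_half_pow n 1 :
    Summable fun e : ℕ => ((e : ℝ) + 1) ^ n * (1 / 2 : ℝ) ^ e).of_nonneg_of_le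
    (fun e => mul_nonneg (hb0 e) (pow_nonneg hx e)) (mul_pow_le_of_le_half hb hx hx')

lemma continuousOn_tsum_mul_pow (hb0 : ∀ e, 0 ≤ b e) (hb : ∀ e, b e ≤ ((e : ℝ) + 1) ^ n) :
    ContinuousOn (fun x => ∑' e, b e * x ^ e) (Set.Icc 0 (1 / 2)) := by
  refine continuousOn_tsum (fun e => by fun_prop)
    (by simpa using summable_natCast_add_pow_mul_half_pow n 1) fun e x hx => ?_
  rw [Real.norm_of_nonneg (mul_nonneg (hb0 e) (pow_nonneg hx.1 e))]
  simpa using mul_pow_le_of_le_half hb hx.1 hx.2 e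

lemma one_le_tsum_mul_pow (hb0 : ∀ e, 0 ≤ b e) (hb : ∀ e, b e ≤ ((e : ℝ) + 1) ^ n)
    (hb1 : b 0 = 1) (hx : 0 ≤ x) (hx' : x ≤ 1 / 2) : 1 ≤ ∑' e, b e * x ^ e := by
  simpa [hb1] using (summable_mul_pow_of_le_half hb0 hb hx hx').le_tsum 0
    fun e _ => mul_nonneg (hb0 e) (pow_nonneg hx e)

lemma tsum_mul_pow_add_two_le (hb0 : ∀ e, 0 ≤ b e) (hb : ∀ e, b e ≤ ((e : ℝ) + 1) ^ n)
    (hx : 0 ≤ x) (hx' : x ≤ 1 / 2) :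
    ∑' e, b (e + 2) * x ^ (e + 2) ≤ (∑' e : ℕ, ((e : ℝ) + 3) ^ n * (1 / 2) ^ e) * x ^ 2 := by
  have hmajorant : Summable fun e : ℕ => ((e : ℝ) + 3) ^ n * (1 / 2 : ℝ) ^ e := by
    simpa using summable_natCast_add_pow_mul_half_pow n 3
  rw [← tsum_mul_right]
  refine ((summable_nat_add_iff 2).2 (summable_mul_pow_of_le_half hb0 hb hx hx')).tsum_le_tsum
    (fun e => ?_) (hmajorant.mul_right _)
  have hcoeff : b (e + 2) ≤ ((e : ℝ) + 3) ^ n := by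
    refine (hb (e + 2)).trans_eq ?_
    push_cast
    ring
  rw [pow_add x, ← mul_assoc]
  gcongr

lemma exists_abs_log_tsum_mul_pow_sub_le (n : ℕ) : ∃ K : ℝ, 0 ≤ K ∧ ∀ (b : ℕ → ℝ) (x : ℝ),
    (∀ e, 0 ≤ b e) → (∀ e, b e ≤ ((e : ℝ) + 1) ^ n) → b 0 = 1 → 0 ≤ x → x ≤ 1 / 2 →
      |Real.log (∑' e, b e * x ^ e) - b 1 * x| ≤ K * x ^ 2 := by
  refine ⟨4 ^ n + ∑' e : ℕ, ((e : ℝ) + 3) ^ n * (1 / 2) ^ e,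
    add_nonneg (by positivity) (tsum_nonneg fun e => by positivity),
    fun b x hb0 hb hb1 hx hx' => ?_⟩
  have hsplit : ∑' e, b e * x ^ e = 1 + b 1 * x + ∑' e, b (e + 2) * x ^ (e + 2) := by
    rw [← (summable_mul_pow_of_le_half hb0 hb hx hx').sum_add_tsum_nat_add 2]
    simp [Finset.sum_range_succ, hb1]
  have hlinear : (b 1 * x) ^ 2 ≤ 4 ^ n * x ^ 2 := by
    have h : b 1 ≤ 2 ^ n := by simpa [one_add_one_eq_two] using hb 1
    rw [mul_pow, show (4 : ℝ) ^ n = (2 ^ n) ^ 2 by rw [← pow_mul, mul_comm, pow_mul]; norm_num]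
    have := hb0 1
    gcongr
  rw [hsplit, add_mul]
  exact (abs_log_one_add_add_sub_le (mul_nonneg (hb0 1) hx)
    (tsum_nonneg fun e => mul_nonneg (hb0 _) (pow_nonneg hx _))).trans
    (add_le_add hlinear (tsum_mul_pow_add_two_le hb0 hb hx hx'))

end PowerSeries

section EulerProduct

/-- The Dirichlet series of `w` at the real point `1 + σ`. -/
noncomputable def dirichletSum (w : ℕ → ℝ) (σ : ℝ) : ℝ :=
  ∑' m : ℕ, w m * (m : ℝ) ^ (-(1 + σ))

/-- The prime part `∑ₚ w(p) p⁻ˢ` of the Dirichlet series of `w`, at `s = 1 + σ`. -/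
noncomputable def primeSum (w : ℕ → ℝ) (σ : ℝ) : ℝ :=
  ∑' p : Nat.Primes, w p * (p : ℝ) ^ (-(1 + σ))

lemma primeSum_congr {v w : ℕ → ℝ} (h : ∀ p : Nat.Primes, v p = w p) : primeSum v = primeSum w :=
  funext fun σ => tsum_congr fun p => by rw [h p]

/-- The factor at `p` of the Euler product of `a` at the real point `1 + σ`. -/
noncomputable def eulerFactor (a : ℕ → ℝ) (p : ℕ) (σ : ℝ) : ℝ :=
  ∑' e : ℕ, a (p ^ e) * ((p : ℝ) ^ (-(1 + σ))) ^ e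

/-- Nonnegative multiplicative functions of polynomial growth, with exponent `n`, along the powers
of each prime. Their Dirichlet series converge on `s > 1`, and their behaviour at `s = 1` is
determined by the values at primes. -/
structure IsModerate (a : ArithmeticFunction ℝ) (n : ℕ) : Prop where
  isMultiplicative : a.IsMultiplicative
  nonneg (m : ℕ) : 0 ≤ a m
  apply_prime_pow_le {p : ℕ} (hp : p.Prime) (k : ℕ) : a (p ^ k) ≤ ((k : ℝ) + 1) ^ n

lemma natCast_pow_rpow (p e : ℕ) (s : ℝ) : ((p ^ e : ℕ) : ℝ) ^ s = ((p : ℝ) ^ s) ^ e := by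
  rw [Nat.cast_pow, ← Real.rpow_natCast, ← Real.rpow_mul p.cast_nonneg, mul_comm,
    Real.rpow_mul p.cast_nonneg, Real.rpow_natCast]

lemma prime_rpow_neg_le_inv {p : ℕ} (hp : p.Prime) {σ : ℝ} (hσ : 0 ≤ σ) :
    (p : ℝ) ^ (-(1 + σ)) ≤ (p : ℝ)⁻¹ := by
  rw [← Real.rpow_neg_one]
  exact Real.rpow_le_rpow_of_exponent_le (by exact_mod_cast hp.one_lt.le) (by linarith)

lemma prime_rpow_neg_le_half {p : ℕ} (hp : p.Prime) {σ : ℝ} (hσ : 0 ≤ σ) :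
    (p : ℝ) ^ (-(1 + σ)) ≤ 1 / 2 := by
  refine (prime_rpow_neg_le_inv hp hσ).trans ?_
  rw [one_div]
  exact inv_anti₀ two_pos (by exact_mod_cast hp.two_le)

lemma continuous_prime_rpow_neg {p : ℕ} (hp : p.Prime) :
    Continuous fun σ : ℝ => (p : ℝ) ^ (-(1 + σ)) :=
  continuous_const.rpow (by fun_prop) fun _ => Or.inl (Nat.cast_ne_zero.2 hp.ne_zero)

lemma summable_primes_mul_rpow {w : ℕ → ℝ} {B : ℝ} (hw : ∀ p : Nat.Primes, |w p| ≤ B) {σ : ℝ}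
    (hσ : 0 < σ) : Summable fun p : Nat.Primes => w p * (p : ℝ) ^ (-(1 + σ)) := by
  have h : Summable fun p : Nat.Primes => B * (p : ℝ) ^ (-(1 + σ)) :=
    ((Real.summable_nat_rpow.2 (by linarith : -(1 + σ) < -1)).subtype _).mul_left B
  refine h.of_norm_bounded fun p => ?_
  rw [norm_mul, Real.norm_eq_abs, Real.norm_of_nonneg (by positivity)]
  exact mul_le_mul_of_nonneg_right (hw p) (by positivity)

lemma summable_of_summable_log_tsum_prime_pow {f : ArithmeticFunction ℝ}
    (hf : f.IsMultiplicative) (h0 : ∀ m, 0 ≤ f m)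
    (hpow : ∀ {p : ℕ}, p.Prime → Summable fun e : ℕ => f (p ^ e))
    (hlog : Summable fun p : Nat.Primes => Real.log (∑' e : ℕ, f ((p : ℕ) ^ e))) :
    Summable f := by
  have hone (p : Nat.Primes) : 1 ≤ ∑' e : ℕ, f ((p : ℕ) ^ e) := by
    simpa [hf.map_one] using (hpow p.2).le_tsum 0 fun e _ => h0 _
  refine summable_of_sum_le (c := Real.exp (∑' p : Nat.Primes, Real.log (∑' e, f ((p : ℕ) ^ e))))
    h0 fun t => ?_
  set s := t.biUnion Nat.primeFactors
  let primes : Finset Nat.Primes := s.subtype Nat.Prime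
  have hsum := (EulerProduct.summable_and_hasSum_factoredNumbers_prod_filter_prime_tsum hf.1 hf.2
    (fun hp => (hpow hp).norm) s).2
  have hmem : ∀ m ∈ t.filter (· ≠ 0), m ∈ Nat.factoredNumbers s := fun m hm => by
    obtain ⟨hmt, hm0⟩ := Finset.mem_filter.1 hm
    exact Nat.mem_factoredNumbers_iff_primeFactors_subset.2
      ⟨hm0, Finset.subset_biUnion_of_mem Nat.primeFactors hmt⟩
  calc ∑ m ∈ t, f m = ∑ m ∈ t.filter (· ≠ 0), f m :=
        (Finset.sum_filter_of_ne fun m _ hm => by rintro rfl; simp at hm).symm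
    _ = ∑ m ∈ (t.filter (· ≠ 0)).subtype (· ∈ Nat.factoredNumbers s), f m :=
        (Finset.sum_subtype_of_mem f hmem).symm
    _ ≤ ∏ p ∈ s with p.Prime, ∑' e, f (p ^ e) := sum_le_hasSum _ (fun m _ => h0 m) hsum
    _ = ∏ p ∈ primes, ∑' e, f ((p : ℕ) ^ e) :=
        (Finset.prod_subtype_eq_prod_filter fun p => ∑' e, f (p ^ e)).symm
    _ = Real.exp (∑ p ∈ primes, Real.log (∑' e, f ((p : ℕ) ^ e))) := by
        rw [Real.exp_sum]
        exact Finset.prod_congr rfl fun p _ => (Real.exp_log (one_pos.trans_le (hone p))).symm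
    _ ≤ Real.exp (∑' p : Nat.Primes, Real.log (∑' e, f ((p : ℕ) ^ e))) :=
        Real.exp_le_exp.2 (hlog.sum_le_tsum _ fun p _ => Real.log_nonneg (hone p))

namespace IsModerate

variable {a : ArithmeticFunction ℝ} {n : ℕ} (ha : IsModerate a n)
include ha

lemma abs_apply_prime_le (p : Nat.Primes) : |a p| ≤ 2 ^ n := by
  simpa [abs_of_nonneg (ha.nonneg p), one_add_one_eq_two] using ha.apply_prime_pow_le p.2 1

lemma summable_apply_prime_pow_mul {p : ℕ} (hp : p.Prime) {σ : ℝ} (hσ : 0 ≤ σ) :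
    Summable fun e : ℕ => a (p ^ e) * ((p : ℝ) ^ (-(1 + σ))) ^ e :=
  summable_mul_pow_of_le_half (fun _ => ha.nonneg _) (ha.apply_prime_pow_le hp) (by positivity)
    (prime_rpow_neg_le_half hp hσ)

lemma one_le_eulerFactor {p : ℕ} (hp : p.Prime) {σ : ℝ} (hσ : 0 ≤ σ) : 1 ≤ eulerFactor a p σ :=
  one_le_tsum_mul_pow (fun _ => ha.nonneg _) (ha.apply_prime_pow_le hp)
    (by simp [ha.isMultiplicative.1]) (by positivity) (prime_rpow_neg_le_half hp hσ)

lemma tendsto_eulerFactor {p : ℕ} (hp : p.Prime) :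
    Tendsto (eulerFactor a p) (𝓝[>] 0) (𝓝 (eulerFactor a p 0)) := by
  have hmaps (σ : ℝ) (hσ : σ ∈ Set.Ici (0 : ℝ)) :
      (p : ℝ) ^ (-(1 + σ)) ∈ Set.Icc (0 : ℝ) (1 / 2) :=
    ⟨by positivity, prime_rpow_neg_le_half hp hσ⟩
  have hcont : ContinuousOn (eulerFactor a p) (Set.Ici 0) :=
    (continuousOn_tsum_mul_pow (fun _ => ha.nonneg _) (ha.apply_prime_pow_le hp)).comp
      (continuous_prime_rpow_neg hp).continuousOn hmaps
  exact (hcont 0 Set.self_mem_Ici).mono_left (nhdsWithin_mono _ Set.Ioi_subset_Ici_self)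

lemma exists_abs_log_eulerFactor_sub_le : ∃ K : ℝ, ∀ p : Nat.Primes, ∀ σ : ℝ, 0 ≤ σ →
    |Real.log (eulerFactor a p σ) - a p * (p : ℝ) ^ (-(1 + σ))| ≤ K * ((p : ℝ) ^ 2)⁻¹ := by
  obtain ⟨K, hK0, hK⟩ := exists_abs_log_tsum_mul_pow_sub_le n
  refine ⟨K, fun p σ hσ => ?_⟩
  have h := hK (fun e => a ((p : ℕ) ^ e)) _ (fun _ => ha.nonneg _) (ha.apply_prime_pow_le p.2)
    (by simp [ha.isMultiplicative.1]) (by positivity) (prime_rpow_neg_le_half p.2 hσ)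
  simp only [pow_one] at h
  refine h.trans (mul_le_mul_of_nonneg_left ?_ hK0)
  rw [← inv_pow]
  exact pow_le_pow_left₀ (by positivity) (prime_rpow_neg_le_inv p.2 hσ) 2

lemma summable_log_eulerFactor {σ : ℝ} (hσ : 0 < σ) :
    Summable fun p : Nat.Primes => Real.log (eulerFactor a p σ) := by
  obtain ⟨K, hK⟩ := ha.exists_abs_log_eulerFactor_sub_le
  have hsq : Summable fun p : Nat.Primes => K * ((p : ℝ) ^ 2)⁻¹ :=
    ((Real.summable_nat_pow_inv.2 one_lt_two).subtype _).mul_left K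
  have hdiff : Summable fun p : Nat.Primes =>
      Real.log (eulerFactor a p σ) - a p * (p : ℝ) ^ (-(1 + σ)) :=
    hsq.of_norm_bounded fun p => hK p σ hσ.le
  simpa using hdiff.add (summable_primes_mul_rpow ha.abs_apply_prime_le hσ)

lemma hasProd_eulerFactor_and_summable {σ : ℝ} (hσ : 0 < σ) :
    HasProd (fun p : Nat.Primes => eulerFactor a p σ) (dirichletSum a σ) ∧
      Summable fun m : ℕ => a m * (m : ℝ) ^ (-(1 + σ)) := by
  let f : ArithmeticFunction ℝ := ⟨fun m => a m * (m : ℝ) ^ (-(1 + σ)), by simp⟩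
  have hf : f.IsMultiplicative := by
    refine ⟨by simp [f, ha.isMultiplicative.1], fun {k l} hkl => ?_⟩
    simp only [f, ArithmeticFunction.coe_mk, ha.isMultiplicative.2 hkl, Nat.cast_mul]
    rw [Real.mul_rpow (by positivity) (by positivity)]
    ring
  have hfpow (p e : ℕ) : f (p ^ e) = a (p ^ e) * ((p : ℝ) ^ (-(1 + σ))) ^ e := by
    simp only [f, ArithmeticFunction.coe_mk, natCast_pow_rpow]
  have hsummable : Summable f := by
    refine summable_of_summable_log_tsum_prime_pow hf
      (fun m => mul_nonneg (ha.nonneg m) (by positivity)) (fun hp => ?_) ?_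
    · simpa only [hfpow] using ha.summable_apply_prime_pow_mul hp hσ.le
    · simpa only [hfpow] using! ha.summable_log_eulerFactor hσ
  refine ⟨?_, hsummable⟩
  simpa only [hfpow] using! hf.eulerProduct_hasProd hsummable.norm

lemma summable_mul_rpow {σ : ℝ} (hσ : 0 < σ) : Summable fun m : ℕ => a m * (m : ℝ) ^ (-(1 + σ)) :=
  (ha.hasProd_eulerFactor_and_summable hσ).2

lemma dirichletSum_pos {σ : ℝ} (hσ : 0 < σ) : 0 < dirichletSum a σ :=
  (ha.summable_mul_rpow hσ).tsum_pos (fun m => mul_nonneg (ha.nonneg m) (by positivity)) 1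
    (by simp [ha.isMultiplicative.1])

lemma log_dirichletSum {σ : ℝ} (hσ : 0 < σ) :
    Real.log (dirichletSum a σ) = ∑' p : Nat.Primes, Real.log (eulerFactor a p σ) := by
  have h : HasSum (fun p : Nat.Primes => Real.log (eulerFactor a p σ))
      (Real.log (dirichletSum a σ)) :=
    ((Real.continuousAt_log (ha.dirichletSum_pos hσ).ne').tendsto.comp
      (ha.hasProd_eulerFactor_and_summable hσ).1).congr fun s =>
        Real.log_prod fun p _ => (one_pos.trans_le (ha.one_le_eulerFactor p.2 hσ.le)).ne'
  exact h.tsum_eq.symm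

theorem exists_tendsto_log_dirichletSum_sub_primeSum :
    ∃ C : ℝ, Tendsto (fun σ => Real.log (dirichletSum a σ) - primeSum a σ) (𝓝[>] 0) (𝓝 C) := by
  obtain ⟨K, hK⟩ := ha.exists_abs_log_eulerFactor_sub_le
  have hlim : Tendsto (fun σ : ℝ => ∑' p : Nat.Primes,
      (Real.log (eulerFactor a p σ) - a p * (p : ℝ) ^ (-(1 + σ)))) (𝓝[>] 0)
      (𝓝 (∑' p : Nat.Primes,
        (Real.log (eulerFactor a p 0) - a p * (p : ℝ) ^ (-(1 + (0 : ℝ)))))) := by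
    refine tendsto_tsum_of_dominated_convergence
      (((Real.summable_nat_pow_inv.2 one_lt_two).subtype _).mul_left K) (fun p => ?_) ?_
    · have hfactor := (ha.tendsto_eulerFactor p.2).log
        (one_pos.trans_le (ha.one_le_eulerFactor p.2 le_rfl)).ne'
      exact hfactor.sub ((((continuous_prime_rpow_neg p.2).tendsto 0).mono_left
        nhdsWithin_le_nhds).const_mul _)
    · filter_upwards [self_mem_nhdsWithin] with σ hσ p
      exact hK p σ (Set.mem_Ioi.1 hσ).le
  refine ⟨_, hlim.congr' ?_⟩
  filter_upwards [self_mem_nhdsWithin] with σ hσ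
  rw [ha.log_dirichletSum hσ, primeSum, (ha.summable_log_eulerFactor hσ).tsum_sub
    (summable_primes_mul_rpow ha.abs_apply_prime_le hσ)]

end IsModerate

end EulerProduct

section LogDensity

/-- Primes weighted by `w` have logarithmic density `α`: `∑ₚ w(p) p⁻ˢ = -α log (s - 1) + C + o(1)`
as `s → 1⁺`. For an indicator function this refines the Dirichlet density of a set of primes. -/
def HasLogDensity (w : ℕ → ℝ) (α : ℝ) : Prop :=
  ∃ C : ℝ, Tendsto (fun σ : ℝ => primeSum w σ + α * Real.log σ) (𝓝[>] 0) (𝓝 C)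

namespace HasLogDensity

variable {v w : ℕ → ℝ} {α β A B : ℝ}

lemma const_mul (h : HasLogDensity w α) (c : ℝ) :
    HasLogDensity (fun p => c * w p) (c * α) := by
  obtain ⟨C, hC⟩ := h
  refine ⟨c * C, (hC.const_mul c).congr fun σ => ?_⟩
  simp only [primeSum, mul_assoc]
  rw [tsum_mul_left]
  ring

lemma sub (hv : HasLogDensity v α) (hw : HasLogDensity w β) (hvA : ∀ p : Nat.Primes, |v p| ≤ A)
    (hwB : ∀ p : Nat.Primes, |w p| ≤ B) : HasLogDensity (fun p => v p - w p) (α - β) := by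
  obtain ⟨C, hC⟩ := hv
  obtain ⟨D, hD⟩ := hw
  refine ⟨C - D, (hC.sub hD).congr' ?_⟩
  filter_upwards [self_mem_nhdsWithin] with σ hσ
  simp only [primeSum, sub_mul]
  rw [(summable_primes_mul_rpow hvA hσ).tsum_sub (summable_primes_mul_rpow hwB hσ)]
  ring

lemma congr (hv : HasLogDensity v α) (hvw : ∀ p : Nat.Primes, v p = w p) : HasLogDensity w α := by
  rwa [HasLogDensity, ← primeSum_congr hvw]

lemma of_finite {S : Set Nat.Primes} (hS : S.Finite) (hw : ∀ p : Nat.Primes, p ∉ S → w p = 0) :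
    HasLogDensity w 0 := by
  have h : Tendsto (fun σ : ℝ => ∑ p ∈ hS.toFinset, w p * (p : ℝ) ^ (-(1 + σ)))
      (𝓝[>] 0) (𝓝 (∑ p ∈ hS.toFinset, w p * (p : ℝ) ^ (-(1 + (0 : ℝ))))) :=
    tendsto_finsetSum _ fun p _ => ((((continuous_prime_rpow_neg p.2).tendsto 0).mono_left
      nhdsWithin_le_nhds).const_mul _)
  refine ⟨_, h.congr fun σ => ?_⟩
  rw [zero_mul, add_zero, primeSum]
  refine (tsum_eq_sum fun p hp => ?_).symm
  rw [hw p (by simpa using hp), zero_mul]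

lemma congr_cofinite (hv : HasLogDensity v α) (hvA : ∀ p : Nat.Primes, |v p| ≤ A)
    (hwB : ∀ p : Nat.Primes, |w p| ≤ B) {S : Set Nat.Primes} (hS : S.Finite)
    (hvw : ∀ p : Nat.Primes, p ∉ S → v p = w p) : HasLogDensity w α := by
  have hdiff : HasLogDensity (fun p => v p - w p) 0 :=
    of_finite hS fun p hp => sub_eq_zero.2 (hvw p hp)
  simpa using hv.sub hdiff hvA fun p => (abs_sub _ _).trans (add_le_add (hvA p) (hwB p))

end HasLogDensity

variable {a : ArithmeticFunction ℝ} {n : ℕ}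

theorem IsModerate.hasLogDensity_one_of_tendsto (ha : IsModerate a n) {ρ : ℝ} (hρ : 0 < ρ)
    (hlim : Tendsto (fun σ : ℝ => σ * dirichletSum a σ) (𝓝[>] 0) (𝓝 ρ)) : HasLogDensity a 1 := by
  obtain ⟨C, hC⟩ := ha.exists_tendsto_log_dirichletSum_sub_primeSum
  refine ⟨Real.log ρ - C, ((hlim.log hρ.ne').sub hC).congr' ?_⟩
  filter_upwards [self_mem_nhdsWithin] with σ hσ
  rw [Real.log_mul (ne_of_gt hσ) (ha.dirichletSum_pos hσ).ne']
  ring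

theorem IsModerate.exists_tendsto_rpow_mul_dirichletSum (ha : IsModerate a n) {α : ℝ}
    (hα : HasLogDensity a α) :
    ∃ C : ℝ, 0 < C ∧ Tendsto (fun σ : ℝ => σ ^ α * dirichletSum a σ) (𝓝[>] 0) (𝓝 C) := by
  obtain ⟨C, hC⟩ := ha.exists_tendsto_log_dirichletSum_sub_primeSum
  obtain ⟨D, hD⟩ := hα
  refine ⟨Real.exp (C + D), Real.exp_pos _,
    ((Real.continuous_exp.tendsto _).comp (hC.add hD)).congr' ?_⟩
  filter_upwards [self_mem_nhdsWithin] with σ hσ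
  rw [Function.comp_apply, ← add_assoc, sub_add_cancel, Real.exp_add,
    Real.exp_log (ha.dirichletSum_pos hσ), Real.rpow_def_of_pos hσ, mul_comm α, mul_comm]

lemma tendsto_one_add_nhdsGT : Tendsto (fun σ : ℝ => 1 + σ) (𝓝[>] 0) (𝓝[>] 1) := by
  refine tendsto_nhdsWithin_iff.2 ⟨?_, ?_⟩
  · have h : Tendsto (fun σ : ℝ => 1 + σ) (𝓝 0) (𝓝 (1 + 0)) := tendsto_id.const_add 1
    rw [add_zero] at h
    exact h.mono_left nhdsWithin_le_nhds
  · filter_upwards [self_mem_nhdsWithin] with σ hσ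
    simpa using hσ

open scoped ArithmeticFunction.zeta

lemma isModerate_zeta : IsModerate (ζ : ArithmeticFunction ℝ) 0 where
  isMultiplicative := ArithmeticFunction.isMultiplicative_zeta.natCast
  nonneg m := Nat.cast_nonneg _
  apply_prime_pow_le hp k := by simp [ArithmeticFunction.zeta_apply, hp.ne_zero]

theorem hasLogDensity_one : HasLogDensity 1 1 := by
  refine (isModerate_zeta.hasLogDensity_one_of_tendsto one_pos
    ((tendsto_sub_mul_tsum_nat_rpow.comp tendsto_one_add_nhdsGT).congr' ?_)).congr fun p => ?_
  · filter_upwards [self_mem_nhdsWithin] with σ hσ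
    have hσ' : 1 + σ ≠ 0 := by linarith [Set.mem_Ioi.1 hσ]
    rw [Function.comp_apply, add_sub_cancel_left, dirichletSum]
    congr 1
    refine tsum_congr fun m => ?_
    rcases eq_or_ne m 0 with rfl | hm
    · simp [Real.zero_rpow hσ']
    · simp [ArithmeticFunction.zeta_apply, hm, Real.rpow_neg m.cast_nonneg (1 + σ), -neg_add_rev]
  · simp [ArithmeticFunction.zeta_apply, p.2.ne_zero]

end LogDensity

section IdealCount

open NumberField Ideal UniqueFactorizationMonoid

variable (K : Type*) [Field K] [NumberField K]

/-- The number of ideals of norm `n` in the ring of integers of `K`, as an arithmetic function; its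
Dirichlet series is the Dedekind zeta function. The ideal of norm `0` is not counted. -/
noncomputable def idealCount : ArithmeticFunction ℝ :=
  ⟨fun n => if n = 0 then 0 else Nat.card {I : Ideal (𝓞 K) // absNorm I = n}, if_pos rfl⟩

variable {K} {m n p : ℕ}

lemma idealCount_apply (hn : n ≠ 0) :
    idealCount K n = Nat.card {I : Ideal (𝓞 K) // absNorm I = n} :=
  if_neg hn

lemma idealCount_nonneg (n : ℕ) : 0 ≤ idealCount K n := by
  rcases eq_or_ne n 0 with rfl | hn
  · simp
  · simp [idealCount_apply hn]

lemma idealCount_one : idealCount K 1 = 1 := by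
  have : Unique {I : Ideal (𝓞 K) // absNorm I = 1} :=
    { default := ⟨⊤, by simp⟩
      uniq := fun I => Subtype.ext (absNorm_eq_one_iff.1 I.2) }
  simp [idealCount_apply]

lemma span_natCast_sup_span_natCast {R : Type*} [CommRing R] (h : m.Coprime n) :
    span {(m : R)} ⊔ span {(n : R)} = ⊤ := by
  have hcop : IsCoprime (m : R) (n : R) := by
    simpa using (Nat.isCoprime_iff_coprime.2 h).map (Int.castRingHom R)
  exact isCoprime_iff_sup_eq.1 ((isCoprime_span_singleton_iff _ _).2 hcop)

lemma isCoprime_of_coprime_absNorm {I J : Ideal (𝓞 K)}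
    (h : (absNorm I).Coprime (absNorm J)) : IsCoprime I J := by
  rw [isCoprime_iff_sup_eq, eq_top_iff, ← span_natCast_sup_span_natCast h]
  exact sup_le_sup (span_singleton_absNorm_le I) (span_singleton_absNorm_le J)

lemma sup_span_mul_sup_span {R : Type*} [CommRing R] {I : Ideal R} (h : m.Coprime n)
    (hI : ((m * n : ℕ) : R) ∈ I) : (I ⊔ span {(m : R)}) * (I ⊔ span {(n : R)}) = I := by
  have hle : span {(m : R)} * span {(n : R)} ≤ I := by
    rwa [span_singleton_mul_span_singleton, ← Nat.cast_mul, span_singleton_le_iff_mem]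
  have hexpand : (I + span {(m : R)}) * (I + span {(n : R)}) =
      I * (I + (span {(m : R)} + span {(n : R)})) + span {(m : R)} * span {(n : R)} := by ring
  simp only [Ideal.add_eq_sup] at hexpand
  rw [hexpand, span_natCast_sup_span_natCast h, sup_top_eq, mul_top, sup_eq_left.2 hle]

lemma absNorm_sup_span_dvd {I : Ideal (𝓞 K)} (h : m.Coprime n) (hI : absNorm I = m * n) :
    absNorm (I ⊔ span {(m : 𝓞 K)}) ∣ m := by
  have hpow : absNorm (I ⊔ span {(m : 𝓞 K)}) ∣ m ^ Module.finrank ℤ (𝓞 K) := by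
    rw [← absNorm_span_natCast]
    exact absNorm_dvd_absNorm_of_le le_sup_right
  refine ((h.pow_left _).coprime_dvd_left hpow).dvd_of_dvd_mul_right ?_
  rw [← hI]
  exact absNorm_dvd_absNorm_of_le le_sup_left

lemma exists_mul_eq_of_absNorm_eq_mul {I : Ideal (𝓞 K)} (h : m.Coprime n) (hm : m ≠ 0)
    (hn : n ≠ 0) (hI : absNorm I = m * n) :
    ∃ J J' : Ideal (𝓞 K), absNorm J = m ∧ absNorm J' = n ∧ J * J' = I := by
  have hprod : (I ⊔ span {(m : 𝓞 K)}) * (I ⊔ span {(n : 𝓞 K)}) = I :=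
    sup_span_mul_sup_span h (hI ▸ absNorm_mem I)
  have hle := Nat.le_of_dvd (Nat.pos_of_ne_zero hm) (absNorm_sup_span_dvd h hI)
  have hle' := Nat.le_of_dvd (Nat.pos_of_ne_zero hn)
    (absNorm_sup_span_dvd h.symm (hI.trans (mul_comm m n)))
  have hmul : absNorm (I ⊔ span {(m : 𝓞 K)}) * absNorm (I ⊔ span {(n : 𝓞 K)}) = m * n := by
    rw [← map_mul, hprod, hI]
  have hJ : absNorm (I ⊔ span {(m : 𝓞 K)}) = m := by
    refine hle.antisymm (Nat.le_of_mul_le_mul_right ?_ (Nat.pos_of_ne_zero hn))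
    exact hmul.symm.le.trans (Nat.mul_le_mul_left _ hle')
  rw [hJ] at hmul
  exact ⟨_, _, hJ, Nat.eq_of_mul_eq_mul_left (Nat.pos_of_ne_zero hm) hmul, hprod⟩

lemma eq_of_mul_eq_mul_of_isCoprime {R : Type*} [CommRing R] [IsDedekindDomain R]
    {I I' J J' : Ideal R} (h : I * J = I' * J') (hIJ' : IsCoprime I J') (hI'J : IsCoprime I' J) :
    I = I' :=
  dvd_antisymm (hIJ'.dvd_of_dvd_mul_right (h ▸ dvd_mul_right I J))
    (hI'J.dvd_of_dvd_mul_right (h ▸ dvd_mul_right I' J'))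

lemma card_absNorm_eq_mul (h : m.Coprime n) (hm : m ≠ 0) (hn : n ≠ 0) :
    Nat.card {I : Ideal (𝓞 K) // absNorm I = m * n} =
      Nat.card {I : Ideal (𝓞 K) // absNorm I = m} *
        Nat.card {I : Ideal (𝓞 K) // absNorm I = n} := by
  rw [← Nat.card_prod]
  refine (Nat.card_congr (Equiv.ofBijective
    (fun q => ⟨q.1.1 * q.2.1, by rw [map_mul, q.1.2, q.2.2]⟩) ⟨?_, ?_⟩)).symm
  · rintro ⟨⟨I, hI⟩, ⟨J, hJ⟩⟩ ⟨⟨I', hI'⟩, ⟨J', hJ'⟩⟩ hq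
    have hmul : I * J = I' * J' := congrArg Subtype.val hq
    have hIJ' : IsCoprime I J' := isCoprime_of_coprime_absNorm (by rwa [hI, hJ'])
    have hI'J : IsCoprime I' J := isCoprime_of_coprime_absNorm (by rwa [hI', hJ])
    obtain rfl : I = I' := eq_of_mul_eq_mul_of_isCoprime hmul hIJ' hI'J
    obtain rfl : J = J' := eq_of_mul_eq_mul_of_isCoprime
      (by rw [mul_comm J, hmul, mul_comm]) hI'J.symm hIJ'.symm
    rfl
  · rintro ⟨I, hI⟩
    obtain ⟨J, J', hJ, hJ', rfl⟩ := exists_mul_eq_of_absNorm_eq_mul h hm hn hI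
    exact ⟨⟨⟨J, hJ⟩, ⟨J', hJ'⟩⟩, rfl⟩

lemma isMultiplicative_idealCount : (idealCount K).IsMultiplicative :=
  ArithmeticFunction.IsMultiplicative.iff_ne_zero.2 ⟨idealCount_one, fun {m n} hm hn h => by
    rw [idealCount_apply (mul_ne_zero hm hn), idealCount_apply hm, idealCount_apply hn,
      card_absNorm_eq_mul h hm hn, Nat.cast_mul]⟩

lemma liesOver_span_of_natCast_mem (hp : p.Prime) {R : Type*} [CommRing R] {Q : Ideal R}
    [Q.IsPrime] (hpQ : (p : R) ∈ Q) : Q.LiesOver (span {(p : ℤ)}) :=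
  (liesOver_span_iff IsPrime.ne_top' (Nat.prime_iff_prime_int.1 hp)).2 (by simpa using hpQ)

lemma ne_bot_of_absNorm_eq_prime_pow (hp : p.Prime) {k : ℕ} {I : Ideal (𝓞 K)}
    (hI : absNorm I = p ^ k) : I ≠ ⊥ :=
  absNorm_eq_zero_iff.not.1 (hI ▸ pow_ne_zero _ hp.ne_zero)

lemma mem_primesOver_of_absNorm_eq_prime_pow {k : ℕ} (hp : p.Prime) {I Q : Ideal (𝓞 K)}
    (hI : absNorm I = p ^ k) (hQI : Q ∣ I) (hQ : Prime Q) :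
    Q ∈ (span {(p : ℤ)}).primesOver (𝓞 K) := by
  have hQp : Q.IsPrime := isPrime_of_prime hQ
  refine ⟨hQp, liesOver_span_of_natCast_mem hp (hQp.mem_of_pow_mem k ?_)⟩
  simpa [hI] using dvd_iff_le.1 hQI (absNorm_mem I)

lemma count_normalizedFactors_le (hp : p.Prime) {k : ℕ} {I : Ideal (𝓞 K)}
    (hI : absNorm I = p ^ k) (Q : Ideal (𝓞 K)) : (normalizedFactors I).count Q ≤ k := by
  by_cases hQ : Q ∈ normalizedFactors I
  · have hprime := prime_of_normalized_factor Q hQ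
    obtain ⟨j, -, hj⟩ := (Nat.dvd_prime_pow hp).1
      (hI ▸ map_dvd absNorm (dvd_of_mem_normalizedFactors hQ))
    have hj0 : j ≠ 0 := by
      rintro rfl
      exact hprime.not_isUnit (isUnit_iff.2 (absNorm_eq_one_iff.1 (by simpa using hj)))
    have hdvd : Q ^ (normalizedFactors I).count Q ∣ I := by
      have h := Multiset.prod_dvd_prod_of_le
        (Multiset.le_count_iff_replicate_le.1 (le_refl ((normalizedFactors I).count Q)))
      rwa [Ideal.prod_normalizedFactors_eq_self (ne_bot_of_absNorm_eq_prime_pow hp hI),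
        Multiset.prod_replicate] at h
    have hnorm := map_dvd absNorm hdvd
    rw [map_pow, hI, hj, ← pow_mul, Nat.pow_dvd_pow_iff_le_right hp.one_lt] at hnorm
    exact (Nat.le_mul_of_pos_left _ (Nat.pos_of_ne_zero hj0)).trans hnorm
  · simp [Multiset.count_eq_zero_of_notMem hQ]

lemma card_primesOver_le_finrank {R S : Type*} [CommRing R] [IsDomain R] [CommRing S] [Algebra R S]
    [Module.Finite R S] [Module.Flat R S] (P : Ideal R) [P.IsPrime] [Finite (P.primesOver S)] :
    Nat.card (P.primesOver S) ≤ Module.finrank R S := by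
  have := Fintype.ofFinite (P.primesOver S)
  rw [← sum_ramification_inertia_eq_finrank P S, Nat.card_eq_fintype_card, ← Finset.card_univ,
    Finset.card_eq_sum_ones]
  exact Finset.sum_le_sum fun Q _ => Nat.mul_pos (ramificationIdx_pos Q.1 R) (inertiaDeg_pos Q.1 R)

lemma isPrime_span_natCast (hp : p.Prime) : (span {(p : ℤ)}).IsPrime :=
  (Nat.prime_iff_prime_int.1 hp).isMaximal_span_singleton.isPrime

lemma card_absNorm_eq_prime_pow_le (hp : p.Prime) (k : ℕ) :
    Nat.card {I : Ideal (𝓞 K) // absNorm I = p ^ k} ≤ (k + 1) ^ Module.finrank ℚ K := by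
  have := isPrime_span_natCast hp
  let S := (span {(p : ℤ)}).primesOver (𝓞 K)
  have : Finite S := Algebra.QuasiFinite.finite_primesOver _
  let exponents (I : {I : Ideal (𝓞 K) // absNorm I = p ^ k}) (Q : S) : Fin (k + 1) :=
    ⟨(normalizedFactors I.1).count Q.1, Nat.lt_succ_of_le (count_normalizedFactors_le hp I.2 Q)⟩
  have hinj : Function.Injective exponents := by
    rintro ⟨I, hI⟩ ⟨J, hJ⟩ hIJ
    have hzero {I' Q : Ideal (𝓞 K)} (hI' : absNorm I' = p ^ k) (hQ : Q ∉ S) :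
        (normalizedFactors I').count Q = 0 :=
      Multiset.count_eq_zero_of_notMem fun h => hQ <|
        mem_primesOver_of_absNorm_eq_prime_pow hp hI' (dvd_of_mem_normalizedFactors h)
          (prime_of_normalized_factor Q h)
    have hfactors : normalizedFactors I = normalizedFactors J := by
      ext Q
      by_cases hQ : Q ∈ S
      · exact congrArg Fin.val (congrFun hIJ ⟨Q, hQ⟩)
      · rw [hzero hI hQ, hzero hJ hQ]
    have hprod {I' : Ideal (𝓞 K)} (hI' : absNorm I' = p ^ k) : (normalizedFactors I').prod = I' :=
      Ideal.prod_normalizedFactors_eq_self (ne_bot_of_absNorm_eq_prime_pow hp hI')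
    exact Subtype.ext ((hprod hI).symm.trans (hfactors ▸ hprod hJ))
  calc Nat.card {I : Ideal (𝓞 K) // absNorm I = p ^ k} ≤ Nat.card (S → Fin (k + 1)) :=
        Nat.card_le_card_of_injective exponents hinj
    _ = (k + 1) ^ Nat.card S := by rw [Nat.card_fun, Nat.card_fin]
    _ ≤ (k + 1) ^ Module.finrank ℚ K := by
        rw [← RingOfIntegers.rank]
        exact Nat.pow_le_pow_right k.succ_pos (card_primesOver_le_finrank _)

variable (K)

theorem isModerate_idealCount : IsModerate (idealCount K) (Module.finrank ℚ K) where
  isMultiplicative := isMultiplicative_idealCount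
  nonneg := idealCount_nonneg
  apply_prime_pow_le hp k := by
    rw [idealCount_apply (pow_ne_zero _ hp.ne_zero)]
    exact_mod_cast card_absNorm_eq_prime_pow_le hp k

lemma dedekindZeta_one_add (σ : ℝ) :
    dedekindZeta K ((1 + σ : ℝ) : ℂ) = (dirichletSum (idealCount K) σ : ℂ) := by
  rw [dedekindZeta, LSeries, dirichletSum, Complex.ofReal_tsum]
  refine tsum_congr fun n => ?_
  rcases eq_or_ne n 0 with rfl | hn
  · simp
  · rw [LSeries.term_of_ne_zero hn, idealCount_apply hn, Real.rpow_neg n.cast_nonneg,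
      div_eq_mul_inv]
    push_cast [Complex.ofReal_cpow n.cast_nonneg]
    rfl

theorem hasLogDensity_idealCount : HasLogDensity (idealCount K) 1 := by
  refine (isModerate_idealCount K).hasLogDensity_one_of_tendsto (dedekindZeta_residue_pos K) ?_
  rw [← Filter.tendsto_ofReal_iff]
  refine ((tendsto_sub_one_mul_dedekindZeta_nhdsGT K).comp tendsto_one_add_nhdsGT).congr fun σ => ?_
  rw [Function.comp_apply, dedekindZeta_one_add]
  push_cast
  ring

end IdealCount

section Splitting

open NumberField Ideal
open scoped Pointwise

variable {m N p : ℕ} {g : ℤ}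

lemma injOn_setOf_pow_eq {R S : Type*} [CommRing R] [IsDomain R] [CommRing S] [IsDomain S]
    {f : R →+* S} {ζ a : R} {n : ℕ} (hn : 0 < n) (hζ : IsPrimitiveRoot ζ n)
    (hfζ : IsPrimitiveRoot (f ζ) n) (ha : f a ≠ 0) : Set.InjOn f {x | x ^ n = a} := by
  intro x hx y hy hxy
  have hfx : f x ≠ 0 := fun h => ha <| by
    rw [← Set.mem_ofPred.1 hx, map_pow, h, zero_pow hn.ne']
  obtain ⟨i, hi, rfl⟩ := Multiset.mem_map.1
    (hζ.nthRoots_eq (Set.mem_ofPred.1 hx) ▸ (mem_nthRoots hn).2 (Set.mem_ofPred.1 hy))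
  rw [map_mul, map_pow, eq_comm, mul_eq_right₀ hfx, hfζ.pow_eq_one_iff_dvd] at hxy
  simp [Nat.eq_zero_of_dvd_of_lt hxy (Multiset.mem_range.1 hi)]

lemma pow_eq_self_of_pow_eq_one {M : Type*} [Monoid M] {x : M} (hp : 0 < p) (hmod : p ≡ 1 [MOD m])
    (hx : x ^ m = 1) : x ^ p = x := by
  obtain ⟨k, hk⟩ := (Nat.modEq_iff_dvd' hp).1 hmod.symm
  rw [← Nat.succ_pred_eq_of_pos hp, pow_succ, Nat.pred_eq_sub_one, hk, pow_mul, hx, one_pow,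
    one_mul]

section CharP

variable {F : Type*} [Field F] [CharP F p] {x : F}

lemma pow_char_eq_self_of_pow_eq_intCast (hp : p.Prime) (hmod : p ≡ 1 [MOD N])
    (hpg : ¬ (p : ℤ) ∣ g) (hroot : ∃ y : ZMod p, y ^ N = g) (hx : x ^ N = g) : x ^ p = x := by
  have : Fact p.Prime := ⟨hp⟩
  obtain ⟨y, hy⟩ := hroot
  obtain ⟨k, hk⟩ := (Nat.modEq_iff_dvd' hp.one_le).1 hmod.symm
  have hg : (g : ZMod p) ≠ 0 := mt (ZMod.intCast_zmod_eq_zero_iff_dvd g p).1 hpg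
  have hy0 : y ≠ 0 := by
    rintro rfl
    have hN : N ≠ 0 := fun hN => hp.one_lt.ne' (by simpa [hN, Nat.modEq_zero_iff] using hmod)
    exact hg (by rw [← hy, zero_pow hN])
  have hgk : (g : ZMod p) ^ k = 1 := by
    rw [← hy, ← pow_mul, ← hk, ZMod.pow_card_sub_one_eq_one hy0]
  have hgk' : (g : F) ^ k = 1 := by
    simpa using congrArg (ZMod.castHom (m := p) dvd_rfl F) hgk
  rw [← Nat.succ_pred_eq_of_pos hp.pos, pow_succ, Nat.pred_eq_sub_one, hk, pow_mul, hx, hgk',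
    one_mul]

lemma exists_intCast_eq_of_pow_char_eq_self (hp : p.Prime) (hx : x ^ p = x) :
    ∃ y : ℤ, (y : F) = x := by
  have : Fact p.Prime := ⟨hp⟩
  have h : x ∈ (⊥ : Subfield F) := (Subfield.mem_bot_iff_pow_eq_self F p).2 hx
  rw [← ZMod.fieldRange_castHom_eq_bot p] at h
  obtain ⟨z, rfl⟩ := h
  obtain ⟨y, rfl⟩ := ZMod.intCast_surjective z
  exact ⟨y, by simp⟩

end CharP

lemma smul_intCast_eq {G R : Type*} [Monoid G] [Ring R] [MulSemiringAction G R] (σ : G) (n : ℤ) :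
    σ • (n : R) = n :=
  map_intCast (MulSemiringAction.toRingHom G R σ) n

lemma mk_smul_eq_mk_of_mem_stabilizer {G R : Type*} [Group G] [CommRing R] [MulSemiringAction G R]
    {Q : Ideal R} [Q.IsMaximal] [CharP (R ⧸ Q) p] (hp : p.Prime) {σ : G}
    (hσ : σ ∈ MulAction.stabilizer G Q) {x : R}
    (hx : Ideal.Quotient.mk Q x ^ p = Ideal.Quotient.mk Q x) :
    Ideal.Quotient.mk Q (σ • x) = Ideal.Quotient.mk Q x := by
  let := Ideal.Quotient.field Q
  obtain ⟨y, hy⟩ := exists_intCast_eq_of_pow_char_eq_self hp hx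
  have hyx : (y : R) - x ∈ Q := by rwa [← Ideal.Quotient.eq, map_intCast]
  have hσyx : (y : R) - σ • x ∈ Q := by
    have h : σ • ((y : R) - x) ∈ σ • Q := smul_mem_pointwise_smul_iff.2 hyx
    rwa [MulAction.mem_stabilizer_iff.1 hσ, smul_sub, smul_intCast_eq] at h
  rw [Ideal.Quotient.eq]
  simpa using sub_mem hyx hσyx

variable {L : Type*} [Field L] [NumberField L] {ζ α : 𝓞 L}

lemma modEq_one_and_exists_pow_eq_of_absNorm_eq [NeZero m] (hp : p.Prime) (hpm : ¬ p ∣ m)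
    (hζ : IsPrimitiveRoot ζ m) (hα : α ^ N = g) {I : Ideal (𝓞 L)} (hI : absNorm I = p) :
    p ≡ 1 [MOD m] ∧ ∃ y : ZMod p, y ^ N = g := by
  have : Fact p.Prime := ⟨hp⟩
  have hcard : Nat.card (𝓞 L ⧸ I) = p := by rw [← hI, absNorm_apply, Submodule.cardQuot_apply]
  have : Finite (𝓞 L ⧸ I) := Nat.finite_of_card_ne_zero (hcard ▸ hp.ne_zero)
  have : Fintype (𝓞 L ⧸ I) := Fintype.ofFinite _
  let e := ZMod.ringEquivOfPrime (𝓞 L ⧸ I) hp (by rw [← Nat.card_eq_fintype_card, hcard])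
  have hprim : IsPrimitiveRoot (e.symm (Ideal.Quotient.mk I ζ)) m :=
    (hζ.idealQuotient_mk (hI ▸ hp.ne_one)
      (hI ▸ (Nat.Prime.coprime_iff_not_dvd hp).2 hpm)).map_of_injective (f := e.symm)
        e.symm.injective
  refine ⟨((Nat.modEq_iff_dvd' hp.one_le).2 ?_).symm, e.symm (Ideal.Quotient.mk I α), ?_⟩
  · rw [hprim.eq_orderOf]
    exact ZMod.orderOf_dvd_card_sub_one (hprim.ne_zero (NeZero.ne m))
  · rw [← map_pow, ← map_pow, hα, map_intCast, map_intCast]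

lemma charP_quotient_of_natCast_mem (hp : p.Prime) {R : Type*} [CommRing R] {Q : Ideal R}
    [Q.IsPrime] (hpQ : (p : R) ∈ Q) : CharP (R ⧸ Q) p := by
  have := Ideal.Quotient.nontrivial_iff.2 (IsPrime.ne_top ‹Q.IsPrime›)
  exact (CharP.charP_iff_prime_eq_zero hp).2
    (by rw [← map_natCast (Ideal.Quotient.mk Q)]; exact Ideal.Quotient.eq_zero_iff_mem.2 hpQ)

lemma isPrimitiveRoot_mk_of_natCast_mem [NeZero m] (hp : p.Prime) (hpm : ¬ p ∣ m)
    (hζ : IsPrimitiveRoot ζ m) {Q : Ideal (𝓞 L)} [hQ : Q.IsPrime] (hpQ : (p : 𝓞 L) ∈ Q) :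
    IsPrimitiveRoot (Ideal.Quotient.mk Q ζ) m := by
  have := liesOver_span_of_natCast_mem hp hpQ
  refine hζ.idealQuotient_mk (fun h => hQ.ne_top (absNorm_eq_one_iff.1 h)) ?_
  rw [absNorm_eq_pow_inertiaDeg' Q hp]
  exact ((Nat.Prime.coprime_iff_not_dvd hp).2 hpm).pow_left _

-- The decomposition groups at `p` act trivially on the residue fields, which are prime fields, and
-- reduction is injective on the conjugates of `ζ` and of `α`.
lemma stabilizer_eq_bot_of_exists_pow_eq [NeZero m] (hp : p.Prime) (hNm : N ∣ m)
    (hpm : ¬ p ∣ m) (hpg : ¬ (p : ℤ) ∣ g) (hζ : IsPrimitiveRoot ζ m) (hα : α ^ N = g)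
    (hfix : ∀ σ : L ≃ₐ[ℚ] L, σ • ζ = ζ → σ • α = α → σ = 1)
    (hmod : p ≡ 1 [MOD m]) (hroot : ∃ y : ZMod p, y ^ N = g)
    {Q : Ideal (𝓞 L)} [Q.IsMaximal] (hpQ : (p : 𝓞 L) ∈ Q) :
    MulAction.stabilizer (L ≃ₐ[ℚ] L) Q = ⊥ := by
  have := charP_quotient_of_natCast_mem hp hpQ
  let := Ideal.Quotient.field Q
  have hm := NeZero.pos m
  have hmN : m = m / N * N := (Nat.div_mul_cancel hNm).symm
  have hζQ := isPrimitiveRoot_mk_of_natCast_mem hp hpm hζ hpQ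
  refine eq_bot_iff.2 fun σ hσ => Subgroup.mem_bot.2 (hfix σ ?_ ?_)
  · have hres : Ideal.Quotient.mk Q (σ • ζ) = Ideal.Quotient.mk Q ζ :=
      mk_smul_eq_mk_of_mem_stabilizer hp hσ
        (pow_eq_self_of_pow_eq_one hp.pos hmod hζQ.pow_eq_one)
    have hσζ : (σ • ζ) ^ m = 1 := by rw [← smul_pow', hζ.pow_eq_one, smul_one]
    exact injOn_setOf_pow_eq hm hζ hζQ (by simp) hσζ hζ.pow_eq_one hres
  · have hres : Ideal.Quotient.mk Q (σ • α) = Ideal.Quotient.mk Q α :=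
      mk_smul_eq_mk_of_mem_stabilizer hp hσ (pow_char_eq_self_of_pow_eq_intCast hp
        (hmod.of_dvd hNm) hpg hroot (by rw [← map_pow, hα, map_intCast]))
    have hσα : (σ • α) ^ N = g := by rw [← smul_pow', hα, smul_intCast_eq]
    have hgQ : Ideal.Quotient.mk Q (g : 𝓞 L) ≠ 0 := by
      rwa [map_intCast, Ne, CharP.intCast_eq_zero_iff _ p]
    exact injOn_setOf_pow_eq (Nat.pos_of_dvd_of_pos hNm hm) (hζ.pow hm hmN)
      (by simpa using hζQ.pow hm hmN) hgQ hσα hα hres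

variable [IsGalois ℚ L]

lemma absNorm_eq_of_stabilizer_eq_bot (hp : p.Prime) {Q : Ideal (𝓞 L)}
    (hQ : Q ∈ (span {(p : ℤ)}).primesOver (𝓞 L))
    (hstab : MulAction.stabilizer (L ≃ₐ[ℚ] L) Q = ⊥) : absNorm Q = p := by
  obtain ⟨_, _⟩ := hQ
  have := (Nat.prime_iff_prime_int.1 hp).isMaximal_span_singleton
  have := IsMaximal.of_liesOver_isMaximal Q (span {(p : ℤ)})
  have hcard := card_stabilizer_eq (G := L ≃ₐ[ℚ] L) (span {(p : ℤ)}) Q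
  rw [hstab, Subgroup.card_bot] at hcard
  rw [absNorm_eq_pow_inertiaDeg' Q hp, inertiaDeg'_eq_inertiaDeg,
    ← inertiaDegIn_eq_inertiaDeg (span {(p : ℤ)}) Q (L ≃ₐ[ℚ] L),
    Nat.eq_one_of_mul_eq_one_left hcard.symm, pow_one]

lemma ncard_primesOver_of_stabilizer_eq_bot (hp : p.Prime) {Q : Ideal (𝓞 L)}
    (hQ : Q ∈ (span {(p : ℤ)}).primesOver (𝓞 L))
    (hstab : MulAction.stabilizer (L ≃ₐ[ℚ] L) Q = ⊥) :
    ((span {(p : ℤ)}).primesOver (𝓞 L)).ncard = Module.finrank ℚ L := by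
  obtain ⟨_, _⟩ := hQ
  have := isPrime_span_natCast hp
  have hcard := card_stabilizer_eq (G := L ≃ₐ[ℚ] L) (span {(p : ℤ)}) Q
  rw [hstab, Subgroup.card_bot] at hcard
  rw [← IsGaloisGroup.card_eq_finrank (L ≃ₐ[ℚ] L) ℚ L,
    ← ncard_primesOver_mul_ramificationIdxIn_mul_inertiaDegIn (span {(p : ℤ)}) (𝓞 L) (L ≃ₐ[ℚ] L),
    ← hcard, mul_one]

lemma card_absNorm_eq_prime (hp : p.Prime)
    (hstab : ∀ Q ∈ (span {(p : ℤ)}).primesOver (𝓞 L), MulAction.stabilizer (L ≃ₐ[ℚ] L) Q = ⊥) :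
    Nat.card {I : Ideal (𝓞 L) // absNorm I = p} = Module.finrank ℚ L := by
  have := isPrime_span_natCast hp
  obtain ⟨⟨Q, hQ⟩⟩ : Nonempty ((span {(p : ℤ)}).primesOver (𝓞 L)) := inferInstance
  rw [← ncard_primesOver_of_stabilizer_eq_bot hp hQ (hstab Q hQ), ← Nat.card_coe_set_eq]
  refine Nat.card_congr (Equiv.subtypeEquivRight fun I => ⟨fun hI => ?_, fun hI =>
    absNorm_eq_of_stabilizer_eq_bot hp hI (hstab I hI)⟩)
  have hprime : I.IsPrime := isPrime_of_irreducible_absNorm (hI ▸ hp)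
  exact ⟨hprime, liesOver_span_of_natCast_mem hp (hI ▸ absNorm_mem I)⟩

theorem idealCount_prime_eq [NeZero m] (hp : p.Prime) (hNm : N ∣ m) (hpm : ¬ p ∣ m)
    (hpg : ¬ (p : ℤ) ∣ g) (hζ : IsPrimitiveRoot ζ m) (hα : α ^ N = g)
    (hfix : ∀ σ : L ≃ₐ[ℚ] L, σ • ζ = ζ → σ • α = α → σ = 1) :
    idealCount L p = if p ≡ 1 [MOD m] ∧ ∃ y : ZMod p, y ^ N = g
      then (Module.finrank ℚ L : ℝ) else 0 := by
  rw [idealCount_apply hp.ne_zero]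
  split_ifs with hcond
  · refine congrArg _ (card_absNorm_eq_prime hp fun Q ⟨_, hQ⟩ => ?_)
    have := (Nat.prime_iff_prime_int.1 hp).isMaximal_span_singleton
    have := IsMaximal.of_liesOver_isMaximal Q (span {(p : ℤ)})
    have hpQ : (p : ℤ) ∈ Q.under ℤ := hQ.over ▸ mem_span_singleton_self _
    exact stabilizer_eq_bot_of_exists_pow_eq hp hNm hpm hpg hζ hα hfix hcond.1 hcond.2
      (by simpa [mem_comap, under_def] using hpQ)
  · rw [Nat.cast_eq_zero, Nat.card_eq_zero]
    exact .inl ⟨fun I => hcond (modEq_one_and_exists_pow_eq_of_absNorm_eq hp hpm hζ hα I.2)⟩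

end Splitting

section SplittingField

open NumberField

lemma exists_isPrimitiveRoot_of_splits {L : Type*} [Field L] [CharZero L] {m : ℕ} (hm : 0 < m)
    (h : (X ^ m - 1 : L[X]).Splits) : ∃ ζ : L, IsPrimitiveRoot ζ m := by
  have : NeZero m := ⟨hm.ne'⟩
  have hne : (X ^ m - 1 : L[X]) ≠ 0 := by simpa using X_pow_sub_C_ne_zero hm (1 : L)
  obtain ⟨ζ, hζ⟩ := (h.of_dvd hne (cyclotomic.dvd_X_pow_sub_one m L)).exists_eval_eq_zero (by
    rw [degree_cyclotomic]
    exact_mod_cast (Nat.totient_pos.2 hm).ne')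
  exact ⟨ζ, isRoot_cyclotomic_iff.1 hζ⟩

section IsSplittingField

variable {F L : Type*} [Field F] [Field L] [Algebra F L] {m N : ℕ} {a : F} {α ζ : L}

lemma algEquiv_eq_one_of_isSplittingField (hm : 0 < m) (hNm : N ∣ m) (ha : a ≠ 0)
    [hL : IsSplittingField F L ((X ^ N - C a) * (X ^ m - 1))] (hζ : IsPrimitiveRoot ζ m)
    (hα : α ^ N = algebraMap F L a) {σ : L ≃ₐ[F] L} (hσζ : σ ζ = ζ) (hσα : σ α = α) : σ = 1 := by
  have : NeZero m := ⟨hm.ne'⟩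
  have hN : N ≠ 0 := (Nat.pos_of_dvd_of_pos hNm hm).ne'
  have haL : algebraMap F L a ≠ 0 := (_root_.map_ne_zero _).2 ha
  have hα0 : α ≠ 0 := fun h => haL (by rw [← hα, h, zero_pow hN])
  have hroots : ∀ x : L, x ^ m = 1 → σ x = x := fun x hx => by
    obtain ⟨i, -, rfl⟩ := hζ.eq_pow_of_pow_eq_one hx
    rw [map_pow, hσζ]
  have hσ : (σ : L →ₐ[F] L) = AlgHom.id F L := by
    refine AlgHom.ext_of_adjoin_eq_top hL.adjoin_rootSet' fun x hx => show σ x = x from ?_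
    have hx' := (mem_rootSet.1 hx).2
    rw [map_mul, mul_eq_zero] at hx'
    rcases hx' with h | h
    · have hxN : x ^ N = algebraMap F L a := by simpa [sub_eq_zero] using h
      have hxα : (x / α) ^ m = 1 := by
        obtain ⟨d, rfl⟩ := hNm
        rw [pow_mul, div_pow, hxN, hα, div_self haL, one_pow]
      have hσx := hroots _ hxα
      rwa [map_div₀, hσα, div_left_inj' hα0] at hσx
    · exact hroots x (by simpa [sub_eq_zero] using h)
  exact AlgEquiv.ext fun x => DFunLike.congr_fun hσ x

end IsSplittingField

variable {L : Type*} [Field L] [NumberField L] {m N : ℕ} {g : ℤ}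

lemma exists_generators_of_isSplittingField (hm : 0 < m) (hNm : N ∣ m) (hg : g ≠ 0)
    [hL : IsSplittingField ℚ L ((X ^ N - C (g : ℚ)) * (X ^ m - 1))] :
    ∃ ζ α : 𝓞 L, IsPrimitiveRoot ζ m ∧ α ^ N = g ∧
      ∀ σ : L ≃ₐ[ℚ] L, σ • ζ = ζ → σ • α = α → σ = 1 := by
  have : NeZero m := ⟨hm.ne'⟩
  have hN : N ≠ 0 := (Nat.pos_of_dvd_of_pos hNm hm).ne'
  have hm0 : (X ^ m - 1 : L[X]) ≠ 0 := by simpa using X_pow_sub_C_ne_zero hm (1 : L)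
  have hg0 : (X ^ N - C (g : L)) ≠ 0 := X_pow_sub_C_ne_zero (Nat.pos_of_ne_zero hN) _
  have hsplit : ((X ^ N - C (g : L)) * (X ^ m - 1)).Splits := by simpa using hL.splits'
  obtain ⟨ζ, hζ⟩ := exists_isPrimitiveRoot_of_splits hm
    (hsplit.of_dvd (mul_ne_zero hg0 hm0) (dvd_mul_left _ _))
  obtain ⟨α, hα⟩ := (hsplit.of_dvd (mul_ne_zero hg0 hm0) (dvd_mul_right _ _)).exists_eval_eq_zero
    (by rw [degree_X_pow_sub_C (Nat.pos_of_ne_zero hN)]; exact_mod_cast hN)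
  have hαN : α ^ N = (g : L) := by simpa [sub_eq_zero] using hα
  have hint : IsIntegral ℤ α := ⟨X ^ N - C g, monic_X_pow_sub_C g hN, by
    rw [eval₂_sub, eval₂_C, eval₂_X_pow, hαN, eq_intCast, sub_self]⟩
  obtain ⟨β, rfl⟩ : ∃ β : 𝓞 L, algebraMap (𝓞 L) L β = α := ⟨⟨α, hint⟩, rfl⟩
  have hαN' : (β : L) ^ N = algebraMap ℚ L g := by rw [hαN, eq_ratCast, Rat.cast_intCast]
  exact ⟨hζ.toInteger, β, hζ.toInteger_isPrimitiveRoot,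
    RingOfIntegers.coe_injective (by rw [map_pow, map_intCast, hαN]),
    fun σ hσζ hσα => algEquiv_eq_one_of_isSplittingField hm hNm (Int.cast_ne_zero.2 hg) hζ
      hαN' (congrArg ((↑) : 𝓞 L → L) hσζ) (congrArg ((↑) : 𝓞 L → L) hσα)⟩

lemma idealCount_prime_eq_of_isCyclotomicExtension [NeZero m] [IsCyclotomicExtension {m} ℚ L]
    {p : ℕ} (hp : p.Prime) (hpm : ¬ p ∣ m) :
    idealCount L p = if p ≡ 1 [MOD m] then (m.totient : ℝ) else 0 := by
  have hζ := IsCyclotomicExtension.zeta_spec m ℚ L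
  have : IsGalois ℚ L := IsCyclotomicExtension.isGalois {m} ℚ L
  rw [idealCount_prime_eq (N := 1) (g := 1) (α := 1) hp (one_dvd m) hpm
    (by exact_mod_cast hp.not_dvd_one) hζ.toInteger_isPrimitiveRoot (by simp) fun σ hσ _ => ?_,
    IsCyclotomicExtension.finrank L (cyclotomic.irreducible_rat (NeZero.pos m))]
  · simp
  · have hσ' : (σ : L →ₐ[ℚ] L) = AlgHom.id ℚ L :=
      AlgHom.ext_of_adjoin_eq_top (IsCyclotomicExtension.adjoin_primitive_root_eq_top hζ)
        fun x hx => Set.mem_singleton_iff.1 hx ▸ congrArg ((↑) : 𝓞 L → L) hσ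
    exact AlgEquiv.ext fun x => DFunLike.congr_fun hσ' x

lemma finite_setOf_primes_dvd {n : ℤ} (hn : n ≠ 0) : {p : Nat.Primes | (p : ℤ) ∣ n}.Finite :=
  Set.Finite.of_finite_image ((Set.finite_Iic n.natAbs).subset
    (Set.image_subset_iff.2 fun _ hp => Nat.le_of_dvd (Int.natAbs_pos.2 hn) (Int.natCast_dvd.1 hp)))
    Subtype.val_injective.injOn

lemma abs_indicator_one_le (s : Set ℕ) (n : ℕ) : |s.indicator (1 : ℕ → ℝ) n| ≤ 1 := by
  by_cases hn : n ∈ s <;> simp [hn]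

lemma abs_mul_idealCount_prime_le (K : Type*) [Field K] [NumberField K] (c : ℝ) (p : Nat.Primes) :
    |c * idealCount K p| ≤ |c| * 2 ^ Module.finrank ℚ K := by
  rw [abs_mul]
  exact mul_le_mul_of_nonneg_left ((isModerate_idealCount K).abs_apply_prime_le p) (abs_nonneg c)

-- The two fields see the same primes `p ≡ 1 [MOD m]`, but `L` only those modulo which `g` is an
-- `N`-th power: off finitely many primes, the indicator function is the difference of the
-- normalized ideal counts of `K` and `L`.
lemma hasLogDensity_indicator_not_pow_of_numberField (K : Type*) [Field K] [NumberField K]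
    [IsCyclotomicExtension {m} ℚ K] (hm : 0 < m) (hNm : N ∣ m) (hg : g ≠ 0)
    [IsSplittingField ℚ L ((X ^ N - C (g : ℚ)) * (X ^ m - 1))] :
    HasLogDensity (Set.indicator {q : ℕ | q.Prime ∧ ¬ (q : ℤ) ∣ m * g ∧ q ≡ 1 [MOD m] ∧
        ¬ ∃ y : ZMod q, y ^ N = g} 1)
      (1 / (m.totient : ℝ) - 1 / (Module.finrank ℚ L : ℝ)) := by
  have : NeZero m := ⟨hm.ne'⟩
  have : Normal ℚ L := .of_isSplittingField ((X ^ N - C (g : ℚ)) * (X ^ m - 1))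
  have : IsGalois ℚ L := ⟨⟩
  obtain ⟨ζ, α, hζ, hα, hfix⟩ := exists_generators_of_isSplittingField (L := L) hm hNm hg
  have hφ : (m.totient : ℝ) ≠ 0 := by exact_mod_cast (Nat.totient_pos.2 hm).ne'
  have hn : (Module.finrank ℚ L : ℝ) ≠ 0 := by exact_mod_cast Module.finrank_pos.ne'
  have hdiff := ((hasLogDensity_idealCount K).const_mul (1 / (m.totient : ℝ))).sub
    ((hasLogDensity_idealCount L).const_mul (1 / (Module.finrank ℚ L : ℝ)))
    (abs_mul_idealCount_prime_le K _) (abs_mul_idealCount_prime_le L _)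
  rw [mul_one, mul_one] at hdiff
  have hmg : (m * g : ℤ) ≠ 0 := mul_ne_zero (by exact_mod_cast hm.ne') hg
  refine hdiff.congr_cofinite
    (fun p => (abs_sub _ _).trans (add_le_add (abs_mul_idealCount_prime_le K _ p)
      (abs_mul_idealCount_prime_le L _ p)))
    (fun p => abs_indicator_one_le _ _) (finite_setOf_primes_dvd hmg) fun p hp => ?_
  have hpmg : ¬ (p : ℤ) ∣ m * g := hp
  have hpm : ¬ (p : ℕ) ∣ m := fun h => hp ((Int.natCast_dvd_natCast.2 h).mul_right g)
  have hpg : ¬ (p : ℤ) ∣ g := fun h => hp (h.mul_left _)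
  rw [idealCount_prime_eq_of_isCyclotomicExtension p.2 hpm,
    idealCount_prime_eq p.2 hNm hpm hpg hζ hα hfix]
  by_cases hmod : (p : ℕ) ≡ 1 [MOD m] <;> by_cases hy : ∃ y : ZMod p, y ^ N = g <;>
    simp [Set.indicator, hmod, hy, hφ, hn, p.2, hpmg]

theorem hasLogDensity_indicator_not_pow {L : Type*} [Field L] [CharZero L] [hA : Algebra ℚ L]
    (hm : 0 < m) (hNm : N ∣ m) (hg : g ≠ 0)
    [hL : IsSplittingField ℚ L ((X ^ N - C (g : ℚ)) * (X ^ m - 1))] :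
    HasLogDensity (Set.indicator {q : ℕ | q.Prime ∧ ¬ (q : ℤ) ∣ m * g ∧ q ≡ 1 [MOD m] ∧
        ¬ ∃ y : ZMod q, y ^ N = g} 1)
      (1 / (m.totient : ℝ) - 1 / (Module.finrank ℚ L : ℝ)) := by
  obtain rfl := Subsingleton.elim hA DivisionRing.toRatAlgebra
  have : NeZero m := ⟨hm.ne'⟩
  have : NumberField L :=
    { to_finiteDimensional := hL.finiteDimensional L ((X ^ N - C (g : ℚ)) * (X ^ m - 1)) }
  have : IsCyclotomicExtension {m} ℚ (CyclotomicField m ℚ) := by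
    convert CyclotomicField.isCyclotomicExtension m ℚ
    · rfl
    · exact Subsingleton.elim _ _
  exact hasLogDensity_indicator_not_pow_of_numberField (CyclotomicField m ℚ) hm hNm hg

end SplittingField

section MethodOfMoments

open MeasureTheory Set unitInterval

variable {ι X : Type*} {F : Filter ι}

lemma tendsto_integral_of_approx [MeasurableSpace X] {μ : ι → Measure X} {ν : Measure X}
    {q : X → ℝ} (hqμ : ∀ᶠ i in F, Integrable q (μ i)) (hqν : Integrable q ν)
    (happ : ∀ ε > 0, ∃ r w : X → ℝ, (∀ᶠ i in F, Integrable r (μ i) ∧ Integrable w (μ i)) ∧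
      Integrable r ν ∧ Integrable w ν ∧ (∀ x, |q x - r x| ≤ w x) ∧ ∫ x, w x ∂ν < ε ∧
      Tendsto (fun i => ∫ x, r x ∂μ i) F (𝓝 (∫ x, r x ∂ν)) ∧
      Tendsto (fun i => ∫ x, w x ∂μ i) F (𝓝 (∫ x, w x ∂ν))) :
    Tendsto (fun i => ∫ x, q x ∂μ i) F (𝓝 (∫ x, q x ∂ν)) := by
  have abs_sub_le (m : Measure X) {r w : X → ℝ} (hq : Integrable q m) (hr : Integrable r m)
      (hw : Integrable w m) (h : ∀ x, |q x - r x| ≤ w x) :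
      |∫ x, q x ∂m - ∫ x, r x ∂m| ≤ ∫ x, w x ∂m := by
    rw [← integral_sub hq hr, ← Real.norm_eq_abs]
    exact norm_integral_le_of_norm_le hw (Eventually.of_forall h)
  rw [Metric.tendsto_nhds]
  intro ε hε
  obtain ⟨r, w, hμ, hrν, hwν, h, hwε, hr, hw⟩ := happ (ε / 3) (by positivity)
  have hν := abs_sub_le ν hqν hrν hwν h
  filter_upwards [hqμ, hμ, Metric.tendsto_nhds.mp hr (ε / 3) (by positivity),
    hw.eventually_lt_const hwε] with i hqi ⟨hri, hwi⟩ hr_lt hw_lt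
  have hi := abs_sub_le (μ i) hqi hri hwi h
  rw [Real.dist_eq] at hr_lt ⊢
  rw [abs_le] at hi hν
  rw [abs_lt] at hr_lt ⊢
  constructor <;> linarith

variable {μ : ι → Measure I} {ν : Measure I}

lemma integrable_of_continuous_unitInterval [IsFiniteMeasure ν] {q : I → ℝ} (hq : Continuous q) :
    Integrable q ν :=
  hq.integrable_of_hasCompactSupport (HasCompactSupport.of_compactSpace q)

lemma tendsto_integral_polynomial_of_moments (hμ : ∀ᶠ i in F, IsFiniteMeasure (μ i))
    [IsFiniteMeasure ν]
    (h : ∀ k : ℕ, Tendsto (fun i => ∫ y, (y : ℝ) ^ k ∂μ i) F (𝓝 (∫ y, (y : ℝ) ^ k ∂ν)))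
    (p : ℝ[X]) :
    Tendsto (fun i => ∫ y, p.eval (y : ℝ) ∂μ i) F (𝓝 (∫ y, p.eval (y : ℝ) ∂ν)) := by
  induction p using Polynomial.induction_on' with
  | add p₁ p₂ hp₁ hp₂ =>
    have integral_add_eval (m : Measure I) [IsFiniteMeasure m] :
        ∫ y, (p₁ + p₂).eval (y : ℝ) ∂m = ∫ y, p₁.eval (y : ℝ) ∂m + ∫ y, p₂.eval (y : ℝ) ∂m := by
      simp_rw [eval_add]
      exact integral_add (integrable_of_continuous_unitInterval (by fun_prop))
        (integrable_of_continuous_unitInterval (by fun_prop))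
    rw [integral_add_eval]
    refine (hp₁.add hp₂).congr' ?_
    filter_upwards [hμ] with i _ using (integral_add_eval (μ i)).symm
  | monomial k c =>
    simp_rw [eval_monomial, integral_const_mul]
    exact (h k).const_mul c

lemma tendsto_integral_continuous_of_moments (hμ : ∀ᶠ i in F, IsFiniteMeasure (μ i))
    [IsFiniteMeasure ν]
    (h : ∀ k : ℕ, Tendsto (fun i => ∫ y, (y : ℝ) ^ k ∂μ i) F (𝓝 (∫ y, (y : ℝ) ^ k ∂ν)))
    {q : I → ℝ} (hq : Continuous q) :
    Tendsto (fun i => ∫ y, q y ∂μ i) F (𝓝 (∫ y, q y ∂ν)) := by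
  refine tendsto_integral_of_approx
    (hμ.mono fun i _ => integrable_of_continuous_unitInterval hq)
    (integrable_of_continuous_unitInterval hq) fun ε hε => ?_
  let η : ℝ := ε / (ν.real univ + 1)
  have hη : 0 < η := by positivity
  obtain ⟨p, hp⟩ := exists_polynomial_near_of_continuousOn 0 1 (q ∘ projIcc 0 1 zero_le_one)
    (hq.comp continuous_projIcc).continuousOn η hη
  have hpq (y : I) : |q y - p.eval (y : ℝ)| ≤ η := by
    rw [abs_sub_comm]
    simpa using (hp y y.2).le
  refine ⟨fun y => p.eval (y : ℝ), fun _ => η, hμ.mono fun i _ =>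
    ⟨integrable_of_continuous_unitInterval (by fun_prop), integrable_const η⟩,
    integrable_of_continuous_unitInterval (by fun_prop), integrable_const η, hpq, ?_,
    tendsto_integral_polynomial_of_moments hμ h p, ?_⟩
  · rw [integral_const, smul_eq_mul, mul_div_left_comm]
    exact mul_lt_of_lt_one_right hε ((div_lt_one (by positivity)).mpr (lt_add_one _))
  · simpa using tendsto_integral_polynomial_of_moments hμ h (Polynomial.C η)

lemma tendsto_integral_mul_tent_nhdsGT_zero [IsFiniteMeasure ν] {y₀ : I} (hν : ν {y₀} = 0)
    {q : I → ℝ} (hq : Continuous q) :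
    Tendsto (fun η : ℝ => ∫ y, |q y| * max 0 (1 - |(y : ℝ) - y₀| / η) ∂ν) (𝓝[>] 0) (𝓝 0) := by
  suffices Tendsto (fun η : ℝ => ∫ y, |q y| * max 0 (1 - |(y : ℝ) - y₀| / η) ∂ν) (𝓝[>] 0)
      (𝓝 (∫ _, 0 ∂ν)) by simpa using this
  refine tendsto_integral_filter_of_dominated_convergence (fun y => |q y|)
    (Eventually.of_forall fun η => Continuous.aestronglyMeasurable (by fun_prop)) ?_
    (integrable_of_continuous_unitInterval hq.abs) ?_
  · filter_upwards [self_mem_nhdsWithin] with η (hη : 0 < η)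
    refine Eventually.of_forall fun y => ?_
    rw [Real.norm_of_nonneg (by positivity)]
    exact mul_le_of_le_one_right (abs_nonneg _)
      (max_le zero_le_one (sub_le_self 1 (by positivity)))
  · filter_upwards [compl_mem_ae_iff.mpr hν] with y hy
    have hpos : 0 < |(y : ℝ) - y₀| := abs_pos.mpr (sub_ne_zero.mpr (Subtype.coe_injective.ne hy))
    refine tendsto_const_nhds.congr' ?_
    filter_upwards [Ioo_mem_nhdsGT hpos] with η hη
    have : 1 ≤ |(y : ℝ) - y₀| / η := (one_le_div hη.1).mpr hη.2.le
    rw [max_eq_left (by linarith), mul_zero]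

lemma abs_indicator_Ici_sub_mul_ramp_le {η : ℝ} (hη : 0 < η) (y₀ y : I) (q : I → ℝ) :
    |(Ici y₀).indicator q y - q y * max 0 (min 1 (((y : ℝ) - y₀) / η + 1))| ≤
      |q y| * max 0 (1 - |(y : ℝ) - y₀| / η) := by
  rcases le_or_gt y₀ y with h | h
  · have hsub : 0 ≤ ((y : ℝ) - y₀) / η := div_nonneg (sub_nonneg.mpr h) hη.le
    rw [indicator_of_mem (mem_Ici.mpr h), min_eq_left (by linarith), max_eq_right zero_le_one,
      mul_one, sub_self, abs_zero]
    positivity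
  · have hsub : (y : ℝ) - y₀ < 0 := sub_neg.mpr h
    have hdiv : ((y : ℝ) - y₀) / η < 0 := div_neg_of_neg_of_pos hsub hη
    rw [indicator_of_notMem (by simpa using h), zero_sub, abs_neg, abs_mul, abs_of_neg hsub,
      min_eq_right (by linarith), neg_div, sub_neg_eq_add, add_comm 1,
      abs_of_nonneg (le_max_left 0 (((y : ℝ) - y₀) / η + 1))]

lemma tendsto_integral_indicator_Ici_of_moments (hμ : ∀ᶠ i in F, IsFiniteMeasure (μ i))
    [IsFiniteMeasure ν]
    (h : ∀ k : ℕ, Tendsto (fun i => ∫ y, (y : ℝ) ^ k ∂μ i) F (𝓝 (∫ y, (y : ℝ) ^ k ∂ν)))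
    {q : I → ℝ} (hq : Continuous q) {y₀ : I} (hν : ν {y₀} = 0) :
    Tendsto (fun i => ∫ y, (Ici y₀).indicator q y ∂μ i) F
      (𝓝 (∫ y, (Ici y₀).indicator q y ∂ν)) := by
  refine tendsto_integral_of_approx
    (hμ.mono fun i _ => (integrable_of_continuous_unitInterval hq).indicator measurableSet_Ici)
    ((integrable_of_continuous_unitInterval hq).indicator measurableSet_Ici) fun ε hε => ?_
  obtain ⟨η, hηε, hη⟩ := (((tendsto_integral_mul_tent_nhdsGT_zero hν hq).eventually_lt_const
    hε).and self_mem_nhdsWithin).exists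
  have hramp : Continuous fun y : I => q y * max 0 (min 1 (((y : ℝ) - y₀) / η + 1)) := by fun_prop
  have htent : Continuous fun y : I => |q y| * max 0 (1 - |(y : ℝ) - y₀| / η) := by fun_prop
  exact ⟨_, _, hμ.mono fun i _ => ⟨integrable_of_continuous_unitInterval hramp,
    integrable_of_continuous_unitInterval htent⟩, integrable_of_continuous_unitInterval hramp,
    integrable_of_continuous_unitInterval htent,
    fun y => abs_indicator_Ici_sub_mul_ramp_le hη y₀ y q, hηε,
    tendsto_integral_continuous_of_moments hμ h hramp,
    tendsto_integral_continuous_of_moments hμ h htent⟩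

end MethodOfMoments

section Karamata

open MeasureTheory ProbabilityTheory Set

/-- The substitution `y = e^{-t}` of Karamata's proof, as a map to the unit interval (constantly `1`
for `t ≤ 0`). -/
noncomputable def expNeg (t : ℝ) : unitInterval :=
  projIcc 0 1 zero_le_one (Real.exp (-t))

lemma coe_expNeg {t : ℝ} (ht : 0 ≤ t) : (expNeg t : ℝ) = Real.exp (-t) := by
  simp [expNeg, coe_projIcc, ht, (Real.exp_pos _).le]

lemma continuous_expNeg : Continuous expNeg := by
  unfold expNeg
  fun_prop

lemma expNeg_le_expNeg_iff {t b : ℝ} (ht : 0 ≤ t) (hb : 0 ≤ b) :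
    expNeg b ≤ expNeg t ↔ t ≤ b := by
  rw [← Subtype.coe_le_coe, coe_expNeg ht, coe_expNeg hb, Real.exp_le_exp, neg_le_neg_iff]

lemma expNeg_preimage_singleton {b : ℝ} (hb : 0 < b) : expNeg ⁻¹' {expNeg b} = {b} := by
  refine Subset.antisymm (fun t (ht : expNeg t = expNeg b) => ?_) (by simp)
  have ht' := congrArg Subtype.val ht
  rcases le_or_gt 0 t with h | h
  · rw [coe_expNeg h, coe_expNeg hb.le, Real.exp_eq_exp, neg_inj] at ht'
    exact ht'
  · have : (expNeg t : ℝ) = 1 := by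
      rw [expNeg, projIcc_of_right_le _ (Real.one_le_exp (by linarith))]
    rw [this, coe_expNeg hb.le, eq_comm, Real.exp_eq_one_iff] at ht'
    linarith

lemma integral_gammaMeasure {ρ : ℝ} (hρ : 0 < ρ) (f : ℝ → ℝ) :
    ∫ t, f t ∂gammaMeasure ρ 1 =
      (Real.Gamma ρ)⁻¹ * ∫ t in Ioi (0 : ℝ), t ^ (ρ - 1) * Real.exp (-t) * f t := by
  rw [gammaMeasure, integral_withDensity_eq_integral_toReal_smul (f := gammaPDF ρ 1)
    (measurable_gammaPDFReal ρ 1).ennreal_ofReal (by simp [gammaPDF]),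
    ← integral_const_mul, ← integral_indicator measurableSet_Ioi]
  refine integral_congr_ae ?_
  filter_upwards [compl_mem_ae_iff.mpr (measure_singleton (0 : ℝ))] with t (ht : t ≠ 0)
  rw [gammaPDF, ENNReal.toReal_ofReal (gammaPDFReal_nonneg hρ one_pos t), smul_eq_mul, gammaPDFReal]
  rcases ht.lt_or_gt with h | h
  · rw [if_neg h.not_ge, zero_mul, indicator_of_notMem (notMem_Ioi.mpr h.le)]
  · rw [if_pos h.le, indicator_of_mem (mem_Ioi.mpr h)]
    simp only [Real.one_rpow, one_mul, one_div, mul_assoc]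

/-- The law of `e^{-T}`, for `T` Gamma-distributed with shape `ρ` and scale `1`, times `C`. -/
noncomputable def gammaLimit (ρ C : ℝ) : Measure unitInterval :=
  ENNReal.ofReal C • (gammaMeasure ρ 1).map expNeg

lemma integral_gammaLimit {ρ C : ℝ} (hρ : 0 < ρ) (hC : 0 ≤ C) {q : unitInterval → ℝ}
    (hq : Measurable q) :
    ∫ y, q y ∂gammaLimit ρ C =
      C / Real.Gamma ρ * ∫ t in Ioi (0 : ℝ), t ^ (ρ - 1) * Real.exp (-t) * q (expNeg t) := by
  rw [gammaLimit, integral_smul_measure, ENNReal.toReal_ofReal hC,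
    integral_map continuous_expNeg.aemeasurable hq.aestronglyMeasurable, integral_gammaMeasure hρ,
    smul_eq_mul, div_eq_mul_inv, mul_assoc]

lemma integral_pow_gammaLimit {ρ C : ℝ} (hρ : 0 < ρ) (hC : 0 ≤ C) (k : ℕ) :
    ∫ y, (y : ℝ) ^ k ∂gammaLimit ρ C = (1 / ((k : ℝ) + 1)) ^ ρ * C := by
  have hG := (Real.Gamma_pos_of_pos hρ).ne'
  have h_integral : ∫ t in Ioi (0 : ℝ), t ^ (ρ - 1) * Real.exp (-t) * (expNeg t : ℝ) ^ k =
      (1 / ((k : ℝ) + 1)) ^ ρ * Real.Gamma ρ := by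
    rw [← Real.integral_rpow_mul_exp_neg_mul_Ioi hρ (by positivity : (0 : ℝ) < k + 1)]
    refine setIntegral_congr_fun measurableSet_Ioi fun t ht => ?_
    simp only [coe_expNeg (mem_Ioi.mp ht).le]
    rw [← Real.exp_nat_mul, mul_assoc, ← Real.exp_add]
    ring_nf
  rw [integral_gammaLimit hρ hC (by fun_prop), h_integral]
  field_simp

lemma isFiniteMeasure_gammaLimit {ρ : ℝ} (hρ : 0 < ρ) (C : ℝ) :
    IsFiniteMeasure (gammaLimit ρ C) := by
  have := isProbabilityMeasure_gammaMeasure hρ one_pos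
  exact Measure.smul_finite _ ENNReal.ofReal_ne_top

lemma gammaLimit_singleton_expNeg (ρ C : ℝ) {b : ℝ} (hb : 0 < b) :
    gammaLimit ρ C {expNeg b} = 0 := by
  rw [gammaLimit, Measure.smul_apply, Measure.map_apply continuous_expNeg.measurable
    (measurableSet_singleton _), expNeg_preimage_singleton hb, gammaMeasure,
    withDensity_absolutelyContinuous _ _ (measure_singleton b), smul_zero]

/-- The hypotheses of Karamata's theorem: the Laplace transform of the measure with nonnegative
masses `a n` at the points `l n ≥ 0` converges for `σ > 0` and is asymptotic to `C σ^{-ρ}` as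
`σ → 0⁺`. -/
structure HasLaplaceAsymptotic (a l : ℕ → ℝ) (ρ C : ℝ) : Prop where
  nonneg n : 0 ≤ a n
  exponent_nonneg n : 0 ≤ l n
  summable {σ : ℝ} (hσ : 0 < σ) : Summable fun n => a n * Real.exp (-(σ * l n))
  tendsto : Tendsto (fun σ => σ ^ ρ * ∑' n, a n * Real.exp (-(σ * l n))) (𝓝[>] 0) (𝓝 C)

/-- The image, under `y = e^{-σ t}`, of the measure with masses `σ^ρ a n e^{-σ (l n)}` at the
points `l n`. -/
noncomputable def laplaceMeasure (a l : ℕ → ℝ) (ρ σ : ℝ) : Measure unitInterval :=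
  Measure.sum fun n =>
    ENNReal.ofReal (σ ^ ρ * (a n * Real.exp (-(σ * l n)))) • Measure.dirac (expNeg (σ * l n))

lemma tendsto_const_mul_nhdsGT_zero {c : ℝ} (hc : 0 < c) :
    Tendsto (fun σ : ℝ => c * σ) (𝓝[>] 0) (𝓝[>] 0) := by
  refine tendsto_nhdsWithin_iff.mpr ⟨?_, ?_⟩
  · have : Tendsto (fun σ : ℝ => c * σ) (𝓝 0) (𝓝 (c * 0)) := tendsto_id.const_mul c
    rw [mul_zero] at this
    exact this.mono_left nhdsWithin_le_nhds
  · filter_upwards [self_mem_nhdsWithin] with σ hσ using mul_pos hc hσ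

namespace HasLaplaceAsymptotic

variable {a l : ℕ → ℝ} {ρ C σ : ℝ} (h : HasLaplaceAsymptotic a l ρ C)

include h

lemma limit_nonneg : 0 ≤ C := by
  refine ge_of_tendsto h.tendsto ?_
  filter_upwards [self_mem_nhdsWithin] with σ (hσ : 0 < σ)
  exact mul_nonneg (by positivity)
    (tsum_nonneg fun n => mul_nonneg (h.nonneg n) (Real.exp_pos _).le)

lemma mass_nonneg (hσ : 0 < σ) (n : ℕ) : 0 ≤ σ ^ ρ * (a n * Real.exp (-(σ * l n))) := by
  have := h.nonneg n
  positivity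

lemma isFiniteMeasure_laplaceMeasure (hσ : 0 < σ) : IsFiniteMeasure (laplaceMeasure a l ρ σ) := by
  constructor
  rw [laplaceMeasure, Measure.sum_apply _ MeasurableSet.univ]
  simp only [Measure.smul_apply, measure_univ, smul_eq_mul, mul_one]
  rw [← ENNReal.ofReal_tsum_of_nonneg (h.mass_nonneg hσ) ((h.summable hσ).mul_left _)]
  exact ENNReal.ofReal_lt_top

lemma integral_laplaceMeasure (hσ : 0 < σ) {q : unitInterval → ℝ}
    (hq : Integrable q (laplaceMeasure a l ρ σ)) :
    ∫ y, q y ∂laplaceMeasure a l ρ σ =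
      σ ^ ρ * ∑' n, a n * Real.exp (-(σ * l n)) * q (expNeg (σ * l n)) := by
  rw [laplaceMeasure, integral_sum_measure hq, ← tsum_mul_left]
  refine tsum_congr fun n => ?_
  rw [integral_smul_measure, integral_dirac, ENNReal.toReal_ofReal (h.mass_nonneg hσ n),
    smul_eq_mul, mul_assoc]

lemma tendsto_integral_pow_laplaceMeasure (hρ : 0 < ρ) (k : ℕ) :
    Tendsto (fun σ => ∫ y, (y : ℝ) ^ k ∂laplaceMeasure a l ρ σ) (𝓝[>] 0)
      (𝓝 (∫ y, (y : ℝ) ^ k ∂gammaLimit ρ C)) := by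
  have hk : (0 : ℝ) < k + 1 := by positivity
  rw [integral_pow_gammaLimit hρ h.limit_nonneg]
  refine ((h.tendsto.comp (tendsto_const_mul_nhdsGT_zero hk)).const_mul
    ((1 / ((k : ℝ) + 1)) ^ ρ)).congr' ?_
  filter_upwards [self_mem_nhdsWithin] with σ (hσ : 0 < σ)
  have := h.isFiniteMeasure_laplaceMeasure hσ
  rw [h.integral_laplaceMeasure hσ (integrable_of_continuous_unitInterval (by fun_prop)),
    Function.comp_apply, ← mul_assoc, ← Real.mul_rpow (by positivity) (by positivity),
    show 1 / ((k : ℝ) + 1) * ((k + 1) * σ) = σ by field_simp]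
  congr 1
  refine tsum_congr fun n => ?_
  rw [coe_expNeg (mul_nonneg hσ.le (h.exponent_nonneg n)), mul_assoc (a n), ← Real.exp_nat_mul,
    ← Real.exp_add]
  ring_nf

theorem karamata (hρ : 0 < ρ) {φ : ℝ → ℝ} (hφ : Continuous φ) {b : ℝ} (hb : 0 < b) :
    Tendsto (fun σ => σ ^ ρ * ∑' n, if σ * l n ≤ b then a n * φ (σ * l n) else 0) (𝓝[>] 0)
      (𝓝 (C / Real.Gamma ρ * ∫ t in (0 : ℝ)..b, t ^ (ρ - 1) * φ t)) := by
  -- extended from `[e^{-b}, 1]` to a continuous function on `I` by the truncation `max y e^{-b}`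
  let q : unitInterval → ℝ := fun y =>
    φ (-Real.log (max y (Real.exp (-b)))) / max (y : ℝ) (Real.exp (-b))
  have hmax (y : unitInterval) : max (y : ℝ) (Real.exp (-b)) ≠ 0 :=
    (lt_max_of_lt_right (Real.exp_pos _)).ne'
  have hq : Continuous q :=
    (hφ.comp (Continuous.log (by fun_prop) hmax).neg).div (by fun_prop) hmax
  have hq_expNeg {t : ℝ} (ht : 0 ≤ t) :
      Real.exp (-t) * (Ici (expNeg b)).indicator q (expNeg t) = if t ≤ b then φ t else 0 := by
    rw [indicator_apply, mul_ite, mul_zero]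
    refine if_ctx_congr (expNeg_le_expNeg_iff ht hb.le) (fun htb => ?_) fun _ => rfl
    rw [show q (expNeg t) = φ t / Real.exp (-t) by
      simp only [q, coe_expNeg ht]
      rw [max_eq_left (by simpa using htb), Real.log_exp, neg_neg],
      mul_div_cancel₀ _ (Real.exp_pos _).ne']
  have h_finite : ∀ᶠ σ in 𝓝[>] 0, IsFiniteMeasure (laplaceMeasure a l ρ σ) := by
    filter_upwards [self_mem_nhdsWithin] with σ hσ using h.isFiniteMeasure_laplaceMeasure hσ
  have := isFiniteMeasure_gammaLimit hρ C
  have h_lim := tendsto_integral_indicator_Ici_of_moments h_finite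
    (h.tendsto_integral_pow_laplaceMeasure hρ) hq (gammaLimit_singleton_expNeg ρ C hb)
  rw [integral_gammaLimit hρ h.limit_nonneg (hq.measurable.indicator measurableSet_Ici)] at h_lim
  convert h_lim.congr' ?_ using 3
  · rw [intervalIntegral.integral_of_le hb.le, ← Ioi_inter_Iic,
      ← setIntegral_indicator measurableSet_Iic]
    refine setIntegral_congr_fun measurableSet_Ioi fun t ht => ?_
    rw [mul_assoc, hq_expNeg (mem_Ioi.mp ht).le, indicator_apply, mul_ite, mul_zero]
    rfl
  · filter_upwards [self_mem_nhdsWithin, h_finite] with σ (hσ : 0 < σ) _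
    rw [h.integral_laplaceMeasure hσ
      ((integrable_of_continuous_unitInterval hq).indicator measurableSet_Ici)]
    simp only [mul_assoc, hq_expNeg (mul_nonneg hσ.le (h.exponent_nonneg _)), mul_ite, mul_zero]

end HasLaplaceAsymptotic

end Karamata

section PrimeSupport

open ArithmeticFunction
open scoped ArithmeticFunction.zeta ArithmeticFunction.Moebius

/-- The indicator function of the positive integers all of whose prime factors lie in `S`, as an
arithmetic function. The integers free of prime factors from `P` are counted by
`primeSupport Pᶜ`. -/
noncomputable def primeSupport (S : Set ℕ) : ArithmeticFunction ℝ :=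
  ⟨fun n => if n ≠ 0 ∧ ∀ q : ℕ, q.Prime → q ∣ n → q ∈ S then 1 else 0, by simp⟩

variable (S : Set ℕ)

lemma primeSupport_apply (n : ℕ) :
    primeSupport S n = if n ≠ 0 ∧ ∀ q : ℕ, q.Prime → q ∣ n → q ∈ S then 1 else 0 := rfl

lemma primeSupport_nonneg (n : ℕ) : 0 ≤ primeSupport S n := by
  rw [primeSupport_apply]; split_ifs <;> norm_num

lemma primeSupport_le_one (n : ℕ) : primeSupport S n ≤ 1 := by
  rw [primeSupport_apply]; split_ifs <;> norm_num

lemma primeSupport_one : primeSupport S 1 = 1 := by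
  rw [primeSupport_apply, if_pos]
  exact ⟨one_ne_zero, fun q hq h => absurd (Nat.dvd_one.1 h) hq.ne_one⟩

lemma primeSupport_mul (m n : ℕ) :
    primeSupport S (m * n) = primeSupport S m * primeSupport S n := by
  simp only [primeSupport_apply]
  rw [ite_zero_mul_ite_zero, mul_one]
  congr 1
  rw [eq_iff_iff]
  constructor
  · rintro ⟨h0, h⟩
    exact ⟨⟨left_ne_zero_of_mul h0, fun q hq hd => h q hq (hd.mul_right n)⟩,
      right_ne_zero_of_mul h0, fun q hq hd => h q hq (hd.mul_left m)⟩
  · rintro ⟨⟨hm, h1⟩, hn, h2⟩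
    exact ⟨mul_ne_zero hm hn, fun q hq hd => ((Nat.Prime.dvd_mul hq).1 hd).elim (h1 q hq) (h2 q hq)⟩

lemma primeSupport_prime_pow {p k : ℕ} (hp : p.Prime) (hk : k ≠ 0) :
    primeSupport S (p ^ k) = S.indicator 1 p := by
  rw [primeSupport_apply, Set.indicator_apply, Pi.one_apply]
  congr 1
  rw [eq_iff_iff]
  constructor
  · rintro ⟨-, h⟩
    exact h p hp (dvd_pow_self p hk)
  · exact fun h => ⟨pow_ne_zero k hp.ne_zero, fun q hq hd =>
      ((Nat.prime_dvd_prime_iff_eq hq hp).1 (hq.dvd_of_dvd_pow hd)) ▸ h⟩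

lemma primeSupport_prime {p : ℕ} (hp : p.Prime) : primeSupport S p = S.indicator 1 p := by
  simpa using primeSupport_prime_pow S hp one_ne_zero

lemma pmul_primeSupport_mul (a b : ArithmeticFunction ℝ) :
    (primeSupport S).pmul (a * b) = (primeSupport S).pmul a * (primeSupport S).pmul b := by
  ext n
  rw [pmul_apply, mul_apply, mul_apply, Finset.mul_sum]
  refine Finset.sum_congr rfl fun x hx => ?_
  rw [← (Nat.mem_divisorsAntidiagonal.1 hx).1, primeSupport_mul, pmul_apply, pmul_apply]
  ring

lemma isMultiplicative_primeSupport : (primeSupport S).IsMultiplicative :=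
  ⟨primeSupport_one S, fun _ => primeSupport_mul S _ _⟩

lemma isModerate_primeSupport : IsModerate (primeSupport S) 0 where
  isMultiplicative := isMultiplicative_primeSupport S
  nonneg := primeSupport_nonneg S
  apply_prime_pow_le _ _ := by simpa using primeSupport_le_one S _

lemma primeSupport_mul_compl : primeSupport S * primeSupport Sᶜ = ζ := by
  refine (((isMultiplicative_primeSupport S).mul (isMultiplicative_primeSupport
    Sᶜ)).eq_iff_eq_on_prime_powers _ _
    isMultiplicative_zeta.natCast).2 fun p k hp => ?_
  rw [mul_apply, Nat.sum_divisorsAntidiagonal (fun a b => primeSupport S a * primeSupport Sᶜ b),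
    Nat.sum_divisors_prime_pow hp]
  rw [show (ζ : ArithmeticFunction ℝ) (p ^ k) = 1 by simp [natCoe_apply, zeta_apply, hp.ne_zero]]
  have hd : ∀ i ∈ Finset.range (k + 1), p ^ k / p ^ i = p ^ (k - i) := fun i hi =>
    Nat.pow_div (by simpa [Nat.lt_succ_iff] using hi) hp.pos
  by_cases h : p ∈ S
  · rw [Finset.sum_eq_single_of_mem k (by simp)]
    · rw [hd k (by simp), Nat.sub_self, pow_zero, primeSupport_one, mul_one]
      rcases eq_or_ne k 0 with rfl | hk
      · simp [primeSupport_one]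
      · simp [primeSupport_prime_pow S hp hk, h]
    · intro i hi hik
      have hki : k - i ≠ 0 := by have := Finset.mem_range.1 hi; omega
      rw [hd i hi, primeSupport_prime_pow Sᶜ hp hki]
      simp [h]
  · rw [Finset.sum_eq_single_of_mem 0 (by simp)]
    · rw [hd 0 (by simp), Nat.sub_zero, pow_zero, primeSupport_one, one_mul]
      rcases eq_or_ne k 0 with rfl | hk
      · simp [primeSupport_one]
      · simp [primeSupport_prime_pow Sᶜ hp hk, h]
    · intro i _ hik
      rw [primeSupport_prime_pow S hp hik]
      simp [h]

lemma primeSupport_mul_pmul_moebius :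
    primeSupport S * (primeSupport S).pmul (μ : ArithmeticFunction ℝ) = 1 := by
  have h := pmul_primeSupport_mul S (ζ : ArithmeticFunction ℝ) (μ : ArithmeticFunction ℝ)
  rw [pmul_zeta, coe_zeta_mul_coe_moebius] at h
  rw [← h]
  ext n
  by_cases hn : n = 1
  · subst hn; simp [primeSupport_one]
  · simp [hn]

lemma primeSupport_compl_eq :
    primeSupport Sᶜ = (primeSupport S).pmul (μ : ArithmeticFunction ℝ) * ζ := by
  rw [← primeSupport_mul_compl S, ← mul_assoc, mul_comm _ (primeSupport S),
    primeSupport_mul_pmul_moebius, one_mul]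

lemma pmul_vonMangoldt_add_compl :
    (primeSupport S).pmul Λ + (primeSupport Sᶜ).pmul Λ = Λ := by
  ext n
  rw [ArithmeticFunction.add_apply, pmul_apply, pmul_apply, ← add_mul]
  by_cases hn : IsPrimePow n
  · obtain ⟨p, k, hp, hk, rfl⟩ := (isPrimePow_nat_iff n).1 hn
    rw [primeSupport_prime_pow S hp hk.ne', primeSupport_prime_pow Sᶜ hp hk.ne']
    by_cases h : p ∈ S <;> simp [h]
  · simp [vonMangoldt_eq_zero_iff.2 hn]

lemma primeSupport_compl_pmul_log :
    (primeSupport Sᶜ).pmul log =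
      (primeSupport S).pmul (μ : ArithmeticFunction ℝ) * (log - ζ * ζ) + primeSupport Sᶜ * ζ
        - (primeSupport S).pmul Λ * primeSupport Sᶜ := by
  have h1 : (primeSupport Sᶜ).pmul log = (primeSupport Sᶜ).pmul Λ * primeSupport Sᶜ := by
    rw [← vonMangoldt_mul_zeta, pmul_primeSupport_mul, pmul_zeta]
  have h2 : (primeSupport Sᶜ).pmul Λ = Λ - (primeSupport S).pmul Λ :=
    eq_sub_of_add_eq' (pmul_vonMangoldt_add_compl S)
  rw [h1, h2, sub_mul, mul_sub, ← mul_assoc, ← primeSupport_compl_eq, ← zeta_mul_vonMangoldt,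
    ← mul_assoc, ← primeSupport_compl_eq]
  ring

end PrimeSupport

section LaplaceDerivative

variable {ι : Type*} {u l : ι → ℝ} {δ C : ℝ}

lemma summable_mul_mul_exp (hu : ∀ i, 0 ≤ u i) (hl : ∀ i, 0 ≤ l i)
    (hs : ∀ σ : ℝ, 0 < σ → Summable fun i => u i * Real.exp (-(σ * l i))) {σ : ℝ} (hσ : 0 < σ) :
    Summable fun i => u i * l i * Real.exp (-(σ * l i)) := by
  refine Summable.of_nonneg_of_le
    (fun i => mul_nonneg (mul_nonneg (hu i) (hl i)) (Real.exp_pos _).le) (fun i => ?_)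
    ((hs (σ / 2) (by positivity)).mul_left (2 / σ))
  have hlin : l i ≤ 2 / σ * Real.exp (σ / 2 * l i) := by
    rw [div_mul_eq_mul_div, le_div_iff₀ hσ]
    linarith [Real.add_one_le_exp (σ / 2 * l i)]
  calc u i * l i * Real.exp (-(σ * l i))
      ≤ u i * (2 / σ * Real.exp (σ / 2 * l i)) * Real.exp (-(σ * l i)) :=
        mul_le_mul_of_nonneg_right (mul_le_mul_of_nonneg_left hlin (hu i)) (Real.exp_pos _).le
    _ = 2 / σ * (u i * (Real.exp (σ / 2 * l i) * Real.exp (-(σ * l i)))) := by ring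
    _ = 2 / σ * (u i * Real.exp (-(σ / 2 * l i))) := by
        rw [← Real.exp_add]
        ring_nf

lemma tsum_mul_exp_sub_le (hu : ∀ i, 0 ≤ u i) (hl : ∀ i, 0 ≤ l i)
    (hs : ∀ σ : ℝ, 0 < σ → Summable fun i => u i * Real.exp (-(σ * l i))) {σ c : ℝ} (hσ : 0 < σ)
    (hc : 0 < c) :
    (∑' i, u i * Real.exp (-(σ * l i))) - ∑' i, u i * Real.exp (-(c * σ * l i))
      ≤ (c - 1) * (σ * ∑' i, u i * l i * Real.exp (-(σ * l i))) := by
  rw [← (hs σ hσ).tsum_sub (hs (c * σ) (by positivity)), ← tsum_mul_left, ← tsum_mul_left]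
  refine Summable.tsum_le_tsum (fun i => ?_) ((hs σ hσ).sub (hs (c * σ) (by positivity)))
    (((summable_mul_mul_exp hu hl hs hσ).mul_left _).mul_left _)
  have hexp : Real.exp (-(c * σ * l i))
      = Real.exp (-((c - 1) * σ * l i)) * Real.exp (-(σ * l i)) := by
    rw [← Real.exp_add]
    ring_nf
  have htangent := Real.add_one_le_exp (-((c - 1) * σ * l i))
  have hnonneg : 0 ≤ u i * Real.exp (-(σ * l i)) := mul_nonneg (hu i) (Real.exp_pos _).le
  rw [hexp]
  nlinarith [mul_nonneg hnonneg (sub_nonneg.2 htangent)]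

lemma tendsto_mul_log_div_sub_one (δ : ℝ) :
    Tendsto (fun c : ℝ => δ * Real.log c / (c - 1)) (𝓝[≠] 1) (𝓝 δ) := by
  have h := (hasDerivAt_iff_tendsto_slope.1 (Real.hasDerivAt_log one_ne_zero)).const_mul δ
  simp only [inv_one, mul_one] at h
  refine h.congr fun c => ?_
  rw [slope_def_field, Real.log_one, sub_zero, mul_div_assoc]

variable {F H : ℝ → ℝ}

lemma tendsto_sub_comp_const_mul
    (hF : Tendsto (fun σ : ℝ => F σ + δ * Real.log σ) (𝓝[>] 0) (𝓝 C)) {c : ℝ} (hc : 0 < c) :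
    Tendsto (fun σ => F σ - F (c * σ)) (𝓝[>] 0) (𝓝 (δ * Real.log c)) := by
  have h := (hF.sub (hF.comp (tendsto_const_mul_nhdsGT_zero hc))).add_const (δ * Real.log c)
  rw [sub_self, zero_add] at h
  refine h.congr' ?_
  filter_upwards [self_mem_nhdsWithin] with σ hσ
  rw [Function.comp_apply, Real.log_mul hc.ne' (ne_of_gt hσ)]
  ring

-- Take `c` slightly above `1` for the lower bound and slightly below `1` for the upper one.
lemma tendsto_of_sub_comp_const_mul_le
    (hF : Tendsto (fun σ : ℝ => F σ + δ * Real.log σ) (𝓝[>] 0) (𝓝 C))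
    (hle : ∀ {σ c : ℝ}, 0 < σ → 0 < c → F σ - F (c * σ) ≤ (c - 1) * H σ) :
    Tendsto H (𝓝[>] 0) (𝓝 δ) := by
  rw [tendsto_order]
  constructor <;> intro a ha
  · obtain ⟨c, hca, hc⟩ := ((((tendsto_mul_log_div_sub_one δ).mono_left
      (nhdsGT_le_nhdsNE 1)).eventually_const_lt ha).and self_mem_nhdsWithin).exists
    have hc1 : 1 < c := hc
    rw [lt_div_iff₀ (by linarith)] at hca
    filter_upwards [(tendsto_sub_comp_const_mul hF (by linarith : 0 < c)).eventually_const_lt hca,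
      self_mem_nhdsWithin] with σ h hσ
    nlinarith [hle (Set.mem_Ioi.1 hσ) (by linarith : 0 < c)]
  · obtain ⟨c, ⟨hca, hc⟩, hc0⟩ := (((((tendsto_mul_log_div_sub_one δ).mono_left
      (nhdsLT_le_nhdsNE 1)).eventually_lt_const ha).and self_mem_nhdsWithin).and
      (mem_nhdsWithin_of_mem_nhds (lt_mem_nhds (zero_lt_one' ℝ)))).exists
    have hc1 : c < 1 := hc
    rw [div_lt_iff_of_neg (by linarith)] at hca
    filter_upwards [(tendsto_sub_comp_const_mul hF hc0).eventually_const_lt hca,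
      self_mem_nhdsWithin] with σ h hσ
    nlinarith [hle (Set.mem_Ioi.1 hσ) hc0]

theorem tendsto_mul_tsum_mul_exp (hu : ∀ i, 0 ≤ u i) (hl : ∀ i, 0 ≤ l i)
    (hs : ∀ σ : ℝ, 0 < σ → Summable fun i => u i * Real.exp (-(σ * l i)))
    (hlim : Tendsto (fun σ : ℝ => (∑' i, u i * Real.exp (-(σ * l i))) + δ * Real.log σ)
      (𝓝[>] 0) (𝓝 C)) :
    Tendsto (fun σ : ℝ => σ * ∑' i, u i * l i * Real.exp (-(σ * l i))) (𝓝[>] 0) (𝓝 δ) :=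
  tendsto_of_sub_comp_const_mul_le hlim (tsum_mul_exp_sub_le hu hl hs)

end LaplaceDerivative

section DirichletAsymptotic

open ArithmeticFunction

lemma natCast_rpow_neg_one_add {σ : ℝ} (hσ : 0 < σ) (n : ℕ) :
    (n : ℝ) ^ (-(1 + σ)) = (n : ℝ)⁻¹ * Real.exp (-(σ * Real.log n)) := by
  rcases Nat.eq_zero_or_pos n with rfl | hn
  · rw [Nat.cast_zero, inv_zero, zero_mul]
    exact Real.zero_rpow (by linarith)
  · have hn' : (0 : ℝ) < n := by exact_mod_cast hn
    rw [Real.rpow_def_of_pos hn', ← Real.exp_log (inv_pos.2 hn'), ← Real.exp_add, Real.log_inv]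
    ring_nf

/-- The Dirichlet series of the nonnegative function `w` converges on `s > 1` and is asymptotic to
`C (s - 1)^(-ρ)` as `s → 1⁺`. -/
structure HasDirichletAsymptotic (w : ℕ → ℝ) (ρ C : ℝ) : Prop where
  nonneg (n : ℕ) : 0 ≤ w n
  summable {σ : ℝ} (hσ : 0 < σ) : Summable fun n : ℕ => w n * (n : ℝ) ^ (-(1 + σ))
  tendsto : Tendsto (fun σ : ℝ => σ ^ ρ * dirichletSum w σ) (𝓝[>] 0) (𝓝 C)

variable {w : ℕ → ℝ} {δ : ℝ}

lemma HasDirichletAsymptotic.hasLaplaceAsymptotic {ρ C : ℝ} (h : HasDirichletAsymptotic w ρ C) :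
    HasLaplaceAsymptotic (fun n => w n * (n : ℝ)⁻¹) (fun n => Real.log n) ρ C where
  nonneg n := mul_nonneg (h.nonneg n) (by positivity)
  exponent_nonneg n := Real.log_natCast_nonneg n
  summable hσ := (h.summable hσ).congr fun n => by rw [natCast_rpow_neg_one_add hσ, mul_assoc]
  tendsto := by
    refine h.tendsto.congr' ?_
    filter_upwards [self_mem_nhdsWithin] with σ hσ
    simp only [dirichletSum, natCast_rpow_neg_one_add hσ, mul_assoc]

lemma HasLogDensity.nonneg (hw : ∀ n, 0 ≤ w n) (h : HasLogDensity w δ) : 0 ≤ δ := by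
  obtain ⟨C, hC⟩ := h
  by_contra! hδ
  have htop : Tendsto (fun σ : ℝ => δ * Real.log σ) (𝓝[>] 0) atTop :=
    Real.tendsto_log_nhdsGT_zero.const_mul_atBot_of_neg hδ
  refine not_tendsto_nhds_of_tendsto_atTop (tendsto_atTop_mono (fun σ => ?_) htop) C hC
  exact le_add_of_nonneg_left (tsum_nonneg fun p => mul_nonneg (hw p) (by positivity))

lemma HasLogDensity.tendsto_mul_primeSum_mul_log {B : ℝ} (hw : ∀ n, 0 ≤ w n)
    (hwB : ∀ p : Nat.Primes, |w p| ≤ B) (h : HasLogDensity w δ) :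
    Tendsto (fun σ : ℝ => σ * primeSum (fun p => w p * Real.log p) σ) (𝓝[>] 0) (𝓝 δ) := by
  obtain ⟨C, hC⟩ := h
  have hterm {σ : ℝ} (hσ : 0 < σ) (p : Nat.Primes) : w p * (p : ℝ) ^ (-(1 + σ))
      = w p * (p : ℝ)⁻¹ * Real.exp (-(σ * Real.log p)) := by
    rw [natCast_rpow_neg_one_add hσ, mul_assoc]
  refine (tendsto_mul_tsum_mul_exp (u := fun p : Nat.Primes => w p * (p : ℝ)⁻¹)
    (l := fun p => Real.log p) (C := C) (fun p => mul_nonneg (hw p) (by positivity))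
    (fun p => Real.log_natCast_nonneg p)
    (fun σ hσ => (summable_primes_mul_rpow hwB hσ).congr (hterm hσ)) ?_).congr' ?_
  · refine hC.congr' ?_
    filter_upwards [self_mem_nhdsWithin] with σ hσ
    simp only [primeSum, hterm hσ]
  · filter_upwards [self_mem_nhdsWithin] with σ hσ
    rw [primeSum]
    refine congrArg (σ * ·) (tsum_congr fun p => ?_)
    rw [natCast_rpow_neg_one_add hσ]
    ring

lemma dirichletSum_eq_primeSum_add {σ : ℝ}
    (hs : Summable fun n : ℕ => w n * (n : ℝ) ^ (-(1 + σ))) :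
    dirichletSum w σ = primeSum w σ + dirichletSum ({n | n.Prime}ᶜ.indicator w) σ := by
  rw [dirichletSum, ← hs.tsum_subtype_add_tsum_subtype_compl {n : ℕ | n.Prime},
    tsum_subtype {n : ℕ | n.Prime}ᶜ fun n => w n * (n : ℝ) ^ (-(1 + σ))]
  exact congrArg (primeSum w σ + ·) (tsum_congr fun n => Set.indicator_mul_left _ _ _)

lemma summable_log_mul_rpow {σ : ℝ} (hσ : 0 < σ) :
    Summable fun n : ℕ => Real.log n * (n : ℝ) ^ (-(1 + σ)) := by
  refine (summable_mul_mul_exp (u := fun n : ℕ => (n : ℝ)⁻¹) (l := fun n : ℕ => Real.log n)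
    (fun n => by positivity) Real.log_natCast_nonneg (fun τ hτ => ?_) hσ).congr fun n => ?_
  · simpa only [natCast_rpow_neg_one_add hτ] using
      Real.summable_nat_rpow.2 (by linarith : -(1 + τ) < -1)
  · rw [natCast_rpow_neg_one_add hσ]
    ring

lemma summable_indicator_not_prime_vonMangoldt_mul_inv :
    Summable fun n : ℕ => {n : ℕ | n.Prime}ᶜ.indicator (fun n => Λ n) n * (n : ℝ)⁻¹ := by
  refine (vonMangoldt.summable_residueClass_non_primes_div (1 : ZMod 1)).congr fun n => ?_
  rw [div_eq_mul_inv, vonMangoldt.residueClass,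
    Set.indicator_of_mem (show n ∈ {n : ℕ | (n : ZMod 1) = 1} from Subsingleton.elim _ _)]
  by_cases hn : n.Prime <;> simp [hn]

section

variable (hw : ∀ n, 0 ≤ w n) (hwΛ : ∀ n, w n ≤ Λ n)
include hw hwΛ

lemma summable_mul_rpow_of_le_vonMangoldt {σ : ℝ} (hσ : 0 < σ) :
    Summable fun n : ℕ => w n * (n : ℝ) ^ (-(1 + σ)) :=
  (summable_log_mul_rpow hσ).of_nonneg_of_le (fun n => mul_nonneg (hw n) (by positivity)) fun n =>
    mul_le_mul_of_nonneg_right ((hwΛ n).trans vonMangoldt_le_log) (by positivity)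

-- Proper prime powers contribute a bounded amount, since `∑ Λ(n)/n` over non-primes converges.
lemma tendsto_mul_dirichletSum_not_prime :
    Tendsto (fun σ : ℝ => σ * dirichletSum ({n | n.Prime}ᶜ.indicator w) σ) (𝓝[>] 0) (𝓝 0) := by
  set B := ∑' n : ℕ, {n : ℕ | n.Prime}ᶜ.indicator (fun n => Λ n) n * (n : ℝ)⁻¹
  have hB : Tendsto (fun σ : ℝ => σ * B) (𝓝[>] 0) (𝓝 0) := by
    simpa using ((tendsto_id (α := ℝ) (x := 𝓝 0)).mul_const B).mono_left nhdsWithin_le_nhds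
  have hnonneg (σ : ℝ) (n : ℕ) :
      0 ≤ {n : ℕ | n.Prime}ᶜ.indicator w n * (n : ℝ) ^ (-(1 + σ)) :=
    mul_nonneg (Set.indicator_nonneg (fun n _ => hw n) n) (by positivity)
  refine squeeze_zero' ?_ ?_ hB <;> filter_upwards [self_mem_nhdsWithin] with σ hσ
  · exact mul_nonneg (le_of_lt hσ) (tsum_nonneg (hnonneg σ))
  have hσ' : 0 < σ := hσ
  have hle (n : ℕ) : {n : ℕ | n.Prime}ᶜ.indicator w n * (n : ℝ) ^ (-(1 + σ))
      ≤ {n : ℕ | n.Prime}ᶜ.indicator (fun n => Λ n) n * (n : ℝ)⁻¹ := by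
    have hexp : Real.exp (-(σ * Real.log n)) ≤ 1 :=
      Real.exp_le_one_iff.2 (neg_nonpos.2 (mul_nonneg hσ'.le (Real.log_natCast_nonneg n)))
    rw [natCast_rpow_neg_one_add hσ']
    exact mul_le_mul (Set.indicator_le_indicator (hwΛ n))
      (mul_le_of_le_one_right (by positivity) hexp) (by positivity)
      (Set.indicator_nonneg (fun n _ => vonMangoldt_nonneg) n)
  exact mul_le_mul_of_nonneg_left (Summable.tsum_le_tsum hle
    (summable_indicator_not_prime_vonMangoldt_mul_inv.of_nonneg_of_le (hnonneg σ) hle)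
    summable_indicator_not_prime_vonMangoldt_mul_inv) hσ'.le

end

variable {S : Set ℕ}

lemma HasLogDensity.compl (hS : HasLogDensity (S.indicator 1) δ) :
    HasLogDensity (Sᶜ.indicator 1) (1 - δ) :=
  (hasLogDensity_one.sub hS (A := 1) (by simp) fun p => abs_indicator_one_le S p).congr fun p => by
    by_cases hp : (p : ℕ) ∈ S <;> simp [hp]

theorem exists_hasDirichletAsymptotic_primeSupport (hS : HasLogDensity (S.indicator 1) δ) :
    ∃ C : ℝ, 0 < C ∧ HasDirichletAsymptotic (primeSupport S) δ C := by
  obtain ⟨C, hC, h⟩ := (isModerate_primeSupport S).exists_tendsto_rpow_mul_dirichletSum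
    (hS.congr fun p => (primeSupport_prime S p.2).symm)
  exact ⟨C, hC, primeSupport_nonneg S, (isModerate_primeSupport S).summable_mul_rpow, h⟩

lemma primeSupport_mul_vonMangoldt_nonneg (S : Set ℕ) (n : ℕ) : 0 ≤ primeSupport S n * Λ n :=
  mul_nonneg (primeSupport_nonneg S n) vonMangoldt_nonneg

theorem hasDirichletAsymptotic_primeSupport_mul_vonMangoldt
    (hS : HasLogDensity (S.indicator 1) δ) :
    HasDirichletAsymptotic (fun n => primeSupport S n * Λ n) 1 δ := by
  have hnonneg := primeSupport_mul_vonMangoldt_nonneg S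
  have hle (n : ℕ) : primeSupport S n * Λ n ≤ Λ n :=
    mul_le_of_le_one_left vonMangoldt_nonneg (primeSupport_le_one S n)
  have hsummable {σ : ℝ} (hσ : 0 < σ) := summable_mul_rpow_of_le_vonMangoldt hnonneg hle hσ
  refine ⟨hnonneg, hsummable, ?_⟩
  have hlim := (hS.tendsto_mul_primeSum_mul_log (B := 1)
    (fun n => Set.indicator_nonneg (fun _ _ => zero_le_one) n)
    fun p => abs_indicator_one_le S p).add (tendsto_mul_dirichletSum_not_prime hnonneg hle)
  rw [add_zero] at hlim
  refine hlim.congr' ?_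
  filter_upwards [self_mem_nhdsWithin] with σ hσ
  have hprime : primeSum (fun n => primeSupport S n * Λ n)
      = primeSum (fun p => S.indicator 1 p * Real.log p) :=
    primeSum_congr fun p => by simp only [primeSupport_prime S p.2, vonMangoldt_apply_prime p.2]
  rw [Real.rpow_one, dirichletSum_eq_primeSum_add (hsummable hσ), hprime, mul_add]
  rfl

end DirichletAsymptotic

section SummatoryFunction

open ArithmeticFunction Finset
open scoped ArithmeticFunction.zeta

/-- The summatory function `∑ a(n)`, over the positive integers `n ≤ x`. -/
noncomputable def sumUpTo (a : ℕ → ℝ) (x : ℝ) : ℝ := ∑ n ∈ Ioc 0 ⌊x⌋₊, a n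

/-- The summatory function `∑ a(n) / n`, over the positive integers `n ≤ x`. -/
noncomputable def harmonicSum (a : ℕ → ℝ) (x : ℝ) : ℝ := sumUpTo (fun n => a n * (n : ℝ)⁻¹) x

lemma pos_and_le_of_mem_Ioc_floor {x : ℝ} {n : ℕ} (hn : n ∈ Ioc 0 ⌊x⌋₊) :
    (0 : ℝ) < n ∧ (n : ℝ) ≤ x := by
  rw [mem_Ioc] at hn
  exact ⟨by exact_mod_cast hn.1, (Nat.le_floor_iff' hn.1.ne').1 hn.2⟩

section Nonneg

variable {a : ℕ → ℝ} (ha : ∀ n, 0 ≤ a n)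
include ha

lemma sumUpTo_nonneg (x : ℝ) : 0 ≤ sumUpTo a x := sum_nonneg fun n _ => ha n

lemma harmonicSum_nonneg (x : ℝ) : 0 ≤ harmonicSum a x :=
  sumUpTo_nonneg (fun n => mul_nonneg (ha n) (by positivity)) x

lemma sumUpTo_le_mul_harmonicSum (x : ℝ) : sumUpTo a x ≤ x * harmonicSum a x := by
  rw [harmonicSum, sumUpTo, sumUpTo, mul_sum]
  refine sum_le_sum fun n hn => ?_
  obtain ⟨hn0, hnx⟩ := pos_and_le_of_mem_Ioc_floor hn
  calc a n ≤ a n * (x / n) := le_mul_of_one_le_right (ha n) ((one_le_div hn0).2 hnx)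
    _ = x * (a n * (n : ℝ)⁻¹) := by ring

end Nonneg

lemma sumUpTo_mul (a b : ArithmeticFunction ℝ) (x : ℝ) :
    sumUpTo (a * b : ArithmeticFunction ℝ) x = sumUpTo (fun d => a d * sumUpTo b (x / d)) x := by
  rw [sumUpTo, sum_Ioc_mul_eq_sum_sum]
  refine sum_congr rfl fun d _ => ?_
  simp only [sumUpTo, Nat.floor_div_natCast]

lemma sumUpTo_zeta (x : ℝ) : sumUpTo (ζ : ArithmeticFunction ℝ) x = ⌊x⌋₊ := by
  rw [sumUpTo, sum_congr rfl fun n hn => show (ζ : ArithmeticFunction ℝ) n = 1 by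
    simp [natCoe_apply, zeta_apply, (mem_Ioc.1 hn).1.ne']]
  simp

lemma abs_sumUpTo_mul_zeta_sub_le {a : ArithmeticFunction ℝ} (ha : ∀ n, 0 ≤ a n) {x : ℝ}
    (hx : 0 ≤ x) :
    |sumUpTo (a * ζ : ArithmeticFunction ℝ) x - x * harmonicSum a x| ≤ sumUpTo a x := by
  rw [sumUpTo_mul, harmonicSum, sumUpTo, sumUpTo, sumUpTo, mul_sum, ← sum_sub_distrib]
  refine (abs_sum_le_sum_abs _ _).trans (sum_le_sum fun n _ => ?_)
  have hxn : 0 ≤ x / n := div_nonneg hx (Nat.cast_nonneg n)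
  have hfloor : |(⌊x / n⌋₊ : ℝ) - x / n| ≤ 1 := by
    rw [abs_le]
    constructor <;> linarith [Nat.floor_le hxn, Nat.lt_floor_add_one (x / n)]
  calc |a n * sumUpTo (ζ : ArithmeticFunction ℝ) (x / n) - x * (a n * (n : ℝ)⁻¹)|
      = |a n * ((⌊x / n⌋₊ : ℝ) - x / n)| := by
        rw [sumUpTo_zeta]
        ring_nf
    _ = a n * |(⌊x / n⌋₊ : ℝ) - x / n| := by rw [abs_mul, abs_of_nonneg (ha n)]
    _ ≤ a n := mul_le_of_le_one_right (ha n) hfloor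

lemma abs_sumUpTo_mul_le {a b : ArithmeticFunction ℝ} {w : ℕ → ℝ} (haw : ∀ n, |a n| ≤ w n) {c : ℝ}
    (hb : ∀ y, 0 ≤ y → |sumUpTo b y| ≤ c * y) {x : ℝ} (hx : 0 ≤ x) :
    |sumUpTo (a * b : ArithmeticFunction ℝ) x| ≤ c * x * harmonicSum w x := by
  rw [sumUpTo_mul, harmonicSum, sumUpTo, sumUpTo, mul_sum]
  refine (abs_sum_le_sum_abs _ _).trans (sum_le_sum fun n _ => ?_)
  calc |a n * sumUpTo b (x / n)| = |a n| * |sumUpTo b (x / n)| := abs_mul _ _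
    _ ≤ w n * (c * (x / n)) :=
        mul_le_mul (haw n) (hb _ (div_nonneg hx (Nat.cast_nonneg n))) (abs_nonneg _)
          ((abs_nonneg _).trans (haw n))
    _ = c * x * (w n * (n : ℝ)⁻¹) := by ring

lemma abs_sumUpTo_mul_log_sub_le {a : ℕ → ℝ} (ha : ∀ n, 0 ≤ a n) {x ε : ℝ} (hε : 0 < ε) :
    |sumUpTo a x * Real.log x - sumUpTo (fun n => a n * Real.log n) x|
      ≤ ε * (x * harmonicSum a x) - Real.log ε * sumUpTo a x := by
  rw [harmonicSum, sumUpTo, sumUpTo, sumUpTo, sum_mul, mul_sum, mul_sum, mul_sum,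
    ← sum_sub_distrib, ← sum_sub_distrib]
  refine (abs_sum_le_sum_abs _ _).trans (sum_le_sum fun n hn => ?_)
  obtain ⟨hn0, hnx⟩ := pos_and_le_of_mem_Ioc_floor hn
  have hx0 : 0 < x := hn0.trans_le hnx
  have hlog : Real.log ε + (Real.log x - Real.log n) ≤ ε * (x / n) := by
    rw [← Real.log_div hx0.ne' hn0.ne', ← Real.log_mul hε.ne' (by positivity)]
    exact Real.log_le_self (by positivity)
  calc |a n * Real.log x - a n * Real.log n| = a n * (Real.log x - Real.log n) := by
        rw [← mul_sub, abs_of_nonneg (mul_nonneg (ha n) (sub_nonneg.2 (Real.log_le_log hn0 hnx)))]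
    _ ≤ a n * (ε * (x / n) - Real.log ε) := mul_le_mul_of_nonneg_left (by linarith) (ha n)
    _ = ε * (x * (a n * (n : ℝ)⁻¹)) - Real.log ε * a n := by ring

end SummatoryFunction

section ChebyshevIdentity

open ArithmeticFunction Finset
open scoped ArithmeticFunction.zeta ArithmeticFunction.Moebius

lemma abs_log_factorial_sub_le (n : ℕ) : |Real.log n.factorial - n * Real.log n| ≤ n := by
  have hupper : Real.log n.factorial ≤ n * Real.log n := by
    rw [← Real.log_pow]
    exact Real.log_le_log (by positivity) (by exact_mod_cast Nat.factorial_le_pow n)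
  rcases eq_or_ne n 0 with rfl | hn
  · simp
  have hlower := Stirling.le_log_factorial_stirling hn
  have hpi : 0 ≤ Real.log (2 * Real.pi) := Real.log_nonneg (by linarith [Real.pi_gt_three])
  rw [abs_le]
  constructor <;> linarith [Real.log_natCast_nonneg n, n.cast_nonneg (α := ℝ)]

lemma sum_log_eq_log_factorial (n : ℕ) : ∑ k ∈ Ioc 0 n, Real.log k = Real.log n.factorial := by
  induction n with
  | zero => simp
  | succ n ih =>
    rw [sum_Ioc_succ_top (Nat.zero_le n), ih, Nat.factorial_succ, Nat.cast_mul,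
      Real.log_mul (by positivity) (by positivity), add_comm]

lemma sum_Ioc_inv_eq_harmonic (n : ℕ) : ∑ k ∈ Ioc 0 n, (k : ℝ)⁻¹ = harmonic n := by
  rw [harmonic_eq_sum_Icc]
  push_cast
  rfl

lemma abs_sum_natCast_div_sub_le (n : ℕ) :
    |∑ k ∈ Ioc 0 n, ((n / k : ℕ) : ℝ) - n * Real.log n| ≤ n := by
  have hupper : ∑ k ∈ Ioc 0 n, ((n / k : ℕ) : ℝ) ≤ n * harmonic n := by
    rw [← sum_Ioc_inv_eq_harmonic, mul_sum]
    exact sum_le_sum fun k _ => Nat.cast_div_le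
  have hlower : n * (harmonic n : ℝ) - n ≤ ∑ k ∈ Ioc 0 n, ((n / k : ℕ) : ℝ) := by
    calc n * (harmonic n : ℝ) - n = ∑ k ∈ Ioc 0 n, ((n : ℝ) * (k : ℝ)⁻¹ - 1) := by
          simp [sum_sub_distrib, ← mul_sum, sum_Ioc_inv_eq_harmonic]
      _ ≤ ∑ k ∈ Ioc 0 n, ((n / k : ℕ) : ℝ) := sum_le_sum fun k _ => by
          rw [← div_eq_mul_inv, sub_le_iff_le_add, ← Nat.floor_div_eq_div (K := ℝ)]
          exact (Nat.lt_floor_add_one _).le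
  have hlog : Real.log n ≤ harmonic n := by
    simpa using log_le_harmonic_floor n n.cast_nonneg
  rw [abs_le]
  constructor <;> nlinarith [harmonic_le_one_add_log n, n.cast_nonneg (α := ℝ)]

lemma abs_sumUpTo_log_sub_zeta_mul_zeta_le {x : ℝ} (hx : 0 ≤ x) :
    |sumUpTo (log - ζ * ζ : ArithmeticFunction ℝ) x| ≤ 2 * x := by
  have hsplit : sumUpTo (log - ζ * ζ : ArithmeticFunction ℝ) x
      = Real.log ⌊x⌋₊.factorial - sumUpTo (ζ * ζ : ArithmeticFunction ℝ) x := by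
    rw [← sum_log_eq_log_factorial, sumUpTo, sumUpTo, ← sum_sub_distrib]
    rfl
  have hdivisors : sumUpTo (ζ * ζ : ArithmeticFunction ℝ) x
      = ∑ k ∈ Ioc 0 ⌊x⌋₊, ((⌊x⌋₊ / k : ℕ) : ℝ) := by
    rw [sumUpTo_mul]
    refine sum_congr rfl fun k hk => ?_
    simp [sumUpTo_zeta, Nat.floor_div_natCast, natCoe_apply, zeta_apply, (mem_Ioc.1 hk).1.ne']
  have hfactorial := abs_le.1 (abs_log_factorial_sub_le ⌊x⌋₊)
  have hdiv := abs_le.1 (abs_sum_natCast_div_sub_le ⌊x⌋₊)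
  have hfloor : (⌊x⌋₊ : ℝ) ≤ x := Nat.floor_le hx
  rw [hsplit, hdivisors, abs_le]
  constructor <;> linarith

variable (S : Set ℕ)

/-- The sum `∑ Λ(d)` over the factorizations `d n ≤ x` with `d` supported on `S` and `n` free of
primes of `S`: the term of Chebyshev's identity `log = Λ * 1` that is fed back into the count of
the `n`. -/
noncomputable def chebyshevSum (x : ℝ) : ℝ :=
  sumUpTo (fun d => primeSupport S d * Λ d * sumUpTo (primeSupport Sᶜ) (x / d)) x

lemma chebyshevSum_nonneg (x : ℝ) : 0 ≤ chebyshevSum S x :=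
  sumUpTo_nonneg (fun n => mul_nonneg (primeSupport_mul_vonMangoldt_nonneg S n)
    (sumUpTo_nonneg (primeSupport_nonneg _) _)) x

lemma sumUpTo_primeSupport_compl_mul_log (x : ℝ) :
    sumUpTo (fun n => primeSupport Sᶜ n * Real.log n) x
      = sumUpTo ((primeSupport S).pmul μ * (log - ζ * ζ) : ArithmeticFunction ℝ) x
        + sumUpTo (primeSupport Sᶜ * ζ : ArithmeticFunction ℝ) x - chebyshevSum S x := by
  have hchebyshev : chebyshevSum S x
      = sumUpTo ((primeSupport S).pmul Λ * primeSupport Sᶜ : ArithmeticFunction ℝ) x := by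
    rw [sumUpTo_mul]
    rfl
  rw [hchebyshev, sumUpTo, sumUpTo, sumUpTo, sumUpTo, ← sum_add_distrib, ← sum_sub_distrib]
  refine sum_congr rfl fun n _ => ?_
  have h := DFunLike.congr_fun (primeSupport_compl_pmul_log S) n
  rw [pmul_apply, log_apply] at h
  rw [h]
  simp only [sub_eq_add_neg, ArithmeticFunction.add_apply, ArithmeticFunction.neg_apply]

lemma abs_pmul_moebius_le (n : ℕ) :
    |(primeSupport S).pmul (μ : ArithmeticFunction ℝ) n| ≤ primeSupport S n := by
  rw [pmul_apply, abs_mul, abs_of_nonneg (primeSupport_nonneg S n), intCoe_apply]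
  exact mul_le_of_le_one_right (primeSupport_nonneg S n) (by exact_mod_cast abs_moebius_le_one)

lemma abs_sumUpTo_primeSupport_compl_mul_log_sub_le {x : ℝ} (hx : 0 ≤ x) :
    |sumUpTo (fun n => primeSupport Sᶜ n * Real.log n) x
      - x * harmonicSum (primeSupport Sᶜ) x + chebyshevSum S x|
    ≤ sumUpTo (primeSupport Sᶜ) x + 2 * x * harmonicSum (primeSupport S) x := by
  have hzeta := abs_sumUpTo_mul_zeta_sub_le (primeSupport_nonneg Sᶜ) hx
  have hmoebius := abs_sumUpTo_mul_le (abs_pmul_moebius_le S)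
    (fun _ => abs_sumUpTo_log_sub_zeta_mul_zeta_le) hx
  rw [abs_le] at hzeta hmoebius ⊢
  rw [sumUpTo_primeSupport_compl_mul_log]
  constructor <;> linarith

lemma abs_mul_log_sub_add_chebyshevSum_le {x ε : ℝ} (hx : 0 ≤ x) (hε : 0 < ε) :
    |sumUpTo (primeSupport Sᶜ) x * Real.log x
      - x * harmonicSum (primeSupport Sᶜ) x + chebyshevSum S x|
    ≤ 2 * x * harmonicSum (primeSupport S) x + ε * (x * harmonicSum (primeSupport Sᶜ) x)
      + (1 - Real.log ε) * sumUpTo (primeSupport Sᶜ) x := by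
  have hidentity := abs_sumUpTo_primeSupport_compl_mul_log_sub_le S hx
  have hlog := abs_sumUpTo_mul_log_sub_le (primeSupport_nonneg Sᶜ) hε (x := x)
  rw [abs_le] at hidentity hlog ⊢
  constructor <;> linarith

section LargeDivisors

variable {a : ℕ → ℝ} (ha : ∀ n, 0 ≤ a n) {x y z : ℝ}
include ha

lemma sum_vonMangoldt_mul_sumUpTo_le (hz : 0 ≤ z) (hxyz : x ≤ y * z) :
    ∑ d ∈ Ioc 0 ⌊x⌋₊ with y < (d : ℕ), Λ d * sumUpTo a (x / d)
      ≤ sumUpTo (fun m => a m * Chebyshev.psi (x / m)) z := by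
  calc ∑ d ∈ Ioc 0 ⌊x⌋₊ with y < (d : ℕ), Λ d * sumUpTo a (x / d)
      = ∑ d ∈ Ioc 0 ⌊x⌋₊ with y < (d : ℕ), ∑ m ∈ Ioc 0 ⌊z⌋₊ with m ∈ Ioc 0 ⌊x / d⌋₊,
          Λ d * a m := by
        refine sum_congr rfl fun d hd => ?_
        rw [mem_filter] at hd
        have hsub : Ioc 0 ⌊x / d⌋₊ ⊆ Ioc 0 ⌊z⌋₊ := by
          refine Ioc_subset_Ioc_right (Nat.floor_le_floor ?_)
          rw [div_le_iff₀ (pos_and_le_of_mem_Ioc_floor hd.1).1]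
          nlinarith [hd.2]
        rw [filter_mem_eq_inter, inter_eq_right.2 hsub, ← mul_sum, sumUpTo]
    _ = ∑ m ∈ Ioc 0 ⌊z⌋₊,
          ∑ d ∈ Ioc 0 ⌊x⌋₊ with y < (d : ℕ) ∧ m ∈ Ioc 0 ⌊x / d⌋₊, Λ d * a m :=
        sum_comm' fun d m => by simp only [mem_filter]; tauto
    _ ≤ ∑ m ∈ Ioc 0 ⌊z⌋₊, a m * Chebyshev.psi (x / m) := by
        refine sum_le_sum fun m hm => ?_
        rw [Chebyshev.psi, mul_sum]
        refine (sum_le_sum_of_subset_of_nonneg (fun d hd => ?_) fun d _ _ =>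
          mul_nonneg vonMangoldt_nonneg (ha m)).trans (sum_le_sum fun d _ => (mul_comm _ _).le)
        obtain ⟨hdx, -, hmd⟩ := mem_filter.1 hd
        have hm0 := (pos_and_le_of_mem_Ioc_floor hm).1
        have hmd' := (pos_and_le_of_mem_Ioc_floor hmd).2
        rw [le_div_iff₀ (pos_and_le_of_mem_Ioc_floor hdx).1, mul_comm, ← le_div_iff₀ hm0] at hmd'
        exact mem_Ioc.2 ⟨(mem_Ioc.1 hdx).1, Nat.le_floor hmd'⟩

lemma sum_vonMangoldt_mul_sumUpTo_le_harmonicSum (hx : 0 ≤ x) (hz : 0 ≤ z) (hxyz : x ≤ y * z) :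
    ∑ d ∈ Ioc 0 ⌊x⌋₊ with y < (d : ℕ), Λ d * sumUpTo a (x / d)
      ≤ (Real.log 4 + 4) * x * harmonicSum a z := by
  refine (sum_vonMangoldt_mul_sumUpTo_le ha hz hxyz).trans ?_
  rw [harmonicSum, sumUpTo, sumUpTo, mul_sum]
  refine sum_le_sum fun m _ => ?_
  calc a m * Chebyshev.psi (x / m) ≤ a m * ((Real.log 4 + 4) * (x / m)) :=
        mul_le_mul_of_nonneg_left
          (Chebyshev.psi_le_const_mul_self (div_nonneg hx (Nat.cast_nonneg m))) (ha m)
    _ = (Real.log 4 + 4) * x * (a m * (m : ℝ)⁻¹) := by ring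

end LargeDivisors

end ChebyshevIdentity

section Tauberian

open Finset

lemma tendsto_inv_log_nhdsGT : Tendsto (fun x : ℝ => (Real.log x)⁻¹) atTop (𝓝[>] 0) :=
  tendsto_inv_atTop_nhdsGT_zero.comp Real.tendsto_log_atTop

lemma tsum_ite_log_le_eq_sumUpTo {a : ℕ → ℝ} (ha0 : a 0 = 0) (φ : ℝ → ℝ) {x b : ℝ} (hx : 1 < x) :
    (∑' n : ℕ, if (Real.log x)⁻¹ * Real.log n ≤ b then a n * φ ((Real.log x)⁻¹ * Real.log n) else 0)
      = sumUpTo (fun n => a n * φ ((Real.log x)⁻¹ * Real.log n)) (x ^ b) := by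
  have hx0 : 0 < x := by linarith
  have hle {n : ℕ} (hn : 0 < n) : (Real.log x)⁻¹ * Real.log n ≤ b ↔ n ≤ ⌊x ^ b⌋₊ := by
    rw [Nat.le_floor_iff (by positivity), inv_mul_le_iff₀ (Real.log_pos hx),
      Real.le_rpow_iff_log_le (by exact_mod_cast hn) hx0, mul_comm]
  rw [tsum_eq_sum (s := Ioc 0 ⌊x ^ b⌋₊)]
  · refine sum_congr rfl fun n hn => ?_
    rw [mem_Ioc] at hn
    rw [if_pos ((hle hn.1).2 hn.2)]
  · intro n hn
    rcases Nat.eq_zero_or_pos n with rfl | hn0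
    · simp [ha0]
    · rw [if_neg fun h => hn (mem_Ioc.2 ⟨hn0, (hle hn0).1 h⟩)]

-- Rankin's trick: `1 ≤ e · n^(-1 / log x)` for `n ≤ x`.
lemma harmonicSum_le_exp_one_mul_dirichletSum {w : ℕ → ℝ} (hw : ∀ n, 0 ≤ w n) {x : ℝ} (hx : 1 < x)
    (hs : Summable fun n : ℕ => w n * (n : ℝ) ^ (-(1 + (Real.log x)⁻¹))) :
    harmonicSum w x ≤ Real.exp 1 * dirichletSum w (Real.log x)⁻¹ := by
  have hlog := Real.log_pos hx
  refine le_trans ?_ (mul_le_mul_of_nonneg_left (hs.sum_le_tsum (Ioc 0 ⌊x⌋₊)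
    fun n _ => mul_nonneg (hw n) (by positivity)) (Real.exp_pos 1).le)
  rw [mul_sum, harmonicSum, sumUpTo]
  refine sum_le_sum fun n hn => ?_
  obtain ⟨hn0, hnx⟩ := pos_and_le_of_mem_Ioc_floor hn
  have hrankin : 1 ≤ Real.exp 1 * Real.exp (-((Real.log x)⁻¹ * Real.log n)) := by
    rw [← Real.exp_add, Real.one_le_exp_iff, ← sub_eq_add_neg, sub_nonneg, inv_mul_le_iff₀ hlog,
      mul_one]
    exact Real.log_le_log hn0 hnx
  calc w n * (n : ℝ)⁻¹
      ≤ w n * (n : ℝ)⁻¹ * (Real.exp 1 * Real.exp (-((Real.log x)⁻¹ * Real.log n))) :=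
        le_mul_of_one_le_right (mul_nonneg (hw n) (by positivity)) hrankin
    _ = Real.exp 1 * (w n * (n : ℝ) ^ (-(1 + (Real.log x)⁻¹))) := by
        rw [natCast_rpow_neg_one_add (inv_pos.2 hlog)]
        ring

lemma integral_max_rpow {δ η : ℝ} (hη1 : η < 1) (hδ1 : δ < 1) :
    ∫ t in (0 : ℝ)..(1 - η), max (1 - t) η ^ (-δ) = (1 - η ^ (1 - δ)) / (1 - δ) := by
  have hmax : ∫ t in (0 : ℝ)..(1 - η), max (1 - t) η ^ (-δ)
      = ∫ t in (0 : ℝ)..(1 - η), (1 - t) ^ (-δ) := by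
    refine intervalIntegral.integral_congr fun t ht => ?_
    rw [Set.uIcc_of_le (by linarith)] at ht
    simp only [max_eq_left (by linarith [ht.2] : η ≤ 1 - t)]
  rw [hmax, intervalIntegral.integral_comp_sub_left (fun t => t ^ (-δ)) 1, sub_sub_cancel, sub_zero,
    integral_rpow (Or.inl (by linarith)), Real.one_rpow]
  ring_nf

namespace HasDirichletAsymptotic

variable {w : ℕ → ℝ} {ρ C : ℝ}

theorem tendsto_rpow_mul_sumUpTo (h : HasDirichletAsymptotic w ρ C) (hρ : 0 < ρ) {φ : ℝ → ℝ}
    (hφ : Continuous φ) {b : ℝ} (hb : 0 < b) :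
    Tendsto (fun x : ℝ => (Real.log x)⁻¹ ^ ρ *
      sumUpTo (fun n => w n * (n : ℝ)⁻¹ * φ ((Real.log x)⁻¹ * Real.log n)) (x ^ b)) atTop
      (𝓝 (C / Real.Gamma ρ * ∫ t in (0 : ℝ)..b, t ^ (ρ - 1) * φ t)) := by
  refine ((h.hasLaplaceAsymptotic.karamata hρ hφ hb).comp tendsto_inv_log_nhdsGT).congr' ?_
  filter_upwards [eventually_gt_atTop 1] with x hx
  rw [Function.comp_apply, tsum_ite_log_le_eq_sumUpTo (by simp) φ hx]

theorem tendsto_harmonicSum_div (h : HasDirichletAsymptotic w ρ C) (hρ : 0 < ρ) :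
    Tendsto (fun x : ℝ => harmonicSum w x / Real.log x ^ ρ) atTop
      (𝓝 (C / Real.Gamma (ρ + 1))) := by
  have hlim := h.tendsto_rpow_mul_sumUpTo hρ (continuous_const (y := (1 : ℝ))) one_pos
  have hconst : C / Real.Gamma ρ * ∫ t in (0 : ℝ)..1, t ^ (ρ - 1) * 1
      = C / Real.Gamma (ρ + 1) := by
    simp only [mul_one]
    rw [integral_rpow (Or.inl (by linarith)), Real.Gamma_add_one hρ.ne', sub_add_cancel,
      Real.one_rpow, Real.zero_rpow hρ.ne']
    field_simp
    ring
  rw [hconst] at hlim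
  refine hlim.congr' ?_
  filter_upwards [eventually_gt_atTop 1] with x hx
  simp only [Real.rpow_one, mul_one]
  rw [Real.inv_rpow (Real.log_pos hx).le, ← div_eq_inv_mul, harmonicSum]

theorem tendsto_harmonicSum_div_zero (h : HasDirichletAsymptotic w ρ C) {τ : ℝ} (hτ : ρ < τ) :
    Tendsto (fun x : ℝ => harmonicSum w x / Real.log x ^ τ) atTop (𝓝 0) := by
  have hpow : Tendsto (fun x : ℝ => (Real.log x)⁻¹ ^ (τ - ρ)) atTop (𝓝 0) := by
    have hcont := (Real.continuousAt_rpow_const 0 (τ - ρ) (Or.inr (by linarith))).tendsto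
    rw [Real.zero_rpow (by linarith)] at hcont
    exact hcont.comp (tendsto_inv_log_nhdsGT.mono_right nhdsWithin_le_nhds)
  have hbound := ((h.tendsto.comp tendsto_inv_log_nhdsGT).mul hpow).const_mul (Real.exp 1)
  rw [mul_zero, mul_zero] at hbound
  refine squeeze_zero' ?_ ?_ hbound <;> filter_upwards [eventually_gt_atTop 1] with x hx
  · exact div_nonneg (harmonicSum_nonneg h.nonneg x) (Real.rpow_nonneg (Real.log_pos hx).le _)
  have hlog := Real.log_pos hx
  have hσ : 0 < (Real.log x)⁻¹ := inv_pos.2 hlog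
  have hsplit : (Real.log x ^ τ)⁻¹ = (Real.log x)⁻¹ ^ ρ * (Real.log x)⁻¹ ^ (τ - ρ) := by
    rw [← Real.rpow_add hσ, Real.inv_rpow hlog.le, add_sub_cancel]
  calc harmonicSum w x / Real.log x ^ τ
      ≤ Real.exp 1 * dirichletSum w (Real.log x)⁻¹ / Real.log x ^ τ :=
        div_le_div_of_nonneg_right
          (harmonicSum_le_exp_one_mul_dirichletSum h.nonneg hx (h.summable hσ)) (by positivity)
    _ = Real.exp 1 * ((Real.log x)⁻¹ ^ ρ * dirichletSum w (Real.log x)⁻¹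
          * (Real.log x)⁻¹ ^ (τ - ρ)) := by
        rw [div_eq_mul_inv, hsplit]
        ring

theorem tendsto_sumUpTo_mul_max_rpow (h : HasDirichletAsymptotic w 1 C) {δ η : ℝ} (hδ1 : δ < 1)
    (hη : 0 < η) (hη1 : η < 1) :
    Tendsto (fun x : ℝ => (Real.log x)⁻¹ * sumUpTo (fun d => w d * (d : ℝ)⁻¹
      * max (1 - (Real.log x)⁻¹ * Real.log d) η ^ (-δ)) (x ^ (1 - η))) atTop
      (𝓝 (C / (1 - δ) * (1 - η ^ (1 - δ)))) := by
  have hφ : Continuous fun t : ℝ => max (1 - t) η ^ (-δ) :=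
    Continuous.rpow_const (by fun_prop) fun t => Or.inl (ne_of_gt (lt_max_of_lt_right hη))
  have hlim := h.tendsto_rpow_mul_sumUpTo one_pos hφ (sub_pos.2 hη1)
  simp only [sub_self, Real.rpow_zero, one_mul, Real.rpow_one, Real.Gamma_one, div_one,
    integral_max_rpow hη1 hδ1] at hlim
  convert hlim using 2
  ring

end HasDirichletAsymptotic

end Tauberian

section Contraction

variable {α : Type*} {l : Filter α} {θ B : ℝ}

lemma tendsto_zero_of_contraction {h : α → ℝ} (hθ0 : 0 ≤ θ) (hθ1 : θ < 1)
    (hB : ∀ᶠ x in l, |h x| ≤ B)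
    (hcontr : ∀ e : ℝ, 0 ≤ e → (∀ᶠ x in l, |h x| ≤ e) →
      ∀ ε : ℝ, 0 < ε → ∀ᶠ x in l, |h x| ≤ θ * e + ε) :
    Tendsto h l (𝓝 0) := by
  set q := (1 + θ) / 2 with hq
  have hiter (n : ℕ) : ∀ᶠ x in l, |h x| ≤ q ^ n * (|B| + 1) := by
    induction n with
    | zero =>
      filter_upwards [hB] with x hx
      rw [pow_zero, one_mul]
      linarith [le_abs_self B]
    | succ n ih =>
      have hpos : 0 < q ^ n * (|B| + 1) := by positivity
      filter_upwards [hcontr _ hpos.le ih ((1 - θ) / 2 * (q ^ n * (|B| + 1)))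
        (mul_pos (by linarith) hpos)] with x hx
      refine hx.trans_eq ?_
      rw [pow_succ, hq]
      ring
  have hlim : Tendsto (fun n : ℕ => q ^ n * (|B| + 1)) atTop (𝓝 0) := by
    have hpow := tendsto_pow_atTop_nhds_zero_of_lt_one (by positivity : 0 ≤ q) (by linarith)
    simpa only [zero_mul] using hpow.mul_const (|B| + 1)
  rw [Metric.tendsto_nhds]
  intro ε hε
  obtain ⟨n, hn⟩ := (hlim.eventually_lt_const hε).exists
  filter_upwards [hiter n] with x hx
  rw [Real.dist_eq, sub_zero]
  exact hx.trans_lt hn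

lemma tendsto_of_tendsto_add_of_contraction {f k : α → ℝ} {r : ℝ} (hθ0 : 0 ≤ θ) (hθ1 : θ < 1)
    (hB : ∀ᶠ x in l, |f x| ≤ B) (hsum : Tendsto (fun x => f x + k x) l (𝓝 (r + θ * r)))
    (hk : ∀ e : ℝ, 0 ≤ e → (∀ᶠ x in l, |f x - r| ≤ e) →
      ∀ ε : ℝ, 0 < ε → ∀ᶠ x in l, |k x - θ * r| ≤ θ * e + ε) :
    Tendsto f l (𝓝 r) := by
  have hbound : ∀ᶠ x in l, |f x - r| ≤ B + |r| := by
    filter_upwards [hB] with x hx using (abs_sub _ _).trans (by gcongr)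
  rw [← tendsto_sub_nhds_zero_iff]
  refine tendsto_zero_of_contraction hθ0 hθ1 hbound fun e he hev ε hε => ?_
  filter_upwards [hk e he hev (ε / 2) (half_pos hε),
    Metric.tendsto_nhds.1 hsum (ε / 2) (half_pos hε)] with x hkx hsumx
  rw [Real.dist_eq, abs_lt] at hsumx
  rw [abs_le] at hkx ⊢
  constructor <;> linarith [hkx.1, hkx.2, hsumx.1, hsumx.2]

end Contraction

section CountRatio

variable (S : Set ℕ) (δ : ℝ)

/-- The count of the `n ≤ x` without prime factors in `S`, normalized by `x / (log x) ^ δ`. -/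
noncomputable def countRatio (x : ℝ) : ℝ := sumUpTo (primeSupport Sᶜ) x * Real.log x ^ δ / x

/-- The sum `chebyshevSum S x`, normalized by the factor `x (log x) ^ (1 - δ)` that makes it
comparable with `countRatio S δ x` in Chebyshev's identity. -/
noncomputable def chebyshevRatio (x : ℝ) : ℝ := chebyshevSum S x / (x * Real.log x ^ (1 - δ))

lemma countRatio_nonneg {x : ℝ} (hx : 1 ≤ x) : 0 ≤ countRatio S δ x :=
  div_nonneg (mul_nonneg (sumUpTo_nonneg (primeSupport_nonneg _) _)
    (Real.rpow_nonneg (Real.log_nonneg hx) _)) (by linarith)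

lemma chebyshevRatio_nonneg {x : ℝ} (hx : 1 ≤ x) : 0 ≤ chebyshevRatio S δ x :=
  div_nonneg (chebyshevSum_nonneg S x) (mul_nonneg (by linarith)
    (Real.rpow_nonneg (Real.log_nonneg hx) _))

lemma countRatio_eq {x : ℝ} (hx : 1 < x) :
    countRatio S δ x = sumUpTo (primeSupport Sᶜ) x * Real.log x / (x * Real.log x ^ (1 - δ)) := by
  have hlog := Real.log_pos hx
  rw [countRatio, Real.rpow_sub hlog, Real.rpow_one]
  field_simp

lemma abs_countRatio_sub_add_le {x ε : ℝ} (hx : 1 < x) (hε : 0 < ε) :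
    |countRatio S δ x - harmonicSum (primeSupport Sᶜ) x / Real.log x ^ (1 - δ)
        + chebyshevRatio S δ x|
      ≤ 2 * (harmonicSum (primeSupport S) x / Real.log x ^ (1 - δ))
        + ε * (harmonicSum (primeSupport Sᶜ) x / Real.log x ^ (1 - δ))
        + (1 - Real.log ε) * (countRatio S δ x * (Real.log x)⁻¹) := by
  have hx0 : 0 < x := by linarith
  have hlog := Real.log_pos hx
  have hden : 0 < x * Real.log x ^ (1 - δ) := by positivity
  have hidentity := div_le_div_of_nonneg_right
    (abs_mul_log_sub_add_chebyshevSum_le S hx0.le hε) hden.le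
  rw [← abs_of_pos hden, ← abs_div, abs_of_pos hden] at hidentity
  rw [countRatio_eq S δ hx, chebyshevRatio]
  refine (congrArg abs ?_).trans_le (hidentity.trans_eq ?_) <;> field_simp

lemma countRatio_mul_inv_log_le {x : ℝ} (hx : 1 < x) : countRatio S δ x * (Real.log x)⁻¹
    ≤ harmonicSum (primeSupport Sᶜ) x / Real.log x ^ (1 - δ) := by
  have hx0 : 0 < x := by linarith
  have hlog := Real.log_pos hx
  calc countRatio S δ x * (Real.log x)⁻¹
      = sumUpTo (primeSupport Sᶜ) x / x / Real.log x ^ (1 - δ) := by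
        rw [countRatio_eq S δ hx]
        field_simp
    _ ≤ harmonicSum (primeSupport Sᶜ) x / Real.log x ^ (1 - δ) := by
        gcongr
        rw [div_le_iff₀' hx0]
        exact sumUpTo_le_mul_harmonicSum (primeSupport_nonneg _) x

variable {S δ} {c : ℝ}
  (hcompl : Tendsto (fun x => harmonicSum (primeSupport Sᶜ) x / Real.log x ^ (1 - δ)) atTop (𝓝 c))

section Sum

variable
  (hS : Tendsto (fun x => harmonicSum (primeSupport S) x / Real.log x ^ (1 - δ)) atTop (𝓝 0))
include hcompl hS

lemma eventually_countRatio_le : ∀ᶠ x in atTop, countRatio S δ x ≤ 3 * c + 1 := by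
  have hlim := ((hcompl.const_mul 3).add (hS.const_mul 2)).eventually_lt_const
    (show 3 * c + 2 * 0 < 3 * c + 1 by linarith)
  filter_upwards [hlim, eventually_gt_atTop 1] with x hx hx1
  have hidentity := (abs_le.1 (abs_countRatio_sub_add_le S δ hx1 one_pos)).2
  rw [Real.log_one] at hidentity
  linarith [chebyshevRatio_nonneg S δ hx1.le, countRatio_mul_inv_log_le S δ hx1]

lemma tendsto_countRatio_mul_inv_log :
    Tendsto (fun x => countRatio S δ x * (Real.log x)⁻¹) atTop (𝓝 0) := by
  have hinv : Tendsto (fun x : ℝ => (3 * c + 1) * (Real.log x)⁻¹) atTop (𝓝 0) := by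
    simpa only [mul_zero] using
      (tendsto_inv_log_nhdsGT.mono_right nhdsWithin_le_nhds).const_mul (3 * c + 1)
  refine squeeze_zero' ?_ ?_ hinv
  · filter_upwards [eventually_gt_atTop 1] with x hx
    exact mul_nonneg (countRatio_nonneg S δ hx.le) (inv_nonneg.2 (Real.log_pos hx).le)
  · filter_upwards [eventually_gt_atTop 1, eventually_countRatio_le hcompl hS] with x hx hle
    exact mul_le_mul_of_nonneg_right hle (inv_nonneg.2 (Real.log_pos hx).le)

lemma tendsto_countRatio_add_chebyshevRatio :
    Tendsto (fun x => countRatio S δ x + chebyshevRatio S δ x) atTop (𝓝 c) := by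
  have hdiff : Tendsto (fun x => countRatio S δ x
      - harmonicSum (primeSupport Sᶜ) x / Real.log x ^ (1 - δ) + chebyshevRatio S δ x)
      atTop (𝓝 0) := by
    rw [Metric.tendsto_nhds]
    intro ε hε
    obtain ⟨e, he, hec⟩ : ∃ e > 0, e * c < ε := by
      have hmul : Tendsto (fun e : ℝ => e * c) (𝓝[>] 0) (𝓝 0) := by
        simpa only [zero_mul] using (continuous_mul_const c).continuousWithinAt (x := 0).tendsto
      exact ((hmul.eventually_lt_const hε).and self_mem_nhdsWithin).exists.imp
        fun e h => ⟨h.2, h.1⟩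
    have hlim := ((hS.const_mul 2).add (hcompl.const_mul e)).add
      ((tendsto_countRatio_mul_inv_log hcompl hS).const_mul (1 - Real.log e))
    rw [mul_zero, mul_zero, zero_add, add_zero] at hlim
    filter_upwards [hlim.eventually_lt_const hec, eventually_gt_atTop 1] with x hx hx1
    rw [Real.dist_eq, sub_zero]
    exact (abs_countRatio_sub_add_le S δ hx1 he).trans_lt hx
  have hsum := hdiff.add hcompl
  rw [zero_add] at hsum
  exact hsum.congr fun x => by ring

end Sum

section Average

open ArithmeticFunction Finset

variable (S δ) in
/-- The total mass of the weights with which the values `countRatio S δ (x / d)`, for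
`d ≤ x ^ (1 - η)`, enter `chebyshevRatio S δ x`. Since `1 - log d / log x ≥ η` for these `d`, the
maximum is inert; it makes the weight a continuous function of `log d / log x`. -/
noncomputable def averageMass (η x : ℝ) : ℝ :=
  (Real.log x)⁻¹ * sumUpTo (fun d => primeSupport S d * Λ d * (d : ℝ)⁻¹
    * max (1 - (Real.log x)⁻¹ * Real.log d) η ^ (-δ)) (x ^ (1 - η))

lemma sumUpTo_primeSupport_div_eq {x η : ℝ} {d : ℕ} (hx : 1 < x) (hη : 0 < η)
    (hd : 0 < d) (hdx : (d : ℝ) ≤ x ^ (1 - η)) :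
    sumUpTo (primeSupport Sᶜ) (x / d) / (x * Real.log x ^ (1 - δ))
      = (Real.log x)⁻¹ * ((d : ℝ)⁻¹ * max (1 - (Real.log x)⁻¹ * Real.log d) η ^ (-δ))
        * countRatio S δ (x / d) := by
  have hlog := Real.log_pos hx
  have hx0 : 0 < x := by linarith
  have hd0 : (0 : ℝ) < d := by exact_mod_cast hd
  have hle : η ≤ 1 - (Real.log x)⁻¹ * Real.log d := by
    have : (Real.log x)⁻¹ * Real.log d ≤ 1 - η := by
      rw [inv_mul_le_iff₀ hlog, mul_comm]
      rwa [Real.le_rpow_iff_log_le hd0 hx0] at hdx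
    linarith
  have hdiv : Real.log (x / d) = Real.log x * (1 - (Real.log x)⁻¹ * Real.log d) := by
    rw [Real.log_div hx0.ne' hd0.ne']
    field_simp
  rw [max_eq_left hle, countRatio, hdiv]
  generalize 1 - (Real.log x)⁻¹ * Real.log d = v at hle ⊢
  have hv : 0 < v := hη.trans_le hle
  rw [Real.mul_rpow hlog.le hv.le, Real.rpow_neg hv.le, Real.rpow_sub hlog, Real.rpow_one]
  field_simp

lemma eventually_abs_sumUpTo_sub_mul_averageMass_le {η r e : ℝ} (hη : 0 < η)
    (hr : ∀ᶠ y in atTop, |countRatio S δ y - r| ≤ e) :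
    ∀ᶠ x : ℝ in atTop,
      |sumUpTo (fun d => primeSupport S d * Λ d * sumUpTo (primeSupport Sᶜ) (x / d)) (x ^ (1 - η))
          / (x * Real.log x ^ (1 - δ)) - averageMass S δ η x * r|
      ≤ averageMass S δ η x * e := by
  obtain ⟨y₀, hy₀⟩ := eventually_atTop.1 hr
  filter_upwards [eventually_gt_atTop 1, (tendsto_rpow_atTop hη).eventually_ge_atTop y₀]
    with x hx hxy
  have hlog := Real.log_pos hx
  have hx0 : 0 < x := by linarith
  rw [averageMass, sumUpTo.eq_def _ (x ^ (1 - η)), sumUpTo.eq_def _ (x ^ (1 - η)), sum_div,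
    mul_sum, sum_mul, sum_mul, ← sum_sub_distrib]
  refine (abs_sum_le_sum_abs _ _).trans (sum_le_sum fun d hd => ?_)
  obtain ⟨hd0, hdx⟩ := pos_and_le_of_mem_Ioc_floor hd
  have hquot : y₀ ≤ x / d := by
    refine hxy.trans ((le_div_iff₀ hd0).2 ?_)
    calc x ^ η * d ≤ x ^ η * x ^ (1 - η) := by gcongr
      _ = x := by rw [← Real.rpow_add hx0, add_sub_cancel, Real.rpow_one]
  have hweight : 0 ≤ (Real.log x)⁻¹ * (primeSupport S d * Λ d * (d : ℝ)⁻¹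
      * max (1 - (Real.log x)⁻¹ * Real.log d) η ^ (-δ)) := by
    exact mul_nonneg (by positivity) (mul_nonneg (mul_nonneg
      (primeSupport_mul_vonMangoldt_nonneg S d) (by positivity)) (by positivity))
  calc |primeSupport S d * Λ d * sumUpTo (primeSupport Sᶜ) (x / d) / (x * Real.log x ^ (1 - δ))
          - (Real.log x)⁻¹ * (primeSupport S d * Λ d * (d : ℝ)⁻¹
            * max (1 - (Real.log x)⁻¹ * Real.log d) η ^ (-δ)) * r|
      = |(Real.log x)⁻¹ * (primeSupport S d * Λ d * (d : ℝ)⁻¹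
          * max (1 - (Real.log x)⁻¹ * Real.log d) η ^ (-δ)) * (countRatio S δ (x / d) - r)| := by
        rw [mul_div_assoc, sumUpTo_primeSupport_div_eq hx hη (mem_Ioc.1 hd).1 hdx]
        ring_nf
    _ ≤ (Real.log x)⁻¹ * (primeSupport S d * Λ d * (d : ℝ)⁻¹
          * max (1 - (Real.log x)⁻¹ * Real.log d) η ^ (-δ)) * e := by
        rw [abs_mul, abs_of_nonneg hweight]
        exact mul_le_mul_of_nonneg_left (hy₀ _ hquot) hweight

lemma sumUpTo_sub_sumUpTo (a : ℕ → ℝ) {x y : ℝ} (hyx : y ≤ x) :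
    sumUpTo a x - sumUpTo a y = ∑ d ∈ Ioc 0 ⌊x⌋₊ with y < (d : ℕ), a d := by
  have hsmall : Ioc 0 ⌊y⌋₊ = {d ∈ Ioc 0 ⌊x⌋₊ | ¬ y < (d : ℕ)} := by
    ext d
    rw [mem_filter, mem_Ioc, mem_Ioc, not_lt]
    constructor
    · rintro ⟨hd0, hdy⟩
      exact ⟨⟨hd0, hdy.trans (Nat.floor_le_floor hyx)⟩, (Nat.le_floor_iff' hd0.ne').1 hdy⟩
    · rintro ⟨⟨hd0, -⟩, hdy⟩
      exact ⟨hd0, Nat.le_floor hdy⟩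
  rw [sub_eq_iff_eq_add, sumUpTo, sumUpTo, hsmall, sum_filter_add_sum_filter_not]

lemma abs_chebyshevSum_sub_sumUpTo_le {x y z : ℝ} (hx : 0 ≤ x) (hz : 0 ≤ z) (hyx : y ≤ x)
    (hxyz : x ≤ y * z) :
    |chebyshevSum S x
        - sumUpTo (fun d => primeSupport S d * Λ d * sumUpTo (primeSupport Sᶜ) (x / d)) y|
      ≤ (Real.log 4 + 4) * x * harmonicSum (primeSupport Sᶜ) z := by
  have hcount (d : ℕ) : 0 ≤ sumUpTo (primeSupport Sᶜ) (x / d) :=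
    sumUpTo_nonneg (primeSupport_nonneg _) _
  rw [chebyshevSum, sumUpTo_sub_sumUpTo _ hyx, abs_of_nonneg (sum_nonneg fun d _ =>
    mul_nonneg (primeSupport_mul_vonMangoldt_nonneg S d) (hcount d))]
  refine le_trans (sum_le_sum fun d _ => mul_le_mul_of_nonneg_right ?_ (hcount d))
    (sum_vonMangoldt_mul_sumUpTo_le_harmonicSum (primeSupport_nonneg _) hx hz hxyz)
  exact mul_le_of_le_one_left vonMangoldt_nonneg (primeSupport_le_one S d)

include hcompl in
lemma eventually_abs_chebyshevRatio_sub_sumUpTo_le {η ε : ℝ} (hη : 0 < η) (hε : 0 < ε) :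
    ∀ᶠ x : ℝ in atTop,
      |chebyshevRatio S δ x
        - sumUpTo (fun d => primeSupport S d * Λ d * sumUpTo (primeSupport Sᶜ) (x / d))
          (x ^ (1 - η)) / (x * Real.log x ^ (1 - δ))|
      ≤ (Real.log 4 + 4) * c * η ^ (1 - δ) + ε := by
  have hlim := ((hcompl.comp (tendsto_rpow_atTop hη)).mul_const (η ^ (1 - δ))).const_mul
    (Real.log 4 + 4)
  rw [← mul_assoc] at hlim
  filter_upwards [hlim.eventually_lt_const (lt_add_of_pos_right _ hε), eventually_gt_atTop 1]
    with x hx hx1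
  have hlog := Real.log_pos hx1
  have hx0 : 0 < x := by linarith
  have hden : 0 < x * Real.log x ^ (1 - δ) := by positivity
  have hlarge := abs_chebyshevSum_sub_sumUpTo_le (S := S) hx0.le (Real.rpow_nonneg hx0.le η)
    (Real.rpow_le_self_of_one_le hx1.le (by linarith : 1 - η ≤ 1))
    (by rw [← Real.rpow_add hx0, sub_add_cancel, Real.rpow_one])
  rw [chebyshevRatio, ← sub_div, abs_div, abs_of_pos hden]
  refine (div_le_div_of_nonneg_right hlarge hden.le).trans (le_trans (le_of_eq ?_) hx.le)
  rw [Function.comp_apply, Real.log_rpow hx0, Real.mul_rpow hη.le hlog.le]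
  field_simp

lemma tendsto_averageMass (hS : HasLogDensity (S.indicator 1) δ) (hδ1 : δ < 1) {η : ℝ}
    (hη : 0 < η) (hη1 : η < 1) :
    Tendsto (averageMass S δ η) atTop (𝓝 (δ / (1 - δ) * (1 - η ^ (1 - δ)))) :=
  (hasDirichletAsymptotic_primeSupport_mul_vonMangoldt hS).tendsto_sumUpTo_mul_max_rpow hδ1 hη hη1

lemma exists_mem_Ioo_mul_rpow_lt (K : ℝ) {τ ε : ℝ} (hτ : 0 < τ) (hε : 0 < ε) :
    ∃ η ∈ Set.Ioo (0 : ℝ) 1, K * η ^ τ < ε := by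
  have hlim := ((Real.continuousAt_rpow_const 0 τ (Or.inr hτ.le)).tendsto.const_mul K).mono_left
    (nhdsWithin_le_nhds (s := Set.Ioi 0))
  rw [Real.zero_rpow hτ.ne', mul_zero] at hlim
  obtain ⟨η, hlt, hη⟩ :=
    ((hlim.eventually_lt_const hε).and (Ioo_mem_nhdsGT (zero_lt_one' ℝ))).exists
  exact ⟨η, hη, hlt⟩

include hcompl in
lemma eventually_abs_chebyshevRatio_sub_le (hS : HasLogDensity (S.indicator 1) δ) (hδ0 : 0 ≤ δ)
    (hδ1 : δ < 1) {r e : ℝ} (he : 0 ≤ e) (hr : ∀ᶠ y in atTop, |countRatio S δ y - r| ≤ e)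
    {ε : ℝ} (hε : 0 < ε) :
    ∀ᶠ x in atTop, |chebyshevRatio S δ x - δ / (1 - δ) * r| ≤ δ / (1 - δ) * e + ε := by
  have hθ0 : 0 ≤ δ / (1 - δ) := div_nonneg hδ0 (by linarith)
  obtain ⟨η, ⟨hη, hη1⟩, hηε⟩ := exists_mem_Ioo_mul_rpow_lt
    ((Real.log 4 + 4) * c + δ / (1 - δ) * |r|) (sub_pos.2 hδ1) (half_pos hε)
  have hητ := Real.rpow_nonneg hη.le (1 - δ)
  have hmass := tendsto_averageMass hS hδ1 hη hη1
  have hlim := (hmass.mul_const e).add ((hmass.sub_const (δ / (1 - δ))).abs.mul_const |r|)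
  set θ := δ / (1 - δ)
  have hdefect : |θ * (1 - η ^ (1 - δ)) - θ| = θ * η ^ (1 - δ) := by
    rw [← mul_sub_one, sub_sub_cancel_left, mul_neg, abs_neg, abs_of_nonneg (by positivity)]
  have hlt : θ * (1 - η ^ (1 - δ)) * e + |θ * (1 - η ^ (1 - δ)) - θ| * |r|
      < θ * e + θ * |r| * η ^ (1 - δ) + ε / 4 := by
    rw [hdefect]
    linarith [mul_nonneg (mul_nonneg hθ0 he) hητ]
  filter_upwards [eventually_abs_sumUpTo_sub_mul_averageMass_le hη hr,
    eventually_abs_chebyshevRatio_sub_sumUpTo_le hcompl hη (show 0 < ε / 4 by positivity),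
    hlim.eventually_lt_const hlt] with x hsmall hlarge hx
  have hlimit := abs_mul (averageMass S δ η x - θ) r
  calc |chebyshevRatio S δ x - θ * r| ≤ _ := abs_sub_le _ _ _
    _ ≤ _ := add_le_add hlarge ((abs_sub_le _ (averageMass S δ η x * r) _).trans
        (add_le_add hsmall (by rw [← sub_mul, hlimit])))
    _ ≤ θ * e + ε := by linarith

end Average

theorem exists_tendsto_countRatio (hS : HasLogDensity (S.indicator 1) δ) (hδ0 : 0 ≤ δ)
    (hδ : δ < 1 / 2) : ∃ κ : ℝ, 0 < κ ∧ Tendsto (countRatio S δ) atTop (𝓝 κ) := by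
  have hτ : 0 < 1 - δ := by linarith
  obtain ⟨C, hC, hfree⟩ := exists_hasDirichletAsymptotic_primeSupport hS.compl
  obtain ⟨D, -, hsupp⟩ := exists_hasDirichletAsymptotic_primeSupport hS
  have hcompl := hfree.tendsto_harmonicSum_div hτ
  have hzero := hsupp.tendsto_harmonicSum_div_zero (show δ < 1 - δ by linarith)
  set c := C / Real.Gamma (1 - δ + 1)
  have hc : 0 < c := div_pos hC (Real.Gamma_pos_of_pos (by linarith))
  have hbound : ∀ᶠ x in atTop, |countRatio S δ x| ≤ 3 * c + 1 := by
    filter_upwards [eventually_countRatio_le hcompl hzero, eventually_ge_atTop 1] with x hx hx1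
    rwa [abs_of_nonneg (countRatio_nonneg S δ hx1)]
  have hsum := tendsto_countRatio_add_chebyshevRatio hcompl hzero
  have hfix : c = c * (1 - δ) + δ / (1 - δ) * (c * (1 - δ)) := by
    field_simp
    ring
  rw [hfix] at hsum
  exact ⟨c * (1 - δ), mul_pos hc hτ, tendsto_of_tendsto_add_of_contraction
    (div_nonneg hδ0 hτ.le) ((div_lt_one hτ).2 (by linarith)) hbound hsum fun _ he hr _ hε =>
      eventually_abs_chebyshevRatio_sub_le hcompl hS hδ0 (by linarith) he hr hε⟩

end CountRatio

lemma sumUpTo_primeSupport_compl_eq_card {P : Set ℕ} (hP : ∀ q ∈ P, q.Prime) (x : ℕ) :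
    sumUpTo (primeSupport Pᶜ) x = ((Finset.Icc 1 x).filter fun m => ∀ q ∈ P, ¬ q ∣ m).card := by
  rw [sumUpTo, Nat.floor_natCast, Finset.card_filter, Nat.cast_sum]
  refine Finset.sum_congr rfl fun n hn => ?_
  have hfree : (n ≠ 0 ∧ ∀ q, q.Prime → q ∣ n → q ∈ Pᶜ) ↔ ∀ q ∈ P, ¬ q ∣ n :=
    ⟨fun h q hq hd => h.2 q (hP q hq) hd hq,
      fun h => ⟨(Finset.mem_Ioc.1 hn).1.ne', fun q _ hd hq => h q hq hd⟩⟩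
  rw [primeSupport_apply, if_congr hfree rfl rfl, Nat.cast_ite, Nat.cast_one, Nat.cast_zero]

theorem exists_tendsto_card_filter_div {P : Set ℕ} {δ : ℝ} (hP : ∀ q ∈ P, q.Prime)
    (hdensity : HasLogDensity (P.indicator 1) δ) (hδ : δ < 1 / 2) :
    ∃ κ : ℝ, 0 < κ ∧ Tendsto (fun x : ℕ =>
      (((Finset.Icc 1 x).filter (fun m => ∀ q ∈ P, ¬ q ∣ m)).card : ℝ)
        / ((x : ℝ) / (Real.log x) ^ δ)) atTop (𝓝 κ) := by
  have hδ0 : 0 ≤ δ := HasLogDensity.nonneg (Set.indicator_nonneg fun _ _ => zero_le_one) hdensity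
  obtain ⟨κ, hκ, hlim⟩ := exists_tendsto_countRatio hdensity hδ0 hδ
  refine ⟨κ, hκ, (hlim.comp tendsto_natCast_atTop_atTop).congr fun x => ?_⟩
  rw [Function.comp_apply, countRatio, sumUpTo_primeSupport_compl_eq_card hP, div_div_eq_mul_div]

lemma one_div_totient_sub_one_div_lt_half {n d : ℕ} (hn : 2 < n) (hd : 0 < d) :
    1 / (n.totient : ℝ) - 1 / (d : ℝ) < 1 / 2 := by
  have htotient : 2 ≤ n.totient :=
    Nat.le_of_dvd (Nat.totient_pos.2 (by lia)) (Nat.totient_even hn).two_dvd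
  have hle : 1 / (n.totient : ℝ) ≤ 1 / 2 :=
    one_div_le_one_div_of_le two_pos (by exact_mod_cast htotient)
  linarith [one_div_pos.2 (Nat.cast_pos (α := ℝ).2 hd)]

theorem Pg_free_count_asymptotic_general {N m : ℕ} (hm : 2 < m) (hNm : N ∣ m) {g : ℤ} (hg : g ≠ 0)
    {P : Set ℕ}
    (hP : P = {q : ℕ | q.Prime ∧ ¬ ((q : ℤ) ∣ m * g) ∧ q % m = 1 ∧
        ¬ ∃ y : ZMod q, y ^ N = (g : ZMod q)})
    {δ : ℝ}
    (hδ : δ = 1 / (m.totient : ℝ) -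
        1 / (Module.finrank ℚ
          (((X : ℚ[X]) ^ N - C (g : ℚ)) * ((X : ℚ[X]) ^ m - 1)).SplittingField : ℝ)) :
    ∃ κ : ℝ, 0 < κ ∧
      Tendsto (fun x : ℕ =>
          (((Finset.Icc 1 x).filter (fun n => ∀ q ∈ P, ¬ q ∣ n)).card : ℝ) /
            ((x : ℝ) / (Real.log x) ^ δ))
        atTop (𝓝 κ) := by
  set f : ℚ[X] := ((X : ℚ[X]) ^ N - C (g : ℚ)) * ((X : ℚ[X]) ^ m - 1)
  have hchar : CharZero f.SplittingField := algebraRat.charZero _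
  have hsplits : IsSplittingField ℚ f.SplittingField f := IsSplittingField.splittingField f
  have hdensity : HasLogDensity (P.indicator 1) δ := by
    rw [hP, hδ]
    simpa only [Nat.ModEq, Nat.mod_eq_of_lt (by lia : 1 < m)] using
      hasLogDensity_indicator_not_pow (L := f.SplittingField) (by lia) hNm hg
  refine exists_tendsto_card_filter_div (fun q hq => ?_) hdensity ?_
  · rw [hP] at hq
    exact hq.1
  · rw [hδ]
    exact one_div_totient_sub_one_div_lt_half hm Module.finrank_pos

/-- **Asymptotic count of `P_g`-free integers (Wirsing-type).**
Let `N ≥ 2` and let `g` be a nonzero integer such that `X^N − g` has no root in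
`ℚ(ζ_{2N})`.  Let `P_g` be the set of primes `q` with `q ∤ 2Ng`, `q ≡ 1 (mod 2N)` and `g`
not an `N`-th power mod `q`; let `L_g` be the splitting field of `(X^N − g)(X^{2N} − 1)`
over `ℚ` and `δ_g = 1/φ(2N) − 1/[L_g : ℚ]`.  Then for some constant `κ > 0` the number of
`P_g`-free integers in `[1, X]` is asymptotic to `κ·X/(log X)^{δ_g}`. -/
theorem Pg_free_count_asymptotic (N : ℕ+) (hN : 2 ≤ (N : ℕ)) (g : ℤ) (hg : g ≠ 0)
    (hroot : ∀ x : CyclotomicField (2 * N) ℚ, x ^ (N : ℕ) ≠ (g : CyclotomicField (2 * N) ℚ))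
    (P : Set ℕ)
    (hP : P = {q : ℕ | q.Prime ∧ ¬ ((q : ℤ) ∣ 2 * (N : ℕ) * g) ∧ q % (2 * (N : ℕ)) = 1 ∧
        ¬ ∃ y : ZMod q, y ^ (N : ℕ) = (g : ZMod q)})
    (δ : ℝ)
    (hδ : δ = 1 / (Nat.totient (2 * (N : ℕ)) : ℝ) -
        1 / (Module.finrank ℚ
          ((((X : ℚ[X]) ^ (N : ℕ) - C (g : ℚ)) *
            ((X : ℚ[X]) ^ (2 * (N : ℕ)) - 1)).SplittingField) : ℝ)) :
    ∃ κ : ℝ, 0 < κ ∧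
      Tendsto (fun X : ℕ =>
          (((Finset.Icc 1 X).filter (fun m => ∀ q ∈ P, ¬ q ∣ m)).card : ℝ) /
            ((X : ℝ) / (Real.log X) ^ δ))
        atTop (nhds κ) :=
  Pg_free_count_asymptotic_general (by lia) (Dvd.intro_left 2 rfl) hg (by rw [hP]; push_cast; rfl)
    hδ
end

section
/- Fix n ≥ 4 and let t be an integer with |t| > 1, gcd(t, n(n−1)) = 1, and such that t·L_n(t) is squarefree, where L_n(t) = (−1)^{n(n−1)/2}·n^n + (−1)^{(n−1)(n−2)/2}·(n−1)^{n−1}·t. Then the polynomial f_t(X) = X^n + tX + t is irreducible over ℚ, and for K_t = ℚ(α_t) with α_t a root of f_t, the ring of integers of K_t equals ℤ[α_t]; that is, Algebra.adjoin ℤ {α_t} = ⊤ in 𝓞_{K_t}. In particular K_t is monogenic. -/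
open NumberField Polynomial

/-!
Write `A = ℤ[α]` for a root `α` of `X ^ n + t X + t`. If `m` and `k` are coprime, every element
of `A` is congruent to an integer modulo `γ = m α + k`, because `m` is invertible in `A / γ`. When
`γ` has squarefree norm this forces `x ∈ A` for every algebraic integer `x` with `γ x ∈ A`.

The element `f'(α)` multiplies `𝓞 K` into `A`, and `((n - 1) α + n) α ^ n = α (α + 1) f'(α)`. The
factors on the left can be cancelled one by one, since `α` has norm `± t` and `(n - 1) α + n` has
norm `± L`. Irreducibility is Eisenstein's criterion at a prime dividing `t`.
-/

section

variable {R S : Type*} [CommRing R] [CommRing S] [Algebra R S]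

lemma mem_bot_of_isCoprime_of_mul_eq [Algebra.IsIntegral R S] {m k : R}
    (hmk : IsCoprime m k) {x : S}
    (hmx : algebraMap R S m * x = algebraMap R S k) : x ∈ (⊥ : Subalgebra R S) := by
  obtain ⟨u, v, huv⟩ := hmk
  have huv' : algebraMap R S m * (algebraMap R S u + algebraMap R S v * x) = 1 := by
    rw [← map_one (algebraMap R S), ← huv, map_add, map_mul, map_mul]
    linear_combination algebraMap R S v * hmx
  -- A unit of `S` lying in `⊥` is a unit of `⊥`, because `S` is integral over `⊥`.
  have : Algebra.IsIntegral (⊥ : Subalgebra R S) S := .tower_top R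
  obtain ⟨w, hw⟩ := (isUnit_of_map_unit (algebraMap (⊥ : Subalgebra R S) S)
    (algebraMap R _ m) (.of_mul_eq_one _ huv')).exists_right_inv
  replace hw : algebraMap R S m * w = 1 := congrArg Subtype.val hw
  have hx : x = w * algebraMap R S k := by linear_combination (-x) * hw + (w : S) * hmx
  rw [hx]
  exact mul_mem w.2 (Subalgebra.algebraMap_mem _ k)

lemma exists_dvd_sub_algebraMap [Algebra.IsIntegral R S] {a : S} (ha : Algebra.adjoin R {a} = ⊤)
    {m k : R} (hmk : IsCoprime m k) (y : S) :
    ∃ c : R, algebraMap R S m * a + algebraMap R S k ∣ y - algebraMap R S c := by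
  set I := Ideal.span {algebraMap R S m * a + algebraMap R S k}
  let π := Ideal.Quotient.mkₐ R I
  have hπa : algebraMap R (S ⧸ I) m * π a = algebraMap R (S ⧸ I) (-k) := by
    have hzero : π (algebraMap R S m * a + algebraMap R S k) = 0 :=
      Ideal.Quotient.eq_zero_iff_mem.2 (Ideal.mem_span_singleton_self _)
    rw [map_add, map_mul, AlgHom.commutes, AlgHom.commutes] at hzero
    rw [map_neg]
    exact eq_neg_of_add_eq_zero_left hzero
  have hy : π y ∈ Algebra.adjoin R {π a} := by
    rw [← AlgHom.map_adjoin_singleton, ha]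
    exact ⟨y, trivial, rfl⟩
  obtain ⟨c, hc⟩ := Algebra.mem_bot.1 <|
    Algebra.adjoin_singleton_le (mem_bot_of_isCoprime_of_mul_eq hmk.neg_right hπa) hy
  exact ⟨c, Ideal.mem_span_singleton.1 (Ideal.Quotient.eq.1 hc.symm)⟩

lemma dvd_algebraMap_norm [Module.Free R S] [Module.Finite R S] {A : Subalgebra R S} (γ : A) :
    γ ∣ algebraMap R A (Algebra.norm R (γ : S)) := by
  set p := (Algebra.lmul R S (γ : S)).charpoly
  have hroot : (p.map (algebraMap R A)).IsRoot γ := by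
    rw [IsRoot, eval_map_algebraMap]
    exact Subtype.ext ((aeval_subalgebra_coe p A γ).trans (Algebra.aeval_self_charpoly_lmul _))
  have hcoeff : γ ∣ algebraMap R A (p.coeff 0) :=
    coeff_map (algebraMap R A) 0 ▸ hroot.dvd_coeff_zero
  rw [Algebra.norm_apply, LinearMap.det_eq_sign_charpoly_coeff, map_mul]
  exact hcoeff.mul_left _

section Domain

variable [DecompositionMonoid R] [IsDomain S] [Module.Free R S] [Module.Finite R S]

/- If `γ * x = c + γ * r` with `c : R`, then the squarefree norm of `γ` divides the norm of `c`,
a power of `c`, hence `c` itself; and `γ` divides its norm within `A`. -/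
lemma mem_of_mul_mem_of_squarefree_norm {A : Subalgebra R S} {γ : A}
    (hres : ∀ y : A, ∃ c : R, γ ∣ y - algebraMap R A c)
    (hsf : Squarefree (Algebra.norm R (γ : S))) {x : S} (hx : (γ : S) * x ∈ A) : x ∈ A := by
  have : Nontrivial R := (algebraMap R S).domain_nontrivial
  obtain ⟨c, r, hr⟩ := hres ⟨γ * x, hx⟩
  obtain ⟨s, hs⟩ := dvd_algebraMap_norm γ
  replace hr : (γ : S) * x - algebraMap R S c = γ * r := congrArg Subtype.val hr
  replace hs : algebraMap R S (Algebra.norm R (γ : S)) = γ * s := congrArg Subtype.val hs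
  have hγ : (γ : S) ≠ 0 := fun h => hsf.ne_zero (by rw [h, Algebra.norm_zero])
  have hpow : Algebra.norm R (γ : S) ∣ c ^ Module.finrank R S := by
    have hc : algebraMap R S c = γ * (x - r) := by linear_combination -hr
    rw [← Algebra.norm_algebraMap (S := S), hc, map_mul]
    exact dvd_mul_right _ _
  obtain ⟨d, rfl⟩ := hsf.isRadical _ _ hpow
  have hxr : x = r + s * algebraMap R S d := by
    apply mul_left_cancel₀ hγ
    rw [map_mul] at hr
    linear_combination hr + algebraMap R S d * hs
  rw [hxr]
  exact add_mem r.2 (mul_mem s.2 (A.algebraMap_mem d))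

lemma mem_adjoin_of_linear_mul_mem {α : S} {m k : R} (hmk : IsCoprime m k)
    (hsf : Squarefree (Algebra.norm R (algebraMap R S m * α + algebraMap R S k))) {x : S}
    (hx : (algebraMap R S m * α + algebraMap R S k) * x ∈ Algebra.adjoin R {α}) :
    x ∈ Algebra.adjoin R {α} := by
  have : Algebra.IsIntegral R (Algebra.adjoin R {α}) :=
    .of_injective (Algebra.adjoin R {α}).val Subtype.val_injective
  let a : Algebra.adjoin R {α} := ⟨α, Algebra.self_mem_adjoin_singleton R α⟩
  have ha : Algebra.adjoin R {a} = ⊤ := by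
    rw [← Algebra.adjoin_adjoin_coe_preimage]
    congr 1
    ext
    simp [a, Subtype.ext_iff]
  exact mem_of_mul_mem_of_squarefree_norm (γ := algebraMap R _ m * a + algebraMap R _ k)
    (exists_dvd_sub_algebraMap ha hmk) hsf hx

lemma mem_adjoin_of_pow_mul_mem {α : S} (hsf : Squarefree (Algebra.norm R α)) (j : ℕ) {x : S}
    (hx : α ^ j * x ∈ Algebra.adjoin R {α}) : x ∈ Algebra.adjoin R {α} := by
  induction j with
  | zero => simpa using hx
  | succ j ih =>
    refine ih (mem_adjoin_of_linear_mul_mem (m := 1) (k := 0) isCoprime_one_left ?_ ?_)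
    · simpa using hsf
    · rw [map_one, map_zero, one_mul, add_zero, ← mul_assoc, ← pow_succ']
      exact hx

end Domain

lemma norm_algebraMap_sub_gen (pb : PowerBasis R S) (q : R) :
    Algebra.norm R (algebraMap R S q - pb.gen) = (minpoly R pb.gen).eval q := by
  rw [Algebra.norm_eq_matrix_det pb.basis, map_sub, AlgHom.commutes, ← charpoly_leftMulMatrix,
    Matrix.eval_charpoly]
  rfl

lemma norm_algebraMap_mul_gen_add_algebraMap {F E : Type*} [Field F] [CommRing E] [Algebra F E]
    (pb : PowerBasis F E) {m : F} (hm : m ≠ 0) (k : F) :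
    Algebra.norm F (algebraMap F E m * pb.gen + algebraMap F E k) =
      (-m) ^ (minpoly F pb.gen).natDegree * (minpoly F pb.gen).eval (-k / m) := by
  have hfac : algebraMap F E m * pb.gen + algebraMap F E k =
      algebraMap F E (-m) * (algebraMap F E (-k / m) - pb.gen) := by
    rw [mul_sub, ← map_mul, neg_mul_comm, neg_div, neg_neg, mul_div_cancel₀ _ hm, map_neg]
    ring
  rw [hfac, map_mul, Algebra.norm_algebraMap, norm_algebraMap_sub_gen, pb.finrank,
    pb.natDegree_minpoly]

lemma minpoly_eq_of_irreducible_of_monic [IsDomain R] [IsIntegrallyClosed R] [IsDomain S]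
    [Module.IsTorsionFree R S] {f : R[X]} (hirr : Irreducible f) (hmon : f.Monic) {x : S}
    (hx : aeval x f = 0) : minpoly R x = f := by
  have hint : IsIntegral R x := ⟨f, hmon, hx⟩
  have hdvd := minpoly.isIntegrallyClosed_dvd hint hx
  exact eq_of_monic_of_associated (minpoly.monic hint) hmon
    ((hirr.dvd_iff.1 hdvd).resolve_left (minpoly.not_isUnit R x)).symm

lemma aeval_derivative_minpoly_mul_mem_adjoin {K : Type*} [Field K] [NumberField K] {α : 𝓞 K}
    (hgen : Algebra.adjoin ℚ {(α : K)} = ⊤) (x : 𝓞 K) :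
    aeval α (derivative (minpoly ℤ α)) * x ∈ Algebra.adjoin ℤ {α} := by
  refine mem_conductor_iff.1 (SetLike.le_def.1 ?_ (Ideal.mem_span_singleton_self _)) x
  rw [← conductor_mul_differentIdeal ℤ ℚ K α hgen]
  exact Ideal.mul_le_left

section Trinomial

variable {n : ℕ}

lemma natDegree_X_pow_add_C_mul_X_add_C [Nontrivial R] (hn : 2 ≤ n) (a b : R) :
    (X ^ n + C a * X + C b).natDegree = n := by
  rw [add_assoc, natDegree_add_eq_left_of_degree_lt, natDegree_X_pow]
  exact degree_linear_le.trans_lt (by rw [degree_X_pow]; exact_mod_cast hn)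

lemma monic_X_pow_add_C_mul_X_add_C (hn : 2 ≤ n) (a b : R) : (X ^ n + C a * X + C b).Monic := by
  rw [add_assoc]
  exact monic_X_pow_add (degree_linear_le.trans_lt (by exact_mod_cast hn))

lemma irreducible_X_pow_add_C_mul_X_add_C [IsDomain R] (hn : 2 ≤ n) {a b p : R} (hp : Prime p)
    (hpa : p ∣ a) (hpb : p ∣ b) (hpb2 : ¬ p ^ 2 ∣ b) : Irreducible (X ^ n + C a * X + C b) := by
  have hmon := monic_X_pow_add_C_mul_X_add_C hn a b
  have hdeg := natDegree_X_pow_add_C_mul_X_add_C hn a b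
  have hP : (Ideal.span {p}).IsPrime := (Ideal.span_singleton_prime hp.ne_zero).2 hp
  refine (hmon.isEisensteinAt_of_mem_of_notMem hP.ne_top (fun {i} hi => ?_) ?_).irreducible hP
    hmon.isPrimitive (by omega)
  · have hi' : i ≠ n := (hdeg ▸ hi).ne
    rw [Ideal.mem_span_singleton, coeff_add, coeff_add, coeff_X_pow, if_neg hi', zero_add,
      coeff_C_mul, coeff_C]
    refine dvd_add (hpa.mul_right _) ?_
    split_ifs
    exacts [hpb, dvd_zero p]
  · have h0 : (X ^ n + C a * X + C b).coeff 0 = b := by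
      simp [coeff_X_pow, show 0 ≠ n by omega]
    rwa [h0, Ideal.span_singleton_pow, Ideal.mem_span_singleton]

lemma discriminant_factor_eq (hn : n ≠ 0) (t : R) :
    (-1) ^ (n * (n - 1) / 2) * (n : R) ^ n +
        (-1) ^ ((n - 1) * (n - 2) / 2) * ((n : R) - 1) ^ (n - 1) * t =
      (-1) ^ (n * (n - 1) / 2) * ((n : R) ^ n - (-1) ^ n * ((n : R) - 1) ^ (n - 1) * t) := by
  obtain ⟨N, rfl⟩ := Nat.exists_eq_succ_of_ne_zero hn
  have hsign : (-1 : R) ^ N * (-1) ^ N = 1 := by simp [← mul_pow]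
  rw [Nat.succ_eq_add_one, Nat.triangle_succ, Nat.add_sub_cancel, show N + 1 - 2 = N - 1 by omega,
    pow_add, pow_succ (-1 : R) N]
  linear_combination (-(-1) ^ (N * (N - 1) / 2) * ((N + 1 : ℕ) - 1 : R) ^ N * t) * hsign

variable {K : Type*} [Field K] [NumberField K] {α : 𝓞 K} {t : ℤ}

lemma norm_mul_add_of_minpoly_eq_trinomial (hn : 2 ≤ n)
    (hgen : Algebra.adjoin ℚ {(α : K)} = ⊤) {a b : ℤ} (hmin : minpoly ℤ α = X ^ n + C a * X + C b)
    {m : ℤ} (hm : m ≠ 0) (k : ℤ) :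
    Algebra.norm ℤ (m * α + k) = (-1) ^ n * ((-k) ^ n - a * m ^ (n - 1) * k + b * m ^ n) := by
  have hminℚ : minpoly ℚ (α : K) = X ^ n + C (a : ℚ) * X + C (b : ℚ) := by
    rw [minpoly.isIntegrallyClosed_eq_field_fractions ℚ K (RingOfIntegers.isIntegral α), hmin]
    simp
  have hdeg := natDegree_X_pow_add_C_mul_X_add_C hn (a : ℚ) b
  let pb := PowerBasis.ofAdjoinEqTop (Algebra.IsIntegral.isIntegral (R := ℚ) (α : K)) hgen
  have hgen' : pb.gen = (α : K) := PowerBasis.ofAdjoinEqTop_gen ..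
  have hm' : (m : ℚ) ≠ 0 := by exact_mod_cast hm
  have hcast : (Algebra.norm ℤ (m * α + k) : ℚ) =
      (-1) ^ n * ((-k) ^ n - a * m ^ (n - 1) * k + b * m ^ n) := by
    have hlin : ((m * α + k : 𝓞 K) : K) = algebraMap ℚ K m * pb.gen + algebraMap ℚ K k := by
      simp [hgen']
    rw [Algebra.coe_norm_int, hlin, norm_algebraMap_mul_gen_add_algebraMap pb hm', hgen', hminℚ,
      hdeg]
    obtain ⟨N, rfl⟩ : ∃ N, n = N + 1 := ⟨n - 1, by omega⟩
    simp only [eval_add, eval_pow, eval_X, eval_mul, eval_C, Nat.add_sub_cancel, div_pow,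
      neg_pow (m : ℚ)]
    field_simp
    ring
  exact_mod_cast hcast

lemma linear_mul_pow_eq_mul_aeval_derivative {a : S} {t : R}
    (ha : aeval a (X ^ n + C t * X + C t) = 0) :
    ((n - 1) * a + n) * a ^ n = a * (a + 1) * aeval a (derivative (X ^ n + C t * X + C t)) := by
  simp only [map_add, map_mul, map_pow, aeval_X, aeval_C] at ha
  rw [derivative_add, derivative_add, derivative_X_pow, derivative_C_mul_X, derivative_C]
  simp only [map_add, map_mul, map_pow, map_zero, map_natCast, aeval_X, aeval_C]
  have hpow : (n : S) * (a ^ (n - 1) * a) = n * a ^ n := by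
    cases n <;> simp [pow_succ]
  linear_combination -a * ha - (a + 1) * hpow

lemma mem_adjoin_of_sub_one_mul_add_mul_mem (hn : 2 ≤ n)
    (hgen : Algebra.adjoin ℚ {(α : K)} = ⊤) (hmin : minpoly ℤ α = X ^ n + C t * X + C t)
    (hsf : Squarefree ((n : ℤ) ^ n - (-1) ^ n * ((n : ℤ) - 1) ^ (n - 1) * t)) {x : 𝓞 K}
    (hx : ((n - 1) * α + n) * x ∈ Algebra.adjoin ℤ {α}) : x ∈ Algebra.adjoin ℤ {α} := by
  have hnorm : Algebra.norm ℤ (((n - 1 : ℤ) : 𝓞 K) * α + (n : ℤ)) =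
      (n : ℤ) ^ n - (-1) ^ n * ((n : ℤ) - 1) ^ (n - 1) * t := by
    rw [norm_mul_add_of_minpoly_eq_trinomial hn hgen hmin (by omega)]
    obtain ⟨N, rfl⟩ : ∃ N, n = N + 1 := ⟨n - 1, by omega⟩
    have hsign : (-1 : ℤ) ^ (N + 1) * (-1) ^ (N + 1) = 1 := by simp [← mul_pow]
    rw [neg_pow ((N + 1 : ℕ) : ℤ) (N + 1), Nat.add_sub_cancel]
    push_cast
    linear_combination ((N : ℤ) + 1) ^ (N + 1) * hsign
  refine mem_adjoin_of_linear_mul_mem (R := ℤ) (m := n - 1) (k := n) ⟨-1, 1, by ring⟩ ?_ ?_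
  · rwa [algebraMap_int_eq, eq_intCast, eq_intCast, hnorm]
  · simpa using hx

lemma adjoin_eq_top_of_minpoly_eq_trinomial (hn : 2 ≤ n)
    (hgen : Algebra.adjoin ℚ {(α : K)} = ⊤) (hmin : minpoly ℤ α = X ^ n + C t * X + C t)
    (ht : Squarefree t)
    (hsf : Squarefree ((n : ℤ) ^ n - (-1) ^ n * ((n : ℤ) - 1) ^ (n - 1) * t)) :
    Algebra.adjoin ℤ {α} = ⊤ := by
  have hnormα : Algebra.norm ℤ α = (-1) ^ n * t := by
    simpa [show n ≠ 0 by omega] using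
      norm_mul_add_of_minpoly_eq_trinomial hn hgen hmin one_ne_zero 0
  rw [eq_top_iff]
  rintro x -
  refine mem_adjoin_of_pow_mul_mem ?_ n
    (mem_adjoin_of_sub_one_mul_add_mul_mem hn hgen hmin hsf ?_)
  · rw [hnormα]
    exact (associated_unit_mul_left t _ (isUnit_one.neg.pow n)).squarefree_iff.2 ht
  rw [← mul_assoc, linear_mul_pow_eq_mul_aeval_derivative (hmin ▸ minpoly.aeval ℤ α),
    ← hmin, mul_assoc]
  have hα := Algebra.self_mem_adjoin_singleton ℤ α
  exact mul_mem (mul_mem hα (add_mem hα (one_mem _)))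
    (aeval_derivative_minpoly_mul_mem_adjoin hgen x)

end Trinomial

end

theorem trinomial_family_monogenic_general (n : ℕ) (hn : 2 ≤ n) (t : ℤ) (ht : 1 < |t|) (L : ℤ)
    (hL : L = (-1) ^ (n * (n - 1) / 2) * (n : ℤ) ^ n +
        (-1) ^ ((n - 1) * (n - 2) / 2) * ((n : ℤ) - 1) ^ (n - 1) * t)
    (hsf : Squarefree (t * L)) :
    Irreducible ((X : ℚ[X]) ^ n + C (t : ℚ) * X + C (t : ℚ)) ∧
    ∀ (K : Type*) [Field K] [NumberField K] (α : 𝓞 K),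
      (α : K) ^ n + (t : K) * (α : K) + (t : K) = 0 →
      Algebra.adjoin ℚ {(α : K)} = ⊤ →
      Algebra.adjoin ℤ {α} = ⊤ := by
  obtain ⟨p, hp, hpt⟩ := Int.exists_prime_and_dvd (n := t) (by zify; exact ht.ne')
  have hsft : Squarefree t := hsf.of_mul_left
  have hmon := monic_X_pow_add_C_mul_X_add_C hn t t
  have hirr : Irreducible (X ^ n + C t * X + C t) :=
    irreducible_X_pow_add_C_mul_X_add_C hn hp hpt hpt
      fun h => hp.not_isUnit (hsft p (sq p ▸ h))
  refine ⟨by simpa using (hmon.irreducible_iff_irreducible_map_fraction_map (K := ℚ)).1 hirr,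
    fun K _ _ α hα hgen => ?_⟩
  have hmin : minpoly ℤ α = X ^ n + C t * X + C t :=
    minpoly_eq_of_irreducible_of_monic hirr hmon (RingOfIntegers.ext (by simpa using hα))
  refine adjoin_eq_top_of_minpoly_eq_trinomial hn hgen hmin hsft ?_
  rw [hL, discriminant_factor_eq (by omega)] at hsf
  exact hsf.of_mul_right.of_mul_right

/-- **Monogenic specializations of the trinomial family `X^n + tX + t`.**
Fix `n ≥ 4` and an integer `t` with `|t| > 1`, `gcd(t, n(n−1)) = 1`, and `t·L_n(t)`
squarefree, where `L_n(t) = (−1)^{n(n−1)/2} n^n + (−1)^{(n−1)(n−2)/2} (n−1)^{n−1} t`.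
Then `f_t(X) = X^n + tX + t` is irreducible over `ℚ`, and for `K_t = ℚ(α_t)` with `α_t` a
root of `f_t` one has `𝓞_{K_t} = ℤ[α_t]`; in particular `K_t` is monogenic. -/
theorem trinomial_family_monogenic (n : ℕ) (hn : 4 ≤ n) (t : ℤ) (ht : 1 < |t|)
    (hcop : Int.gcd t ((n : ℤ) * ((n : ℤ) - 1)) = 1)
    (L : ℤ)
    (hL : L = (-1) ^ (n * (n - 1) / 2) * (n : ℤ) ^ n +
        (-1) ^ ((n - 1) * (n - 2) / 2) * ((n : ℤ) - 1) ^ (n - 1) * t)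
    (hsf : Squarefree (t * L)) :
    Irreducible ((X : ℚ[X]) ^ n + C (t : ℚ) * X + C (t : ℚ)) ∧
    ∀ (K : Type) [Field K] [NumberField K] (α : 𝓞 K),
      (α : K) ^ n + (t : K) * (α : K) + (t : K) = 0 →
      Algebra.adjoin ℚ {(α : K)} = ⊤ →
      Algebra.adjoin ℤ {α} = ⊤ :=
  trinomial_family_monogenic_general n (by omega) t ht L hL hsf
end
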